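/- arXiv:1603.02310 — 2 statements merged into one kernel-verified Lean document; each statement's English description precedes it below -/
import Mathlib

section
/- Let G be a 3-connected nonplanar graph that is {K5+, K33+, K5h, K33h}-free, and suppose the deletion of any three vertices of G leaves at most two components. Then G has an internally 4-connected nonplanar minor G' such that G is obtained from G' by 3-summing wheels onto distinct triangles of G'. -/
open SimpleGraph

/-- `H` is a minor of `G` (branch-set / model definition). -/
def IsMinor {W V : Type*} (H : SimpleGraph W) (G : SimpleGraph V) : Prop :=
  ∃ B : W → Set V,
    (∀ w, (B w).Nonempty) ∧
    (∀ w, (G.induce (B w)).Connected) ∧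
    (Pairwise fun w₁ w₂ => Disjoint (B w₁) (B w₂)) ∧
    (∀ ⦃w₁ w₂ : W⦄, H.Adj w₁ w₂ → ∃ v₁ ∈ B w₁, ∃ v₂ ∈ B w₂, G.Adj v₁ v₂)

def K5 : SimpleGraph (Fin 5) := ⊤

def K33 : SimpleGraph (Fin 3 ⊕ Fin 3) := completeBipartiteGraph (Fin 3) (Fin 3)

/-- A graph is planar iff it has neither a `K₅` nor a `K₃,₃` minor (Wagner's theorem). -/
def Planar {V : Type*} (G : SimpleGraph V) : Prop := ¬ IsMinor K5 G ∧ ¬ IsMinor K33 G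

/-- `G / uw`: contract the edge `uw`, merging `w` into `u` (the vertex `w` becomes isolated). -/
def contractEdge {V : Type*} (G : SimpleGraph V) (u w : V) : SimpleGraph V :=
  SimpleGraph.fromRel fun a b =>
    a ≠ w ∧ b ≠ w ∧ (G.Adj a b ∨ (a = u ∧ G.Adj w b) ∨ (b = u ∧ G.Adj a w))

/-- A nonplanar graph is almost-planar if for every edge, deletion or contraction is planar. -/
def AlmostPlanar {V : Type*} (G : SimpleGraph V) : Prop :=
  ¬ Planar G ∧ ∀ ⦃u v : V⦄, G.Adj u v →
    (Planar (G.deleteEdges {s(u, v)}) ∨ Planar (contractEdge G u v))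

/-- `G` is `k`-connected: more than `k` vertices and deleting fewer than `k` vertices
leaves a connected graph. -/
def KConnected {V : Type*} (G : SimpleGraph V) (k : ℕ) : Prop :=
  k < Nat.card V ∧ ∀ s : Set V, s.ncard < k → (G.induce (sᶜ)).Connected

/-- `{G[A], G[B]}` is a `k`-separation of `G`. -/
def IsSep {V : Type*} (G : SimpleGraph V) (k : ℕ) (A B : Set V) : Prop :=
  A ∪ B = Set.univ ∧ A ≠ Set.univ ∧ B ≠ Set.univ ∧ (A ∩ B).ncard = k ∧
  ∀ ⦃x y : V⦄, G.Adj x y → (x ∈ A ∧ y ∈ A) ∨ (x ∈ B ∧ y ∈ B)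

/-- The star `K_{1,3}`, with centre `0`. -/
def K13 : SimpleGraph (Fin 4) := SimpleGraph.fromRel fun a _ => a = 0

def InternallyFourConnected {V : Type*} (G : SimpleGraph V) : Prop :=
  KConnected G 3 ∧ 5 ≤ Nat.card V ∧
  ∀ A B : Set V, IsSep G 3 A B →
    Xor' (Nonempty (G.induce A ≃g K13)) (Nonempty (G.induce B ≃g K13))

/-- The wheel `W_n`: a cycle of length `n` plus a hub (`none`) joined to all of it. -/
def wheelGraph (n : ℕ) : SimpleGraph (Option (Fin n)) :=
  SimpleGraph.fromRel fun a b =>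
    match a, b with
    | some i, some j => j.val = (i.val + 1) % n
    | none, some _ => True
    | _, _ => False

def IsWheel {V : Type*} (G : SimpleGraph V) : Prop :=
  ∃ n, 3 ≤ n ∧ Nonempty (G ≃g wheelGraph n)

/-- The double wheel `DW_n`: a cycle of length `n` plus two adjacent hubs joined to all of it. -/
def doubleWheel (n : ℕ) : SimpleGraph (Fin n ⊕ Fin 2) :=
  SimpleGraph.fromRel fun a b =>
    match a, b with
    | .inl i, .inl j => j.val = (i.val + 1) % n
    | .inl _, .inr _ => True
    | .inr _, .inr _ => True
    | _, _ => False

/-- The Möbius ladder `M_n`: a cycle of length `2n` plus all "opposite" chords. -/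
def mobiusLadder (n : ℕ) : SimpleGraph (Fin (2 * n)) :=
  SimpleGraph.fromRel fun i j =>
    j.val = (i.val + 1) % (2 * n) ∨ j.val = (i.val + n) % (2 * n)

/-- `C²_m`: a cycle of length `m` plus all chords between vertices at distance two. -/
def squareCycle (m : ℕ) : SimpleGraph (Fin m) :=
  SimpleGraph.fromRel fun i j =>
    j.val = (i.val + 1) % m ∨ j.val = (i.val + 2) % m

/-- The alternating double wheel `AW_{2n}`: a cycle of length `2n` plus two adjacent hubs,
each joined to alternating cycle vertices. -/
def altDoubleWheel (n : ℕ) : SimpleGraph (Fin (2 * n) ⊕ Fin 2) :=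
  SimpleGraph.fromRel fun a b =>
    match a, b with
    | .inl i, .inl j => j.val = (i.val + 1) % (2 * n)
    | .inl i, .inr k => i.val % 2 = k.val
    | .inr _, .inr _ => True
    | _, _ => False

/-- The class `𝒲`: three wheels glued along a common triangle `V₀`, with no other edges. -/
def InClassW {V : Type*} (G : SimpleGraph V) : Prop :=
  ∃ P : V → Fin 4,
    (P ⁻¹' {0}).ncard = 3 ∧
    (∀ x y : V, P x = 0 → P y = 0 → x ≠ y → G.Adj x y) ∧
    (∀ i : Fin 4, i ≠ 0 → IsWheel (G.induce {v | P v = 0 ∨ P v = i})) ∧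
    (∀ ⦃x y : V⦄, G.Adj x y → ∃ i : Fin 4, i ≠ 0 ∧ (P x = 0 ∨ P x = i) ∧ (P y = 0 ∨ P y = i))

/-- `EX₁`: `K₃,₃` plus a vertex joined to all of one colour class. -/
def EX1 : SimpleGraph (Option (Fin 3 ⊕ Fin 3)) :=
  SimpleGraph.fromRel fun a b =>
    match a, b with
    | some (.inl _), some (.inr _) => True
    | none, some (.inl _) => True
    | _, _ => False

/-- `EX₂`: `K₅` plus a vertex joined to three of its vertices. -/
def EX2 : SimpleGraph (Option (Fin 5)) :=
  SimpleGraph.fromRel fun a b =>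
    match a, b with
    | some i, some j => i ≠ j
    | none, some j => j.val < 3
    | _, _ => False

/-- `EX₈`: `K₃,₃` plus a vertex joined to two vertices of one class and one of the other. -/
def EX8 : SimpleGraph (Option (Fin 3 ⊕ Fin 3)) :=
  SimpleGraph.fromRel fun a b =>
    match a, b with
    | some (.inl _), some (.inr _) => True
    | none, some x => x = Sum.inl 0 ∨ x = Sum.inl 1 ∨ x = Sum.inr 0
    | _, _ => False

/-- `K₅ʰ`: subdivide the edges `01` and `02` of `K₅` and join the two subdivision vertices. -/
def K5h : SimpleGraph (Fin 5 ⊕ Fin 2) :=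
  SimpleGraph.fromRel fun a b =>
    match a, b with
    | .inl i, .inl j =>
        i ≠ j ∧ ¬(i = 0 ∧ j = 1) ∧ ¬(i = 1 ∧ j = 0) ∧ ¬(i = 0 ∧ j = 2) ∧ ¬(i = 2 ∧ j = 0)
    | .inl i, .inr k => (k = 0 ∧ (i = 0 ∨ i = 1)) ∨ (k = 1 ∧ (i = 0 ∨ i = 2))
    | .inr _, .inr _ => True
    | _, _ => False

/-- `K₃,₃ʰ`: subdivide two edges of `K₃,₃` at a common endpoint and join
the two subdivision vertices. -/
def K33h : SimpleGraph ((Fin 3 ⊕ Fin 3) ⊕ Fin 2) :=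
  SimpleGraph.fromRel fun a b =>
    match a, b with
    | .inl (.inl i), .inl (.inr j) => ¬(i = 0 ∧ (j = 0 ∨ j = 1))
    | .inl (.inr j), .inl (.inl i) => ¬(i = 0 ∧ (j = 0 ∨ j = 1))
    | .inl x, .inr k =>
        (k = 0 ∧ (x = Sum.inl 0 ∨ x = Sum.inr 0)) ∨ (k = 1 ∧ (x = Sum.inl 0 ∨ x = Sum.inr 1))
    | .inr _, .inr _ => True
    | _, _ => False

/-- `K₅⁺`: `K₅` plus a pendant vertex. -/
def K5plus : SimpleGraph (Option (Fin 5)) :=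
  SimpleGraph.fromRel fun a b =>
    match a, b with
    | some i, some j => i ≠ j
    | none, some j => j = 0
    | _, _ => False

/-- `K₃,₃⁺`: `K₃,₃` plus a pendant vertex. -/
def K33plus : SimpleGraph (Option (Fin 3 ⊕ Fin 3)) :=
  SimpleGraph.fromRel fun a b =>
    match a, b with
    | some (.inl _), some (.inr _) => True
    | none, some x => x = Sum.inl 0
    | _, _ => False

/-- `K₅ ⊕ e`: disjoint union of `K₅` and one edge. -/
def K5oplus : SimpleGraph (Fin 5 ⊕ Fin 2) :=
  SimpleGraph.fromRel fun a b =>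
    match a, b with
    | .inl i, .inl j => i ≠ j
    | .inr _, .inr _ => True
    | _, _ => False

/-- `K₃,₃ ⊕ e`: disjoint union of `K₃,₃` and one edge. -/
def K33oplus : SimpleGraph ((Fin 3 ⊕ Fin 3) ⊕ Fin 2) :=
  SimpleGraph.fromRel fun a b =>
    match a, b with
    | .inl (.inl _), .inl (.inr _) => True
    | .inr _, .inr _ => True
    | _, _ => False

/-- The triad addition of `H` at `x y z`: add a new vertex joined to `x`, `y`, `z`. -/
def triadAddition {U : Type*} (H : SimpleGraph U) (x y z : U) : SimpleGraph (Option U) :=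
  SimpleGraph.fromRel fun a b =>
    match a, b with
    | some u, some v => H.Adj u v
    | none, some u => u = x ∨ u = y ∨ u = z
    | _, _ => False

def IsTriadAdditionOf {V U : Type*} (G : SimpleGraph V) (H : SimpleGraph U) : Prop :=
  ∃ x y z : U, x ≠ y ∧ y ≠ z ∧ x ≠ z ∧ Nonempty (G ≃g triadAddition H x y z)

/-- `G` is obtained from `H` by subdividing (possibly repeatedly) edges of `H`,
all of which lie in `S`. -/
def IsSubdivisionWithin {V W : Type*} (G : SimpleGraph V) (H : SimpleGraph W)
    (S : Set (Sym2 W)) : Prop :=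
  ∃ (f : W ↪ V) (p : ∀ ⦃u v : W⦄, H.Adj u v → G.Walk (f u) (f v)),
    (∀ ⦃u v : W⦄ (h : H.Adj u v), (p h).IsPath) ∧
    (∀ ⦃u v : W⦄ (h : H.Adj u v), p h.symm = (p h).reverse) ∧
    (∀ ⦃u v : W⦄ (h : H.Adj u v), s(u, v) ∉ S → (p h).length = 1) ∧
    (∀ ⦃u v : W⦄ (h : H.Adj u v) (w : W), f w ∈ (p h).support → w = u ∨ w = v) ∧
    (∀ ⦃u v u' v' : W⦄ (h : H.Adj u v) (h' : H.Adj u' v'), s(u, v) ≠ s(u', v') →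
      ∀ x : V, x ∈ (p h).support → x ∈ (p h').support → x ∈ Set.range f) ∧
    (∀ x : V, x ∈ Set.range f ∨ ∃ (u v : W) (h : H.Adj u v), x ∈ (p h).support) ∧
    (∀ e ∈ G.edgeSet, ∃ (u v : W) (h : H.Adj u v), e ∈ (p h).edges)

/-- `G` is a subdivision of `H`. -/
def IsSubdivision {V W : Type*} (G : SimpleGraph V) (H : SimpleGraph W) : Prop :=
  IsSubdivisionWithin G H Set.univ

/-- `D(H)`: the set of edges of `H` whose deletion leaves a planar graph. -/
def Dset {U : Type*} (H : SimpleGraph U) : Set (Sym2 U) :=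
  {e | e ∈ H.edgeSet ∧ Planar (H.deleteEdges {e})}

/-- `G[A]` together with all edges between vertices of `T` (`T ⊆ A` intended). -/
def deltaGraph {V : Type*} (G : SimpleGraph V) (A T : Set V) : SimpleGraph A :=
  SimpleGraph.fromRel fun a b => G.Adj a.1 b.1 ∨ (a.1 ∈ T ∧ b.1 ∈ T)

/-- `G[A]^Y` for the separation `{G[A], G[B]}`: add a new vertex joined to `A ∩ B`. -/
def sepY {V : Type*} (G : SimpleGraph V) (A B : Set V) : SimpleGraph (Option A) :=
  SimpleGraph.fromRel fun x y =>
    match x, y with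
    | some a, some b => G.Adj a.1 b.1
    | none, some a => a.1 ∈ A ∩ B
    | _, _ => False

/-- `G₂` is obtained from `G` by adding isolated vertices. -/
def AddIsolated {V₂ V : Type*} (G₂ : SimpleGraph V₂) (G : SimpleGraph V) : Prop :=
  ∃ f : V ↪ V₂, (∀ a b : V, G₂.Adj (f a) (f b) ↔ G.Adj a b) ∧
    ∀ x : V₂, x ∉ Set.range f → ∀ y : V₂, ¬ G₂.Adj x y

/-- The set of non-isolated vertices of `G` (so `G* = G.induce (core G)`). -/
def core {V : Type*} (G : SimpleGraph V) : Set V := {v | ∃ w, G.Adj v w}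

/-- `G` is obtained from `G'` by 3-summing wheels onto distinct triangles of `G'`. -/
def SumWheelsOnto {V U : Type*} (G : SimpleGraph V) (G' : SimpleGraph U) : Prop :=
  ∃ (g : U ↪ V) (k : ℕ) (Wp : Fin k → Set V) (T : Fin k → Set U),
    (∀ i, (T i).ncard = 3) ∧
    (∀ i, ∀ x ∈ T i, ∀ y ∈ T i, x ≠ y → G'.Adj x y) ∧
    Function.Injective T ∧
    (∀ i, Disjoint (Wp i) (Set.range ⇑g)) ∧
    (Pairwise fun i j => Disjoint (Wp i) (Wp j)) ∧
    (Set.range ⇑g ∪ ⋃ i, Wp i) = Set.univ ∧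
    (∀ i, IsWheel (deltaGraph G (Wp i ∪ ⇑g '' T i) (⇑g '' T i))) ∧
    (∀ a b : U, G.Adj (g a) (g b) → G'.Adj a b) ∧
    (∀ a b : U, G'.Adj a b → (G.Adj (g a) (g b) ∨ ∃ i, a ∈ T i ∧ b ∈ T i)) ∧
    (∀ ⦃x y : V⦄, G.Adj x y → (x ∈ Set.range ⇑g ∧ y ∈ Set.range ⇑g) ∨
      ∃ i, x ∈ Wp i ∪ ⇑g '' T i ∧ y ∈ Wp i ∪ ⇑g '' T i) ∧
    (∀ i, ∀ x ∈ Wp i, ∀ ⦃y : V⦄, G.Adj x y → y ∈ Wp i ∪ ⇑g '' T i)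

/-- `H` has an edge whose deletion and contraction are both nonplanar. -/
def HasBadEdge {V : Type*} (H : SimpleGraph V) : Prop :=
  ∃ u v : V, H.Adj u v ∧ ¬ Planar (H.deleteEdges {s(u, v)}) ∧ ¬ Planar (contractEdge H u v)

/-! The proof is an induction on the number of vertices. Among the 3-separations `(A, B)` of `G`
for which `G[A]` is not `K13` and `G[B]` is nonplanar once the cut `A ∩ B` is completed to a
triangle, take one with `A` as large as possible. If there is none, then `G` is internally
4-connected, because for every 3-separation of `G` one of the two completed sides is nonplanar.

Since `G` is {K5+, K33+}-free, no connected proper subset of `A \ B` has neighbours at all three cut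
vertices. Hence each vertex that can be deleted from `A \ B` without disconnecting it is the only
neighbour of some cut vertex. If there are three such vertices, they form a triangle attached to the
cut by a matching, and `G` has a K5h or K33h minor. Otherwise `A \ B` is a path and forms a fan with
the cut. A fan becomes a wheel when the cut is completed, and it contracts onto a triangle on the
cut, so the completed `G[B]` is a minor of `G` to which the induction hypothesis applies. By
maximality of `A`, no cut vertex lies inside a wheel of its decomposition, so the new wheel can be
added; its triangle is a new one, as otherwise the cut would leave three components. -/

/-! ### Connected vertex sets -/

/-- The vertex set `S` induces a connected subgraph of `G`. -/
def ConnectedOn {V : Type*} (G : SimpleGraph V) (S : Set V) : Prop :=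
  (G.induce S).Connected

/-- Some vertex of `S` is adjacent to some vertex of `T`. -/
def Linked {V : Type*} (G : SimpleGraph V) (S T : Set V) : Prop :=
  ∃ a ∈ S, ∃ b ∈ T, G.Adj a b

section Connected

variable {V V' : Type*} {G F : SimpleGraph V} {S T : Set V} {a b : V}

theorem Linked.symm (h : Linked G S T) : Linked G T S := by
  obtain ⟨a, ha, b, hb, hab⟩ := h
  exact ⟨b, hb, a, ha, hab.symm⟩

theorem Linked.mono {S' T' : Set V} (h : Linked G S T) (hS : S ⊆ S') (hT : T ⊆ T') :
    Linked G S' T' := by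
  obtain ⟨a, ha, b, hb, hab⟩ := h
  exact ⟨a, hS ha, b, hT hb, hab⟩

theorem connectedOn_iff (ha : a ∈ S) :
    ConnectedOn G S ↔
      ∀ P : Set V, (∀ c ∈ S, ∀ d ∈ S, G.Adj c d → c ∈ P → d ∈ P) → a ∈ P → S ⊆ P := by
  constructor
  · intro h P hP haP b hb
    have hr := (reachable_iff_reflTransGen _ _).1 (h.preconnected ⟨a, ha⟩ ⟨b, hb⟩)
    suffices ∀ c : S, Relation.ReflTransGen (G.induce S).Adj ⟨a, ha⟩ c → c.1 ∈ P from this _ hr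
    intro c hc
    induction hc with
    | refl => exact haP
    | tail _ hcd ih => exact hP _ (Subtype.prop _) _ (Subtype.prop _) hcd ih
  · intro h
    refine (connected_iff_exists_forall_reachable _).2 ⟨⟨a, ha⟩, ?_⟩
    rintro ⟨b, hb⟩
    refine (h {c | ∃ hc : c ∈ S, (G.induce S).Reachable ⟨a, ha⟩ ⟨c, hc⟩} ?_ ⟨ha, .rfl⟩ hb).2
    rintro c - d hd hcd ⟨_, hr⟩
    exact ⟨hd, hr.trans (Adj.reachable (G := G.induce S) hcd)⟩

theorem connectedOn_univ : ConnectedOn G Set.univ ↔ G.Connected :=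
  (induceUnivIso G).connected_iff

namespace ConnectedOn

theorem nonempty (h : ConnectedOn G S) : S.Nonempty :=
  Set.nonempty_coe_sort.1 (Connected.nonempty h)

theorem subset_of_closed (h : ConnectedOn G S) {P : Set V} (ha : a ∈ S)
    (hP : ∀ c ∈ S, ∀ d ∈ S, G.Adj c d → c ∈ P → d ∈ P) (haP : a ∈ P) : S ⊆ P :=
  (connectedOn_iff ha).1 h P hP haP

theorem exists_adj (h : ConnectedOn G S) {P : Set V} (ha : a ∈ S) (hb : b ∈ S) (haP : a ∈ P)
    (hbP : b ∉ P) : ∃ c ∈ S, ∃ d ∈ S, c ∈ P ∧ d ∉ P ∧ G.Adj c d := by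
  by_contra! hc
  exact hbP (h.subset_of_closed ha
    (fun c hcS d hdS hcd hcP => by_contra fun hd => hc c hcS d hdS hcP hd hcd) haP hb)

theorem singleton (a : V) : ConnectedOn G {a} :=
  (connectedOn_iff (Set.mem_singleton a)).2 fun _ _ haP => Set.singleton_subset_iff.2 haP

theorem union (hS : ConnectedOn G S) (hT : ConnectedOn G T) (hST : Linked G S T) :
    ConnectedOn G (S ∪ T) := by
  obtain ⟨a, ha, b, hb, hab⟩ := hST
  refine (connectedOn_iff (Set.mem_union_left T ha)).2 fun P hP haP => Set.union_subset ?_ ?_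
  · exact hS.subset_of_closed ha (fun c hc d hd => hP c (.inl hc) d (.inl hd)) haP
  · exact hT.subset_of_closed hb (fun c hc d hd => hP c (.inr hc) d (.inr hd))
      (hP a (.inl ha) b (.inr hb) hab haP)

theorem insert (hS : ConnectedOn G S) (hb : b ∈ S) (hab : G.Adj a b) :
    ConnectedOn G (insert a S) :=
  (singleton a).union hS ⟨a, rfl, b, hb, hab⟩

theorem mono (hS : ConnectedOn G S) (h : ∀ a ∈ S, ∀ b ∈ S, G.Adj a b → F.Adj a b) :
    ConnectedOn F S := by
  obtain ⟨a, ha⟩ := hS.nonempty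
  exact (connectedOn_iff ha).2 fun P hP =>
    hS.subset_of_closed ha fun c hc d hd hcd => hP c hc d hd (h c hc d hd hcd)

theorem image {G' : SimpleGraph V'} (h : ConnectedOn G S) (f : G →g G') :
    ConnectedOn G' (f '' S) := by
  obtain ⟨a, ha⟩ := h.nonempty
  refine (connectedOn_iff (Set.mem_image_of_mem f ha)).2 fun P hP haP => Set.image_subset_iff.2 ?_
  exact h.subset_of_closed ha (fun c hc d hd hcd =>
    hP _ (Set.mem_image_of_mem f hc) _ (Set.mem_image_of_mem f hd) (f.map_adj hcd)) haP

theorem of_image {G' : SimpleGraph V'} {f : G ↪g G'} (h : ConnectedOn G' (f '' S)) :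
    ConnectedOn G S := by
  obtain ⟨_, a, ha, rfl⟩ := h.nonempty
  refine (connectedOn_iff ha).2 fun P hP haP => (Set.image_subset_image_iff f.injective).1 ?_
  refine h.subset_of_closed (Set.mem_image_of_mem f ha) ?_ (Set.mem_image_of_mem f haP)
  rintro _ ⟨c, hc, rfl⟩ _ ⟨d, hd, rfl⟩ hcd hcP
  exact Set.mem_image_of_mem f (hP c hc d hd (f.map_adj_iff.1 hcd)
    (f.injective.mem_set_image.1 hcP))

theorem range {G' : SimpleGraph V'} (h : G.Connected) (f : G →g G') :
    ConnectedOn G' (Set.range f) :=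
  Set.image_univ (f := f) ▸ (connectedOn_univ.2 h).image f

theorem biUnion {ι : Type*} {H : SimpleGraph ι} {I : Set ι} {C : ι → Set V} (hI : ConnectedOn H I)
    (hC : ∀ i ∈ I, ConnectedOn G (C i))
    (hlink : ∀ i ∈ I, ∀ j ∈ I, H.Adj i j → Linked G (C i) (C j)) :
    ConnectedOn G (⋃ i ∈ I, C i) := by
  obtain ⟨i, hi⟩ := hI.nonempty
  obtain ⟨a, ha⟩ := (hC i hi).nonempty
  have hsub : ∀ j ∈ I, C j ⊆ ⋃ i ∈ I, C i := fun j hj => Set.subset_biUnion_of_mem hj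
  refine (connectedOn_iff (hsub i hi ha)).2 fun P hP haP => Set.iUnion₂_subset fun j hj => ?_
  have hspread : ∀ j ∈ I, ∀ c ∈ C j, c ∈ P → C j ⊆ P := fun j hj c hc hcP =>
    (hC j hj).subset_of_closed hc
      (fun c hc d hd => hP c (hsub j hj hc) d (hsub j hj hd)) hcP
  refine hI.subset_of_closed (P := {j | C j ⊆ P}) hi ?_ (hspread i hi a ha haP) hj
  intro j hj k hk hjk hjP
  obtain ⟨c, hc, d, hd, hcd⟩ := hlink j hj k hk hjk
  exact hspread k hk d hd (hP c (hsub j hj hc) d (hsub k hk hd) hcd (hjP hc))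

theorem sdiff_singleton_of_forall_adj {x : V} (hT : ConnectedOn G T) (hx : x ∈ T) (hxa : x ≠ a)
    (h : ∀ b ∈ T, G.Adj a b → b = x) : ConnectedOn G (T \ {a}) := by
  refine (connectedOn_iff (Set.mem_sdiff_singleton.2 ⟨hx, hxa⟩)).2 fun P hP hxP b hb => ?_
  refine (hT.subset_of_closed (P := {c | c = a ∨ c ∈ P}) hx ?_ (.inr hxP) hb.1).resolve_left hb.2
  rintro c hc d hd hcd hcP
  by_cases hda : d = a
  · exact Or.inl hda
  rcases eq_or_ne c a with rfl | hca
  · exact Or.inr (h d hd hcd ▸ hxP)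
  · exact Or.inr (hP c ⟨hc, hca⟩ d ⟨hd, hda⟩ hcd (hcP.resolve_left hca))

theorem top (hS : S.Nonempty) : ConnectedOn (⊤ : SimpleGraph V) S := by
  obtain ⟨a, ha⟩ := hS
  refine (connectedOn_iff ha).2 fun P hP haP b hb => ?_
  rcases eq_or_ne a b with rfl | hab
  · exact haP
  · exact hP a ha b hb hab haP

theorem exists_sdiff_singleton [Finite V] (hT : ConnectedOn G T) (hS : ConnectedOn G S)
    (hST : S ⊂ T) : ∃ w ∈ T, w ∉ S ∧ ConnectedOn G (T \ {w}) := by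
  have hfin : {R : Set V | ConnectedOn G R ∧ S ⊆ R ∧ R ⊂ T}.Finite := Set.toFinite _
  obtain ⟨R, ⟨hR, hSR, hRT⟩, hmax⟩ := hfin.exists_maximal ⟨S, hS, subset_rfl, hST⟩
  obtain ⟨a, ha⟩ := hR.nonempty
  obtain ⟨b, hb, hbR⟩ := Set.exists_of_ssubset hRT
  obtain ⟨c, -, d, hd, hcR, hdR, hcd⟩ := hT.exists_adj (hRT.1 ha) hb ha hbR
  have hT_eq : Insert.insert d R = T := by
    by_contra hne
    exact hdR (hmax ⟨hR.insert hcR hcd.symm, hSR.trans (Set.subset_insert _ _),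
      (Set.insert_subset hd hRT.1).ssubset_of_ne hne⟩ (Set.subset_insert _ _)
      (Set.mem_insert _ _))
  refine ⟨d, hd, fun h => hdR (hSR h), ?_⟩
  rwa [← hT_eq, Set.insert_sdiff_self_of_notMem hdR]

end ConnectedOn

/-- The vertex set of the component of `G[S]` that contains `a ∈ S`. -/
def component (G : SimpleGraph V) (S : Set V) (a : V) : Set V :=
  {b | Relation.ReflTransGen (fun u v => G.Adj u v ∧ v ∈ S) a b}

theorem mem_component_self (a : V) : a ∈ component G S a := .refl

theorem component_subset (ha : a ∈ S) : component G S a ⊆ S := by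
  intro b hb
  induction hb with
  | refl => exact ha
  | tail _ h _ => exact h.2

theorem mem_component_of_adj {c : V} (hb : b ∈ component G S a) (hbc : G.Adj b c) (hc : c ∈ S) :
    c ∈ component G S a :=
  hb.tail ⟨hbc, hc⟩

theorem connectedOn_component (a : V) : ConnectedOn G (component G S a) := by
  refine (connectedOn_iff (mem_component_self a)).2 fun P hP haP b hb => ?_
  induction hb with
  | refl => exact haP
  | tail h hbc ih => exact hP _ h _ (h.tail hbc) hbc.1 ih

theorem ConnectedOn.subset_component (hT : ConnectedOn G T) (hTS : T ⊆ S) (hbT : b ∈ T)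
    (hb : b ∈ component G S a) : T ⊆ component G S a :=
  hT.subset_of_closed hbT (fun _ _ _ hd hcd hc => mem_component_of_adj hc hcd (hTS hd)) hb

end Connected

/-! ### Models of minors -/

/-- The sets `B w` are the branch sets of a model of `K` in `G`. -/
structure IsModel {W V : Type*} (K : SimpleGraph W) (G : SimpleGraph V) (B : W → Set V) :
    Prop where
  connected : ∀ w, ConnectedOn G (B w)
  eq_of_mem : ∀ {w₁ w₂ v}, v ∈ B w₁ → v ∈ B w₂ → w₁ = w₂
  linked : ∀ {w₁ w₂}, K.Adj w₁ w₂ → Linked G (B w₁) (B w₂)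

section Model

variable {W W' V U : Type*} {K : SimpleGraph W} {K' : SimpleGraph W'} {G F : SimpleGraph V}
  {H : SimpleGraph U} {B : W → Set V} {S T : Set V}

theorem isMinor_iff_exists_isModel : IsMinor K G ↔ ∃ B, IsModel K G B := by
  constructor
  · rintro ⟨B, -, hconn, hdisj, hadj⟩
    refine ⟨B, hconn, fun {w₁ w₂ v} h₁ h₂ => ?_, fun h => hadj h⟩
    by_contra hne
    exact Set.disjoint_left.1 (hdisj hne) h₁ h₂
  · rintro ⟨B, hB⟩
    exact ⟨B, fun w => (hB.connected w).nonempty, hB.connected,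
      fun w₁ w₂ hne => Set.disjoint_left.2 fun v h₁ h₂ => hne (hB.eq_of_mem h₁ h₂),
      fun w₁ w₂ h => hB.linked h⟩

namespace IsModel

theorem notMem (hB : IsModel K G B) {w₁ w₂ : W} {v : V} (hv : v ∈ B w₁) (hne : w₁ ≠ w₂) :
    v ∉ B w₂ :=
  fun hv' => hne (hB.eq_of_mem hv hv')

theorem comap (hB : IsModel K G B) {f : W' → W} (hf : Function.Injective f)
    (hadj : ∀ ⦃a b⦄, K'.Adj a b → K.Adj (f a) (f b)) : IsModel K' G (B ∘ f) where
  connected w := hB.connected (f w)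
  eq_of_mem h₁ h₂ := hf (hB.eq_of_mem h₁ h₂)
  linked h := hB.linked (hadj h)

theorem image (hB : IsModel K G B) {f : G →g H} (hf : Function.Injective f) :
    IsModel K H (fun w => f '' B w) where
  connected w := (hB.connected w).image f
  eq_of_mem := by
    rintro w₁ w₂ _ ⟨a, ha, rfl⟩ ⟨b, hb, hab⟩
    exact hB.eq_of_mem ha (hf hab ▸ hb)
  linked h := by
    obtain ⟨a, ha, b, hb, hab⟩ := hB.linked h
    exact ⟨f a, Set.mem_image_of_mem f ha, f b, Set.mem_image_of_mem f hb, f.map_adj hab⟩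

theorem of_image {f : G ↪g H} (hB : IsModel K H (fun w => f '' B w)) : IsModel K G B where
  connected w := .of_image (hB.connected w)
  eq_of_mem h₁ h₂ := hB.eq_of_mem (Set.mem_image_of_mem f h₁) (Set.mem_image_of_mem f h₂)
  linked h := by
    obtain ⟨_, ⟨a, ha, rfl⟩, _, ⟨b, hb, rfl⟩, hab⟩ := hB.linked h
    exact ⟨a, ha, b, hb, f.map_adj_iff.1 hab⟩

theorem singleton {f : W → V} (hf : Function.Injective f)
    (hadj : ∀ ⦃a b⦄, K.Adj a b → G.Adj (f a) (f b)) : IsModel K G (fun w => {f w}) where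
  connected w := .singleton (f w)
  eq_of_mem h₁ h₂ := hf (h₁.symm.trans h₂)
  linked h := ⟨_, rfl, _, rfl, hadj h⟩

theorem update [DecidableEq W] (hB : IsModel K G B) {w₀ : W} {S : Set V} (hS : ConnectedOn G S)
    (hdisj : ∀ w ≠ w₀, ∀ v ∈ S, v ∉ B w) (hlink : ∀ w, K.Adj w₀ w → Linked G S (B w)) :
    IsModel K G (Function.update B w₀ S) where
  connected w := by
    rcases eq_or_ne w w₀ with rfl | hw
    · rwa [Function.update_self]
    · rw [Function.update_of_ne hw]
      exact hB.connected w
  eq_of_mem {w₁ w₂ v} h₁ h₂ := by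
    rcases eq_or_ne w₁ w₀ with rfl | hw₁ <;> rcases eq_or_ne w₂ w₁ with rfl | hw₂
    · rfl
    · rw [Function.update_self] at h₁
      rw [Function.update_of_ne hw₂] at h₂
      exact absurd h₂ (hdisj _ hw₂ v h₁)
    · rfl
    · rw [Function.update_of_ne hw₁] at h₁
      rcases eq_or_ne w₂ w₀ with rfl | hw₀
      · rw [Function.update_self] at h₂
        exact absurd h₁ (hdisj _ hw₁ v h₂)
      · rw [Function.update_of_ne hw₀] at h₂
        exact hB.eq_of_mem h₁ h₂
  linked {w₁ w₂} h := by
    rcases eq_or_ne w₁ w₀ with rfl | hw₁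
    · rw [Function.update_self, Function.update_of_ne h.ne']
      exact hlink _ h
    · rw [Function.update_of_ne hw₁]
      rcases eq_or_ne w₂ w₀ with rfl | hw₂
      · rw [Function.update_self]
        exact (hlink _ h.symm).symm
      · rw [Function.update_of_ne hw₂]
        exact hB.linked h

theorem option {K' : SimpleGraph (Option W)} (hB : IsModel K G B) {S : Set V}
    (hS : ConnectedOn G S) (hdisj : ∀ w, ∀ v ∈ S, v ∉ B w)
    (hsome : ∀ a b, K'.Adj (some a) (some b) → K.Adj a b)
    (hnone : ∀ a, K'.Adj none (some a) → Linked G S (B a)) :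
    IsModel K' G (fun o => o.elim S B) where
  connected := Option.rec hS hB.connected
  eq_of_mem {o₁ o₂ v} h₁ h₂ := by
    cases o₁ <;> cases o₂
    · rfl
    · exact absurd h₂ (hdisj _ v h₁)
    · exact absurd h₁ (hdisj _ v h₂)
    · exact congrArg some (hB.eq_of_mem h₁ h₂)
  linked {o₁ o₂} h := by
    cases o₁ <;> cases o₂
    · exact (h.ne rfl).elim
    · exact hnone _ h
    · exact (hnone _ h.symm).symm
    · exact hB.linked (hsome _ _ h)

theorem sumElim {ι κ : Type*} {L : ι → Set V} {R : κ → Set V} (hL : ∀ i, ConnectedOn G (L i))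
    (hR : ∀ j, ConnectedOn G (R j)) (hLL : ∀ {i i' v}, v ∈ L i → v ∈ L i' → i = i')
    (hRR : ∀ {j j' v}, v ∈ R j → v ∈ R j' → j = j') (hLR : ∀ i j, ∀ v ∈ L i, v ∉ R j)
    (hlink : ∀ i j, Linked G (L i) (R j)) :
    IsModel (completeBipartiteGraph ι κ) G (Sum.elim L R) where
  connected := Sum.rec hL hR
  eq_of_mem {w₁ w₂ v} h₁ h₂ := by
    rcases w₁ with i | j <;> rcases w₂ with i' | j'
    · exact congrArg Sum.inl (hLL h₁ h₂)
    · exact absurd h₂ (hLR i j' v h₁)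
    · exact absurd h₁ (hLR i' j v h₂)
    · exact congrArg Sum.inr (hRR h₁ h₂)
  linked {w₁ w₂} h := by
    rcases w₁ with i | j <;> rcases w₂ with i' | j'
    · simp at h
    · exact hlink i j'
    · exact (hlink i' j).symm
    · simp at h

theorem trans {C : U → Set V} {B : W → Set U} (hB : IsModel K H B) (hC : IsModel H G C) :
    IsModel K G (fun w => ⋃ u ∈ B w, C u) where
  connected w := (hB.connected w).biUnion (fun u _ => hC.connected u) fun _ _ _ _ h => hC.linked h
  eq_of_mem h₁ h₂ := by
    obtain ⟨u₁, hu₁, hv₁⟩ := Set.mem_iUnion₂.1 h₁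
    obtain ⟨u₂, hu₂, hv₂⟩ := Set.mem_iUnion₂.1 h₂
    exact hB.eq_of_mem hu₁ (hC.eq_of_mem hv₁ hv₂ ▸ hu₂)
  linked h := by
    obtain ⟨u₁, hu₁, u₂, hu₂, hu⟩ := hB.linked h
    exact (hC.linked hu).mono (Set.subset_biUnion_of_mem hu₁) (Set.subset_biUnion_of_mem hu₂)

end IsModel

theorem isMinor_induce_iff :
    IsMinor K (G.induce S) ↔ ∃ B, IsModel K G B ∧ ∀ w, B w ⊆ S := by
  rw [isMinor_iff_exists_isModel]
  constructor
  · rintro ⟨B, hB⟩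
    refine ⟨_, hB.image (f := (Embedding.induce S).toHom) Subtype.val_injective, fun w => ?_⟩
    rintro _ ⟨a, -, rfl⟩
    exact a.2
  · rintro ⟨B, hB, hBS⟩
    refine ⟨fun w => Subtype.val ⁻¹' B w, .of_image (f := Embedding.induce S) ?_⟩
    have himage : ∀ w, Subtype.val '' (Subtype.val ⁻¹' B w : Set S) = B w := fun w => by
      rw [Subtype.image_preimage_coe, Set.inter_eq_right.2 (hBS w)]
    convert hB using 2 with w
    exact himage w

theorem isMinor_of_injective (f : G →g H) (hf : Function.Injective f) : IsMinor G H :=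
  isMinor_iff_exists_isModel.2 ⟨_, .singleton hf fun _ _ h => f.map_adj h⟩

theorem IsMinor.refl (G : SimpleGraph V) : IsMinor G G :=
  isMinor_of_injective .id Function.injective_id

theorem IsMinor.trans (hKH : IsMinor K H) (hHG : IsMinor H G) : IsMinor K G := by
  rw [isMinor_iff_exists_isModel] at *
  obtain ⟨B, hB⟩ := hKH
  obtain ⟨C, hC⟩ := hHG
  exact ⟨_, hB.trans hC⟩

theorem isMinor_induce (G : SimpleGraph V) (S : Set V) : IsMinor (G.induce S) G :=
  isMinor_of_injective (Embedding.induce S).toHom Subtype.val_injective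

theorem isMinor_induce_mono (hST : S ⊆ T) (h : ∀ a ∈ S, ∀ b ∈ S, G.Adj a b → F.Adj a b) :
    IsMinor (G.induce S) (F.induce T) :=
  isMinor_of_injective ⟨Set.inclusion hST, fun {a b} hab => h a a.2 b b.2 hab⟩
    (Set.inclusion_injective hST)

theorem Planar.of_isMinor (hG : Planar G) (hHG : IsMinor H G) : Planar H :=
  ⟨fun h => hG.1 (h.trans hHG), fun h => hG.2 (h.trans hHG)⟩

theorem not_planar_iff : ¬ Planar G ↔ IsMinor K5 G ∨ IsMinor K33 G := by
  rw [Planar, not_and_or, not_not, not_not]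

theorem exists_iso_K5 (w : Fin 5) : ∃ f : K5 ≃g K5, f 0 = w :=
  ⟨⟨Equiv.swap 0 w, by simp [K5]⟩, Equiv.swap_apply_left 0 w⟩

theorem exists_iso_K33 (w : Fin 3 ⊕ Fin 3) : ∃ f : K33 ≃g K33, f (Sum.inl 0) = w := by
  have hperm (σ : Equiv.Perm (Fin 3)) {a b : Fin 3 ⊕ Fin 3} :
      K33.Adj (σ.sumCongr σ a) (σ.sumCongr σ b) ↔ K33.Adj a b := by
    cases a <;> cases b <;> simp [K33]
  have hcomm {a b : Fin 3 ⊕ Fin 3} : K33.Adj a.swap b.swap ↔ K33.Adj a b := by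
    cases a <;> cases b <;> simp [K33]
  let f (i : Fin 3) : K33 ≃g K33 := ⟨(Equiv.swap 0 i).sumCongr (Equiv.swap 0 i), hperm _⟩
  let g : K33 ≃g K33 := ⟨Equiv.sumComm _ _, hcomm⟩
  rcases w with i | i
  · exact ⟨f i, congrArg Sum.inl (Equiv.swap_apply_left 0 i)⟩
  · exact ⟨(f i).trans g, congrArg Sum.inr (Equiv.swap_apply_left 0 i)⟩

theorem isMinor_option_of_notMem {K' : SimpleGraph (Option W)} {w₀ : W} {v : V}
    (hsome : ∀ a b, K'.Adj (some a) (some b) → K.Adj a b)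
    (hnone : ∀ a, K'.Adj none (some a) → a = w₀) (htrans : ∀ w, ∃ f : K ≃g K, f w₀ = w)
    (hG : G.Connected) (hK : IsMinor K (G.induce S)) (hv : v ∉ S) : IsMinor K' G := by
  obtain ⟨B, hB, hBS⟩ := isMinor_induce_iff.1 hK
  obtain ⟨a, ha⟩ := (hB.connected w₀).nonempty
  obtain ⟨c, -, d, -, hc, hd, hcd⟩ := (connectedOn_univ.2 hG).exists_adj (P := ⋃ w, B w)
    (Set.mem_univ a) (Set.mem_univ v) (Set.mem_iUnion_of_mem _ ha)
    (fun hvB => hv (Set.iUnion_subset hBS hvB))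
  obtain ⟨w, hcw⟩ := Set.mem_iUnion.1 hc
  obtain ⟨f, rfl⟩ := htrans w
  have hdB : ∀ w, d ∉ B w := fun w hdw => hd (Set.mem_iUnion_of_mem w hdw)
  have hBf := hB.comap (K' := K) f.injective fun a b h => f.map_adj_iff.2 h
  refine isMinor_iff_exists_isModel.2 ⟨_, hBf.option (.singleton d) ?_ hsome fun a ha => ?_⟩
  · rintro w _ rfl
    exact hdB (f w)
  · obtain rfl := hnone a ha
    exact ⟨d, rfl, c, hcw, hcd.symm⟩

theorem eq_univ_of_not_planar_induce (hG : G.Connected) (h5 : ¬ IsMinor K5plus G)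
    (h33 : ¬ IsMinor K33plus G) (hS : ¬ Planar (G.induce S)) : S = Set.univ := by
  refine Set.eq_univ_of_forall fun v => by_contra fun hv => ?_
  rcases not_planar_iff.1 hS with hK | hK
  · refine h5 (isMinor_option_of_notMem (w₀ := 0) ?_ ?_ exists_iso_K5 hG hK hv)
    · simp +contextual [K5plus, K5]
    · simp [K5plus]
  · refine h33 (isMinor_option_of_notMem (w₀ := Sum.inl 0) ?_ ?_ exists_iso_K33 hG hK hv)
    · simp [K33plus, K33]
    · simp [K33plus]

end Model

/-! ### Completing a set of vertices to a clique -/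

/-- `G` together with all edges between vertices of `X`. -/
def addClique {V : Type*} (G : SimpleGraph V) (X : Set V) : SimpleGraph V :=
  SimpleGraph.fromRel fun a b => G.Adj a b ∨ (a ∈ X ∧ b ∈ X)

/-- `G` has a `K`-model inside `B ∪ Y` in which one branch set contains `Y`. -/
def HasModelThrough {W V : Type*} (K : SimpleGraph W) (G : SimpleGraph V) (B Y : Set V) : Prop :=
  ∃ M : W → Set V, IsModel K G M ∧ (∀ w, M w ⊆ B ∪ Y) ∧ ∃ w, Y ⊆ M w

section AddClique

variable {W V : Type*} {K : SimpleGraph W} {G F : SimpleGraph V} {M : W → Set V}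
  {B S T X Y : Set V} {a b : V}

theorem addClique_adj : (addClique G X).Adj a b ↔ G.Adj a b ∨ a ≠ b ∧ a ∈ X ∧ b ∈ X := by
  rw [addClique, fromRel_adj, G.adj_comm b a]
  have := G.ne_of_adj (a := a) (b := b)
  tauto

theorem le_addClique : G ≤ addClique G X := fun _ _ h => addClique_adj.2 (Or.inl h)

theorem deltaGraph_eq (G : SimpleGraph V) (A T : Set V) :
    deltaGraph G A T = (addClique G T).induce A := by
  ext a b
  simp [deltaGraph, addClique, Subtype.ext_iff]

theorem ConnectedOn.union_of_addClique (hS : ConnectedOn (addClique G X) S)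
    (hY : ConnectedOn G Y) (hXY : ∀ a ∈ X, ∃ v ∈ Y, G.Adj a v) (hXS : (X ∩ S).Nonempty) :
    ConnectedOn G (S ∪ Y) := by
  obtain ⟨a, haX, haS⟩ := hXS
  refine (connectedOn_iff (Set.mem_union_left Y haS)).2 fun P hP haP => ?_
  have hYP : Y ⊆ P := by
    obtain ⟨v, hv, hav⟩ := hXY a haX
    exact hY.subset_of_closed hv (fun c hc d hd => hP c (.inr hc) d (.inr hd))
      (hP a (.inl haS) v (.inr hv) hav haP)
  refine Set.union_subset (hS.subset_of_closed haS (fun c hc d hd hcd hcP => ?_) haP) hYP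
  rcases addClique_adj.1 hcd with hcd | ⟨-, -, hdX⟩
  · exact hP c (.inl hc) d (.inl hd) hcd hcP
  · obtain ⟨v, hv, hdv⟩ := hXY d hdX
    exact hP v (.inr hv) d (.inl hd) hdv.symm (hYP hv)

open Classical in
theorem IsModel.hasModelThrough (hM : IsModel K (addClique G X) M) (hMB : ∀ w, M w ⊆ B)
    (hY : ConnectedOn G Y) (hYB : ∀ v ∈ Y, v ∉ B) (hXY : ∀ a ∈ X, ∃ v ∈ Y, G.Adj a v) {w₀ : W}
    (hw₀ : (X ∩ M w₀).Nonempty)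
    (h : ∀ w₁ w₂, w₁ ≠ w₀ → w₂ ≠ w₀ → w₁ = w₂ ∨ K.Adj w₁ w₂ →
      ∀ a ∈ X ∩ M w₁, ∀ b ∈ X ∩ M w₂, a = b) : HasModelThrough K G B Y := by
  have hconn := (hM.connected w₀).union_of_addClique hY hXY hw₀
  have hM' := hM.update (w₀ := w₀) (S := M w₀ ∪ Y) (hconn.mono fun _ _ _ _ h => le_addClique h)
    (fun w hw v hv hvw => hv.elim (fun hv => hw (hM.eq_of_mem hvw hv)) (hYB v · (hMB w hvw)))
    fun w hw => (hM.linked hw).mono Set.subset_union_left subset_rfl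
  set M' := Function.update M w₀ (M w₀ ∪ Y) with hM'_def
  have hself : M' w₀ = M w₀ ∪ Y := Function.update_self ..
  have hof_ne : ∀ w ≠ w₀, M' w = M w := fun w hw => Function.update_of_ne hw ..
  have hsub : ∀ w, M w ⊆ M' w := fun w => by
    rcases eq_or_ne w w₀ with rfl | hw
    exacts [hself ▸ Set.subset_union_left, (hof_ne w hw).superset]
  refine ⟨M', ⟨fun w => ?_, hM'.eq_of_mem, fun {w₁ w₂} hw => ?_⟩, fun w => ?_, w₀,
    hself ▸ Set.subset_union_right⟩
  · rcases eq_or_ne w w₀ with rfl | hw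
    · rwa [hself]
    · rw [hof_ne w hw]
      refine (hM.connected w).mono fun a ha b hb hab => ?_
      refine (addClique_adj.1 hab).resolve_right fun ⟨hne, haX, hbX⟩ => hne ?_
      exact h w w hw hw (.inl rfl) a ⟨haX, ha⟩ b ⟨hbX, hb⟩
  · obtain ⟨a, ha, b, hb, hab⟩ := hM.linked hw
    rcases addClique_adj.1 hab with hab | ⟨hne, haX, hbX⟩
    · exact ⟨a, hsub _ ha, b, hsub _ hb, hab⟩
    · rcases eq_or_ne w₁ w₀ with rfl | hw₁
      · obtain ⟨v, hv, hbv⟩ := hXY b hbX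
        exact ⟨v, hself ▸ .inr hv, b, hsub _ hb, hbv.symm⟩
      rcases eq_or_ne w₂ w₀ with rfl | hw₂
      · obtain ⟨v, hv, hav⟩ := hXY a haX
        exact ⟨a, hsub _ ha, v, hself ▸ .inr hv, hav⟩
      · exact absurd (h w₁ w₂ hw₁ hw₂ (.inr hw) a ⟨haX, ha⟩ b ⟨hbX, hb⟩) hne
  · rcases eq_or_ne w w₀ with rfl | hw
    · exact hself.trans_subset (Set.union_subset_union_left Y (hMB w))
    · exact (hof_ne w hw).trans_subset ((hMB w).trans Set.subset_union_left)

theorem IsModel.of_addClique (hM : IsModel K (addClique G X) M) (hMX : ∀ w, ∀ a ∈ X, a ∉ M w) :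
    IsModel K G M where
  connected w := (hM.connected w).mono fun a ha _ _ hab =>
    (addClique_adj.1 hab).resolve_right fun h => hMX w a h.2.1 ha
  eq_of_mem := hM.eq_of_mem
  linked {w₁ _} hw := by
    obtain ⟨a, ha, b, hb, hab⟩ := hM.linked hw
    exact ⟨a, ha, b, hb, (addClique_adj.1 hab).resolve_right fun h => hMX w₁ a h.2.1 ha⟩

theorem IsModel.hasModelThrough_or {x : Fin 3 → V}
    (hM : IsModel K (addClique G (Set.range x)) M) (hMB : ∀ w, M w ⊆ B) (hY : ConnectedOn G Y)
    (hYB : ∀ v ∈ Y, v ∉ B) (hxY : ∀ a ∈ Set.range x, ∃ v ∈ Y, G.Adj a v) :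
    IsMinor K (G.induce B) ∨ HasModelThrough K G B Y ∨
      ∃ e : Fin 3 → W, Function.Injective e ∧ ∀ i, x i ∈ M (e i) := by
  by_cases hnone : ∀ w i, x i ∉ M w
  · refine Or.inl (isMinor_induce_iff.2 ⟨M, hM.of_addClique ?_, hMB⟩)
    rintro w _ ⟨i, rfl⟩
    exact hnone w i
  push Not at hnone
  right
  by_cases hpair : ∃ w₀ i j, i ≠ j ∧ x i ∈ M w₀ ∧ ∀ w, x j ∈ M w → w = w₀
  · left
    obtain ⟨w₀, i, j, hij, hi, hj⟩ := hpair
    have hthird : ∀ k l : Fin 3, k ≠ i → k ≠ j → l ≠ i → l ≠ j → k = l := by omega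
    have hne : ∀ w ≠ w₀, ∀ k, x k ∈ M w → k ≠ i ∧ k ≠ j := fun w hw k hk =>
      ⟨by rintro rfl; exact hw (hM.eq_of_mem hk hi), by rintro rfl; exact hw (hj w hk)⟩
    refine hM.hasModelThrough hMB hY hYB hxY ⟨x i, ⟨i, rfl⟩, hi⟩ ?_
    rintro w₁ w₂ hw₁ hw₂ - _ ⟨⟨k, rfl⟩, hk⟩ _ ⟨⟨l, rfl⟩, hl⟩
    have hk' := hne w₁ hw₁ k hk
    have hl' := hne w₂ hw₂ l hl
    rw [hthird k l hk'.1 hk'.2 hl'.1 hl'.2]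
  · right
    push Not at hpair
    obtain ⟨w₀, i, hi⟩ := hnone
    have hall : ∀ j, ∃ w, x j ∈ M w := fun j => by
      rcases eq_or_ne i j with rfl | hij
      · exact ⟨w₀, hi⟩
      · exact (hpair w₀ i j hij hi).imp fun w hw => hw.1
    choose e he using hall
    refine ⟨e, fun j k hjk => by_contra fun hne => ?_, he⟩
    obtain ⟨w, hw, hne⟩ := hpair (e j) j k hne (he j)
    exact hne ((hM.eq_of_mem hw (he k)).trans hjk.symm)

theorem eq_of_mem_cons {n : ℕ} {T : Fin n → Set V} (hST : ∀ i, ∀ v ∈ S, v ∉ T i)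
    (hT : ∀ {i j v}, v ∈ T i → v ∈ T j → i = j) {i j : Fin (n + 1)} {v : V}
    (hi : v ∈ (Fin.cons S T : Fin (n + 1) → Set V) i)
    (hj : v ∈ (Fin.cons S T : Fin (n + 1) → Set V) j) : i = j := by
  cases i using Fin.cases <;> cases j using Fin.cases <;>
    simp only [Fin.cons_zero, Fin.cons_succ] at hi hj
  · rfl
  · exact absurd hj (hST _ v hi)
  · exact absurd hi (hST _ v hj)
  · exact congrArg Fin.succ (hT hi hj)

theorem exists_injective_notMem_range (e : Fin 3 → Fin 5) :
    ∃ f : Fin 2 → Fin 5, Function.Injective f ∧ ∀ i j, e i ≠ f j := by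
  have hcard : 2 ≤ (Finset.univ.image e)ᶜ.card := by
    have := Finset.card_image_le (s := Finset.univ) (f := e)
    rw [Finset.card_compl]
    simp only [Fintype.card_fin, Finset.card_univ] at *
    omega
  obtain ⟨s, hs, hs2⟩ := Finset.exists_subset_card_eq hcard
  refine ⟨s.orderEmbOfFin hs2, (s.orderEmbOfFin hs2).injective, fun i j h => ?_⟩
  have := hs (s.orderEmbOfFin_mem hs2 j)
  simp [← h] at this

theorem hasModelThrough_K33_of_K5 {x : Fin 3 → V} {M : Fin 5 → Set V}
    (hM : IsModel K5 (addClique G (Set.range x)) M) (hMB : ∀ w, M w ⊆ B) (hY : ConnectedOn G Y)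
    (hYB : ∀ v ∈ Y, v ∉ B) (hxY : ∀ a ∈ Set.range x, ∃ v ∈ Y, G.Adj a v) {e : Fin 3 → Fin 5}
    (he : Function.Injective e) (hxe : ∀ i, x i ∈ M (e i)) : HasModelThrough K33 G B Y := by
  obtain ⟨f, hf, hef⟩ := exists_injective_notMem_range e
  have hx_mem : ∀ {i w}, x i ∈ M w → e i = w := fun h => hM.eq_of_mem (hxe _) h
  have hconn : ∀ w, ConnectedOn G (M w) := fun w => (hM.connected w).mono fun a ha b hb hab => by
    refine (addClique_adj.1 hab).resolve_right ?_
    rintro ⟨hne, ⟨j, rfl⟩, ⟨k, rfl⟩⟩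
    exact hne (congrArg x (he ((hx_mem ha).trans (hx_mem hb).symm)))
  have hlink : ∀ i j, Linked G (M (e i)) (M (f j)) := fun i j => by
    obtain ⟨a, ha, b, hb, hab⟩ := hM.linked (show K5.Adj (e i) (f j) from hef i j)
    refine ⟨a, ha, b, hb, (addClique_adj.1 hab).resolve_right ?_⟩
    rintro ⟨-, -, ⟨k, rfl⟩⟩
    exact hef k j (hx_mem hb)
  have hMY : ∀ w, ∀ v ∈ M w, v ∉ Y := fun w v hv hvY => hYB v hvY (hMB w hv)
  refine ⟨Sum.elim (M ∘ e) (Fin.cons Y (M ∘ f)), .sumElim (fun i => hconn _)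
    (Fin.cases hY fun j => hconn _) (fun h h' => he (hM.eq_of_mem h h'))
    (eq_of_mem_cons (fun j v hv hvj => hMY _ v hvj hv) fun h h' => hf (hM.eq_of_mem h h'))
    (fun i j v hv => ?_) (fun i j => ?_), ?_, .inr 0, subset_rfl⟩
  · cases j using Fin.cases with
    | zero => exact hMY _ v hv
    | succ j => exact fun hvj => hef i j (hM.eq_of_mem hv hvj)
  · cases j using Fin.cases with
    | zero =>
      obtain ⟨v, hv, hxv⟩ := hxY (x i) ⟨i, rfl⟩
      exact ⟨x i, hxe i, v, hv, hxv⟩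
    | succ j => exact hlink i j
  · rintro (i | j)
    · exact (hMB _).trans Set.subset_union_left
    · cases j using Fin.cases with
      | zero => exact Set.subset_union_right
      | succ j => exact (hMB _).trans Set.subset_union_left

theorem exists_forall_not_K33_adj (e : Fin 3 → Fin 3 ⊕ Fin 3) :
    ∃ k : Fin 3, ∀ i j, i ≠ k → j ≠ k → ¬ K33.Adj (e i) (e j) := by
  have hside : ∀ b : Fin 3 → Bool, ∃ k : Fin 3, ∀ i j, i ≠ k → j ≠ k → b i = b j := by decide
  obtain ⟨k, hk⟩ := hside fun i => (e i).isLeft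
  refine ⟨k, fun i j hi hj => ?_⟩
  have := hk i j hi hj
  cases hei : e i <;> cases hej : e j <;> simp_all [K33]

theorem hasModelThrough_of_not_planar {x : Fin 3 → V} (hB : Planar (G.induce B))
    (hBx : ¬ Planar ((addClique G (Set.range x)).induce B)) (hY : ConnectedOn G Y)
    (hYB : ∀ v ∈ Y, v ∉ B) (hxY : ∀ a ∈ Set.range x, ∃ v ∈ Y, G.Adj a v) :
    HasModelThrough K5 G B Y ∨ HasModelThrough K33 G B Y := by
  rcases not_planar_iff.1 hBx with hK | hK <;> obtain ⟨M, hM, hMB⟩ := isMinor_induce_iff.1 hK <;>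
    rcases hM.hasModelThrough_or hMB hY hYB hxY with hminor | hthrough | ⟨e, he, hxe⟩
  · exact absurd hminor hB.1
  · exact Or.inl hthrough
  · exact Or.inr (hasModelThrough_K33_of_K5 hM hMB hY hYB hxY he hxe)
  · exact absurd hminor hB.2
  · exact Or.inr hthrough
  · obtain ⟨k, hk⟩ := exists_forall_not_K33_adj e
    refine Or.inr (hM.hasModelThrough hMB hY hYB hxY ⟨x k, ⟨k, rfl⟩, hxe k⟩ ?_)
    rintro w₁ w₂ hw₁ hw₂ hw _ ⟨⟨i, rfl⟩, hi⟩ _ ⟨⟨j, rfl⟩, hj⟩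
    obtain rfl := hM.eq_of_mem hi (hxe i)
    obtain rfl := hM.eq_of_mem hj (hxe j)
    rcases hw with hw | hw
    · rw [he hw]
    · exact absurd hw (hk i j (fun h => hw₁ (congrArg e h)) fun h => hw₂ (congrArg e h))

end AddClique

/-! ### Rooted models -/

/-- `M` is a model of `K₂,₃` inside `B` in which the branch set of the `i`-th vertex of the larger
colour class contains the prescribed root `x i`. -/
structure IsRootedK23 {V : Type*} (F : SimpleGraph V) (B : Set V) (x : Fin 3 → V)
    (M : Fin 2 ⊕ Fin 3 → Set V) : Prop where
  isModel : IsModel (completeBipartiteGraph (Fin 2) (Fin 3)) F M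
  subset : ∀ w, M w ⊆ B
  root_mem : ∀ i, x i ∈ M (.inr i)

section Rooted

variable {V W : Type*} {K : SimpleGraph W} {G F : SimpleGraph V} {B Q S : Set V} {a : V}

theorem isMinor_induce_addClique {ι : Type*} {x : ι → V} {C : ι → Set V}
    (hC : IsModel (⊤ : SimpleGraph ι) F C) (hx : ∀ i, x i ∈ C i)
    (hCS : ∀ i, ∀ v ∈ C i, v ∈ S → v = x i) :
    IsMinor ((addClique F (Set.range x)).induce S) (F.induce (S ∪ ⋃ i, C i)) := by
  have hexists : ∀ v, ∃ D, ConnectedOn F D ∧ v ∈ D ∧ (∀ i, x i = v → D = C i) ∧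
      (v ∉ Set.range x → D = {v}) := fun v => by
    by_cases hv : v ∈ Set.range x
    · obtain ⟨i, rfl⟩ := hv
      refine ⟨C i, hC.connected i, hx i, fun j hj => ?_, fun h => absurd ⟨i, rfl⟩ h⟩
      rw [hC.eq_of_mem (hx i) (hj ▸ hx j)]
    · exact ⟨{v}, .singleton v, rfl, fun i hi => absurd ⟨i, hi⟩ hv, fun _ => rfl⟩
  choose D hD hmem hroot hother using hexists
  have hDS : ∀ v, ∀ u ∈ D v, u ∈ S → u = v := fun v u hu huS => by
    by_cases hv : v ∈ Set.range x
    · obtain ⟨i, rfl⟩ := hv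
      exact hCS i u (hroot _ i rfl ▸ hu) huS
    · exact (hother v hv ▸ hu : u ∈ ({v} : Set V))
  refine isMinor_induce_iff.2 ⟨fun v => D v, ⟨fun v => hD v, fun {v w u} hv hw => ?_,
    fun {v w} hvw => ?_⟩, fun v => ?_⟩
  · by_cases huS : u ∈ S
    · exact Subtype.ext ((hDS _ u hv huS).symm.trans (hDS _ u hw huS))
    have hrange : ∀ z ∈ S, u ∈ D z → z ∈ Set.range x := fun z hz hu => by_contra fun hzx => by
      rw [hother z hzx] at hu
      exact huS (hu ▸ hz)
    obtain ⟨i, hi⟩ := hrange v v.2 hv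
    obtain ⟨j, hj⟩ := hrange w w.2 hw
    have hij : i = j := hC.eq_of_mem (hroot _ i hi ▸ hv) (hroot _ j hj ▸ hw)
    exact Subtype.ext (hi.symm.trans (hij ▸ hj))
  · rcases addClique_adj.1 hvw with h | ⟨hne, ⟨i, hi⟩, ⟨j, hj⟩⟩
    · exact ⟨v, hmem v, w, hmem w, h⟩
    · rw [hroot v.1 i hi, hroot w.1 j hj]
      exact hC.linked fun hij => hne (hi.symm.trans (hij ▸ hj))
  · by_cases hv : v.1 ∈ Set.range x
    · obtain ⟨i, hi⟩ := hv
      exact (hroot _ i hi).trans_subset <| (Set.subset_iUnion C i).trans Set.subset_union_right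
    · exact (hother _ hv).trans_subset (Set.singleton_subset_iff.2 (.inl v.2))

theorem ConnectedOn.linked_component (hS : ConnectedOn G S) {x : V} (hx : x ∈ S)
    (ha : a ∈ S \ {x}) : Linked G {x} (component G (S \ {x}) a) := by
  have hsub := component_subset (G := G) ha
  obtain ⟨c, -, d, hd, hc, hdC, hcd⟩ := hS.exists_adj ha.1 hx (mem_component_self a)
    fun h => (hsub h).2 rfl
  have hdx : d = x := by_contra fun hne => hdC (mem_component_of_adj hc hcd ⟨hd, hne⟩)
  exact ⟨x, rfl, c, hc, hdx ▸ hcd.symm⟩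

theorem ConnectedOn.sdiff_component (hS : ConnectedOn G S) {x : V} (hx : x ∈ S)
    (ha : a ∈ S \ {x}) : ConnectedOn G (S \ component G (S \ {x}) a) := by
  have hxC : x ∉ component G (S \ {x}) a := fun h => (component_subset ha h).2 rfl
  refine (connectedOn_iff (show x ∈ S \ _ from ⟨hx, hxC⟩)).2 fun P hP hxP => ?_
  rw [Set.sdiff_subset_iff]
  refine hS.subset_of_closed hx (fun c hc d hd hcd hcP => ?_) (.inr hxP)
  by_cases hdC : d ∈ component G (S \ {x}) a
  · exact Or.inl hdC
  refine Or.inr ?_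
  by_cases hcC : c ∈ component G (S \ {x}) a
  · have hdx : d = x := by_contra fun hne => hdC (mem_component_of_adj hcC hcd ⟨hd, hne⟩)
    exact hdx ▸ hxP
  · exact hP c ⟨hc, hcC⟩ d ⟨hd, hdC⟩ hcd (hcP.resolve_left hcC)

theorem IsModel.transfer [DecidableEq W] {M : W → Set V} (hM : IsModel K G M) {u w : W}
    (huw : u ≠ w) (hQ : Q ⊆ M u) (hu : ConnectedOn G (M u \ Q)) (hw : ConnectedOn G (M w ∪ Q))
    (hlink : ∀ z ≠ w, K.Adj u z → Linked G (M u \ Q) (M z)) (hlinkw : Linked G (M u \ Q) Q) :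
    IsModel K G (Function.update (Function.update M u (M u \ Q)) w (M w ∪ Q)) := by
  set N := Function.update (Function.update M u (M u \ Q)) w (M w ∪ Q) with hN
  have hNw : N w = M w ∪ Q := by simp [hN]
  have hNu : N u = M u \ Q := by simp [hN, huw]
  have hN_of_ne : ∀ z ≠ u, z ≠ w → N z = M z := fun z hzu hzw => by simp [hN, hzu, hzw]
  have hsub : ∀ z ≠ u, M z ⊆ N z := fun z hzu => by
    rcases eq_or_ne z w with rfl | hzw
    exacts [hNw ▸ Set.subset_union_left, (hN_of_ne z hzu hzw).superset]
  have hmemQ : ∀ {z v}, v ∈ N z → v ∈ Q → z = w := fun {z v} hv hvQ => by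
    by_contra hzw
    rcases eq_or_ne z u with rfl | hzu
    · exact (hNu ▸ hv).2 hvQ
    · exact hzu (hM.eq_of_mem (hN_of_ne z hzu hzw ▸ hv) (hQ hvQ))
  have hmem : ∀ {z v}, v ∈ N z → v ∉ Q → v ∈ M z := fun {z v} hv hvQ => by
    rcases eq_or_ne z w with rfl | hzw
    · exact (hNw ▸ hv).resolve_right hvQ
    rcases eq_or_ne z u with rfl | hzu
    exacts [(hNu ▸ hv).1, hN_of_ne z hzu hzw ▸ hv]
  have hlinku : ∀ z, K.Adj u z → Linked G (N u) (N z) := fun z hz => by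
    rw [hNu]
    rcases eq_or_ne z w with rfl | hzw
    · exact hlinkw.mono subset_rfl (hNw ▸ Set.subset_union_right)
    · exact (hlink z hzw hz).mono subset_rfl (hsub z hz.ne')
  refine ⟨fun z => ?_, fun {z z' v} hv hv' => ?_, fun {z z'} hz => ?_⟩
  · rcases eq_or_ne z w with rfl | hzw
    · rwa [hNw]
    rcases eq_or_ne z u with rfl | hzu
    exacts [hNu ▸ hu, hN_of_ne z hzu hzw ▸ hM.connected z]
  · by_cases hvQ : v ∈ Q
    · exact (hmemQ hv hvQ).trans (hmemQ hv' hvQ).symm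
    · exact hM.eq_of_mem (hmem hv hvQ) (hmem hv' hvQ)
  · rcases eq_or_ne z u with rfl | hzu
    · exact hlinku z' hz
    rcases eq_or_ne z' u with rfl | hzu'
    · exact (hlinku z hz.symm).symm
    · exact (hM.linked hz).mono (hsub z hzu) (hsub z' hzu')

namespace IsRootedK23

variable {x : Fin 3 → V} {M : Fin 2 ⊕ Fin 3 → Set V}

theorem isMinor_K5 (hM : IsRootedK23 F B x M) (hx : ∀ i j, i ≠ j → F.Adj (x i) (x j))
    (hhub : Linked F (M (.inl 0)) (M (.inl 1))) : IsMinor K5 (F.induce B) := by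
  have htop : IsModel (⊤ : SimpleGraph (Fin 2 ⊕ Fin 3)) F M := by
    refine ⟨hM.isModel.connected, hM.isModel.eq_of_mem, fun {w w'} hw => ?_⟩
    rcases w with k | i <;> rcases w' with l | j
    · have hkl : k = 0 ∧ l = 1 ∨ k = 1 ∧ l = 0 := by
        have : k ≠ l := fun h => hw (congrArg Sum.inl h)
        omega
      rcases hkl with ⟨rfl, rfl⟩ | ⟨rfl, rfl⟩
      exacts [hhub, hhub.symm]
    · exact hM.isModel.linked (by simp)
    · exact hM.isModel.linked (by simp)
    · exact ⟨x i, hM.root_mem i, x j, hM.root_mem j, hx i j fun h => hw (congrArg Sum.inr h)⟩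
  let e : Fin 5 ≃ Fin 2 ⊕ Fin 3 := (finSumFinEquiv (m := 2) (n := 3)).symm
  exact isMinor_induce_iff.2 ⟨_, htop.comap e.injective fun a b (hab : a ≠ b) => e.injective.ne hab,
    fun w => hM.subset _⟩

theorem isMinor_K33 (hM : IsRootedK23 F B x M) (hx : ∀ i j, i ≠ j → F.Adj (x i) (x j))
    {i : Fin 3} (hQ : ConnectedOn F Q) (hQM : Q ⊆ M (.inr i)) (hxQ : x i ∉ Q)
    (hhub : ∀ k, Linked F (M (.inl k)) Q) (hroot : Linked F {x i} Q) :
    IsMinor K33 (F.induce B) := by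
  set R := Function.update (fun j => M (.inr j)) i Q with hR
  have hRi : R i = Q := Function.update_self ..
  have hR_of_ne : ∀ j ≠ i, R j = M (.inr j) := fun j hj => Function.update_of_ne hj ..
  have hRM : ∀ j, R j ⊆ M (.inr j) := fun j => by
    rcases eq_or_ne j i with rfl | hj
    exacts [hRi ▸ hQM, (hR_of_ne j hj).subset]
  have hxM : ∀ w, x i ∈ M w → w = .inr i := fun w hw => hM.isModel.eq_of_mem hw (hM.root_mem i)
  refine isMinor_induce_iff.2 ⟨Sum.elim (Fin.cons {x i} fun k => M (.inl k)) R, .sumElim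
    (Fin.cases (.singleton _) fun k => hM.isModel.connected _) (fun j => ?_)
    (eq_of_mem_cons (by rintro k _ rfl hk; simpa using hxM _ hk)
      fun h h' => Sum.inl.inj (hM.isModel.eq_of_mem h h'))
    (fun h h' => Sum.inr.inj (hM.isModel.eq_of_mem (hRM _ h) (hRM _ h')))
    (fun k j v hv hvj => ?_) (fun k j => ?_), ?_⟩
  · rcases eq_or_ne j i with rfl | hj
    exacts [hRi ▸ hQ, hR_of_ne j hj ▸ hM.isModel.connected _]
  · cases k using Fin.cases with
    | zero =>
      obtain rfl : v = x i := hv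
      obtain rfl := Sum.inr.inj (hxM _ (hRM j hvj))
      exact hxQ (hRi ▸ hvj)
    | succ k => simpa using hM.isModel.eq_of_mem hv (hRM j hvj)
  · rcases eq_or_ne j i with rfl | hj <;> cases k using Fin.cases
    · exact hRi ▸ hroot
    · exact hRi ▸ hhub _
    · exact hR_of_ne j hj ▸ ⟨x i, rfl, x j, hM.root_mem j, hx i j hj.symm⟩
    · exact hR_of_ne j hj ▸ hM.isModel.linked (by simp)
  · rintro (k | j)
    · cases k using Fin.cases with
      | zero => exact Set.singleton_subset_iff.2 (hM.subset _ (hM.root_mem i))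
      | succ k => exact hM.subset _
    · exact (hRM j).trans (hM.subset _)

theorem insert_hub (hM : IsRootedK23 F B x M) {k : Fin 2} {u m : V} (hu : u ∈ M (.inl k))
    (hum : F.Adj u m) (hmB : m ∈ B) (hm : ∀ w, m ∉ M w) :
    IsRootedK23 F B x (Function.update M (.inl k) (insert m (M (.inl k)))) where
  isModel := by
    refine hM.isModel.update ((hM.isModel.connected _).insert hu hum.symm) ?_ fun w hw =>
      (hM.isModel.linked hw).mono (Set.subset_insert _ _) subset_rfl
    rintro w hw v (rfl | hv)
    · exact hm w
    · exact hM.isModel.notMem hv hw.symm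
  subset w := by
    rcases eq_or_ne w (.inl k) with rfl | hw
    · rw [Function.update_self]
      exact Set.insert_subset hmB (hM.subset _)
    · rw [Function.update_of_ne hw]
      exact hM.subset w
  root_mem i := by simpa using hM.root_mem i

theorem transfer_hub (hM : IsRootedK23 F B x M) {k : Fin 2} {i : Fin 3} {m : V}
    (hm : m ∈ M (.inr i) \ {x i}) (hQ : Q = component F (M (.inr i) \ {x i}) m)
    (hlink : Linked F (M (.inl k)) Q) (hother : ∀ l ≠ k, ¬ Linked F (M (.inl l)) Q) :
    IsRootedK23 F B x (Function.update (Function.update M (.inr i) (M (.inr i) \ Q)) (.inl k)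
      (M (.inl k) ∪ Q)) := by
  subst hQ
  set Q := component F (M (.inr i) \ {x i}) m
  have hconn := hM.isModel.connected (.inr i)
  have hQM : Q ⊆ M (.inr i) \ {x i} := component_subset hm
  have hxQ : x i ∉ Q := fun h => (hQM h).2 rfl
  have hroot : {x i} ⊆ M (.inr i) \ Q := Set.singleton_subset_iff.2 ⟨hM.root_mem i, hxQ⟩
  refine ⟨hM.isModel.transfer (by simp) (hQM.trans Set.sdiff_subset)
    (hconn.sdiff_component (hM.root_mem i) hm)
    ((hM.isModel.connected _).union (connectedOn_component m) hlink) (fun w hwk hw => ?_)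
    ((hconn.linked_component (hM.root_mem i) hm).mono hroot subset_rfl), fun w => ?_, fun j => ?_⟩
  · rcases w with l | j
    · obtain ⟨a, ha, b, hb, hab⟩ := hM.isModel.linked hw
      have haQ : a ∉ Q := fun haQ =>
        hother l (fun h => hwk (congrArg Sum.inl h)) ⟨b, hb, a, haQ, hab.symm⟩
      exact ⟨a, ⟨ha, haQ⟩, b, hb, hab⟩
    · simp at hw
  · rcases eq_or_ne w (.inl k) with rfl | hwk
    · rw [Function.update_self]
      exact Set.union_subset (hM.subset _) ((hQM.trans Set.sdiff_subset).trans (hM.subset _))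
    rw [Function.update_of_ne hwk]
    rcases eq_or_ne w (.inr i) with rfl | hwi
    · rw [Function.update_self]
      exact Set.sdiff_subset.trans (hM.subset _)
    · rw [Function.update_of_ne hwi]
      exact hM.subset w
  · rw [Function.update_of_ne (by simp)]
    rcases eq_or_ne j i with rfl | hj
    · rw [Function.update_self]
      exact hroot rfl
    · rw [Function.update_of_ne (by simpa using hj)]
      exact hM.root_mem j

theorem exists_ssubset (hM : IsRootedK23 F B x M) (hx : ∀ i j, i ≠ j → F.Adj (x i) (x j))
    (hB : ConnectedOn F (B \ Set.range x)) (hplanar : Planar (F.induce B)) :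
    ∃ N, IsRootedK23 F B x N ∧ M (.inl 0) ⊂ N (.inl 0) := by
  have hhub : ∀ k, M (.inl k) ⊆ B \ Set.range x := by
    rintro k v hv
    refine ⟨hM.subset _ hv, ?_⟩
    rintro ⟨i, rfl⟩
    simpa using hM.isModel.eq_of_mem hv (hM.root_mem i)
  have hunlinked : ¬ Linked F (M (.inl 0)) (M (.inl 1)) := fun h =>
    hplanar.1 (hM.isMinor_K5 hx h)
  obtain ⟨a, ha⟩ := (hM.isModel.connected (.inl 0)).nonempty
  obtain ⟨b, hb⟩ := (hM.isModel.connected (.inl 1)).nonempty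
  obtain ⟨u, -, m, hm, hu, hm0, hum⟩ := hB.exists_adj (hhub 0 ha) (hhub 1 hb) ha
    (hM.isModel.notMem hb (by simp))
  have hssub : ∀ {S}, m ∈ S → M (.inl 0) ⊂ M (.inl 0) ∪ S := fun hmS =>
    Set.ssubset_iff_of_subset Set.subset_union_left |>.2 ⟨m, .inr hmS, hm0⟩
  by_cases hfree : ∀ w, m ∉ M w
  · refine ⟨_, hM.insert_hub hu hum hm.1 hfree, ?_⟩
    rw [Function.update_self, Set.insert_eq, Set.union_comm]
    exact hssub rfl
  push Not at hfree
  obtain ⟨l | i, hmw⟩ := hfree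
  · have hl : l = 1 := by
      have : l ≠ 0 := by rintro rfl; exact hm0 hmw
      omega
    exact absurd ⟨u, hu, m, hl ▸ hmw, hum⟩ hunlinked
  have hmi : m ∈ M (.inr i) \ {x i} := ⟨hmw, fun h => hm.2 ⟨i, h.symm⟩⟩
  set Q := component F (M (.inr i) \ {x i}) m with hQ
  have hQM : Q ⊆ M (.inr i) \ {x i} := component_subset hmi
  have hlink : Linked F (M (.inl 0)) Q := ⟨u, hu, m, mem_component_self m, hum⟩
  refine ⟨_, hM.transfer_hub hmi hQ hlink fun l hl hlQ => hplanar.2 ?_, ?_⟩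
  · refine hM.isMinor_K33 hx (connectedOn_component m) (hQM.trans Set.sdiff_subset)
      (fun h => (hQM h).2 rfl) (fun k => ?_)
      ((hM.isModel.connected _).linked_component (hM.root_mem i) hmi)
    have hk : k = 0 ∨ k = l := by omega
    rcases hk with rfl | rfl
    exacts [hlink, hlQ]
  · rw [Function.update_self]
    exact hssub (mem_component_self m)

theorem not_planar [Finite V] (hM : IsRootedK23 F B x M) (hx : ∀ i j, i ≠ j → F.Adj (x i) (x j))
    (hB : ConnectedOn F (B \ Set.range x)) : ¬ Planar (F.induce B) := by
  intro hplanar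
  have hfin : {M | IsRootedK23 F B x M}.Finite := Set.toFinite _
  obtain ⟨M, hM, hmax⟩ := hfin.exists_maximalFor (fun M => M (.inl 0)) _ ⟨M, hM⟩
  obtain ⟨N, hN, hlt⟩ := IsRootedK23.exists_ssubset hM hx hB hplanar
  exact hlt.2 (hmax hN hlt.1)

end IsRootedK23

end Rooted

/-! ### Three-separations -/

namespace IsSep

variable {V W : Type*} {K : SimpleGraph W} {G : SimpleGraph V} {A B S : Set V} {a b : V} {n : ℕ}

theorem symm (h : IsSep G n A B) : IsSep G n B A :=
  ⟨Set.union_comm A B ▸ h.1, h.2.2.1, h.2.1, Set.inter_comm A B ▸ h.2.2.2.1,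
    fun _ _ hab => (h.2.2.2.2 hab).symm⟩

theorem ncard_inter (h : IsSep G n A B) : (A ∩ B).ncard = n := h.2.2.2.1

theorem mem_left_of_notMem (h : IsSep G n A B) (ha : a ∉ B) : a ∈ A :=
  (h.1.superset (Set.mem_univ a)).resolve_right ha

theorem mem_left_of_adj (h : IsSep G n A B) (hab : G.Adj a b) (ha : a ∉ B) : b ∈ A :=
  (h.2.2.2.2 hab).elim And.right fun h => absurd h.1 ha

theorem inter_nonempty (h : IsSep G n A B) (hS : ConnectedOn G S) (hSA : (S ∩ A).Nonempty)
    (hSB : (S ∩ B).Nonempty) : (S ∩ (A ∩ B)).Nonempty := by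
  obtain ⟨a, haS, haA⟩ := hSA
  obtain ⟨b, hbS, hbB⟩ := hSB
  by_cases hbA : b ∈ A
  · exact ⟨b, hbS, hbA, hbB⟩
  obtain ⟨c, hc, d, -, hcA, hdA, hcd⟩ := hS.exists_adj haS hbS haA hbA
  exact ⟨c, hc, hcA, h.symm.mem_left_of_adj hcd.symm hdA⟩

theorem connectedOn_inter (h : IsSep G n A B) (hS : ConnectedOn G S) (hSB : (S ∩ B).Nonempty) :
    ConnectedOn (addClique G (A ∩ B)) (S ∩ B) := by
  obtain ⟨a, ha⟩ := hSB
  refine (connectedOn_iff ha).2 fun P hP haP => ?_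
  have hX : ∀ e ∈ S ∩ B, e ∈ A → e ∈ P → ∀ f ∈ S ∩ B, f ∈ A → f ∈ P := by
    intro e he heA heP f hf hfA
    rcases eq_or_ne e f with rfl | hef
    · exact heP
    · exact hP e he f hf (addClique_adj.2 (.inr ⟨hef, ⟨heA, he.2⟩, hfA, hf.2⟩)) heP
  -- Outside `B`, record whether the part of `S ∩ B` in the clique has already been reached.
  let P' : Set V := {v | (v ∈ B ∧ v ∈ P) ∨ (v ∉ B ∧ ∃ e ∈ S ∩ B, e ∈ A ∧ e ∈ P)}
  have hSP : S ⊆ P' := by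
    refine hS.subset_of_closed ha.1 (fun c hc d hd hcd hcP => ?_) (.inl ⟨ha.2, haP⟩)
    rcases hcP with ⟨hcB, hcP⟩ | ⟨hcB, e, he, heA, heP⟩ <;> by_cases hdB : d ∈ B
    · exact Or.inl ⟨hdB, hP c ⟨hc, hcB⟩ d ⟨hd, hdB⟩ (le_addClique hcd) hcP⟩
    · exact Or.inr ⟨hdB, c, ⟨hc, hcB⟩, h.mem_left_of_adj hcd.symm hdB, hcP⟩
    · exact Or.inl ⟨hdB, hX e he heA heP d ⟨hd, hdB⟩ (h.mem_left_of_adj hcd hcB)⟩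
    · exact Or.inr ⟨hdB, e, he, heA, heP⟩
  exact fun b hb => ((hSP hb.1).resolve_right fun h => h.1 hb.2).2

theorem isModel_inter (h : IsSep G n A B) {M : W → Set V} (hM : IsModel K G M)
    (hMB : ∀ w, (M w ∩ B).Nonempty) :
    IsModel K (addClique G (A ∩ B)) (fun w => M w ∩ B) where
  connected w := h.connectedOn_inter (hM.connected w) (hMB w)
  eq_of_mem h₁ h₂ := hM.eq_of_mem h₁.1 h₂.1
  linked {w₁ w₂} hw := by
    obtain ⟨a, ha, b, hb, hab⟩ := hM.linked hw
    rcases h.2.2.2.2 hab with ⟨haA, hbA⟩ | ⟨haB, hbB⟩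
    · obtain ⟨u, hu, hu'⟩ := h.inter_nonempty (hM.connected w₁) ⟨a, ha, haA⟩ (hMB w₁)
      obtain ⟨v, hv, hv'⟩ := h.inter_nonempty (hM.connected w₂) ⟨b, hb, hbA⟩ (hMB w₂)
      refine ⟨u, ⟨hu, hu'.2⟩, v, ⟨hv, hv'.2⟩, addClique_adj.2 (.inr ⟨?_, hu', hv'⟩)⟩
      rintro rfl
      exact hM.notMem hu hw.ne hv
    · exact ⟨a, ⟨ha, haB⟩, b, ⟨hb, hbB⟩, le_addClique hab⟩

theorem isMinor_or_exists_disjoint (h : IsSep G n A B) {M : W → Set V} (hM : IsModel K G M) :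
    IsMinor K ((addClique G (A ∩ B)).induce A) ∨ IsMinor K ((addClique G (A ∩ B)).induce B) ∨
      ∃ w₁ w₂, w₁ ≠ w₂ ∧ ¬ K.Adj w₁ w₂ ∧ Disjoint (M w₁) B ∧ Disjoint (M w₂) A := by
  by_cases hA : ∀ w, (M w ∩ A).Nonempty
  · refine Or.inl (isMinor_induce_iff.2 ⟨fun w => M w ∩ A, ?_, fun w => Set.inter_subset_right⟩)
    exact Set.inter_comm A B ▸ h.symm.isModel_inter hM hA
  by_cases hB : ∀ w, (M w ∩ B).Nonempty
  · exact Or.inr (.inl (isMinor_induce_iff.2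
      ⟨_, h.isModel_inter hM hB, fun w => Set.inter_subset_right⟩))
  simp only [not_forall, Set.not_nonempty_iff_eq_empty, ← Set.disjoint_iff_inter_eq_empty] at hA hB
  obtain ⟨w₂, hw₂⟩ := hA
  obtain ⟨w₁, hw₁⟩ := hB
  refine Or.inr (.inr ⟨w₁, w₂, ?_, fun hw => ?_, hw₁, hw₂⟩)
  · rintro rfl
    obtain ⟨a, ha⟩ := (hM.connected w₁).nonempty
    exact hw₂.notMem_of_mem_left ha (h.mem_left_of_notMem (hw₁.notMem_of_mem_left ha))
  · obtain ⟨a, ha, b, hb, hab⟩ := hM.linked hw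
    exact hw₂.notMem_of_mem_left hb (h.mem_left_of_adj hab (hw₁.notMem_of_mem_left ha))

theorem range_eq_inter [Finite V] (h : IsSep G 3 A B) {M : Fin 3 ⊕ Fin 3 → Set V}
    (hM : IsModel K33 G M) {x : Fin 3 → V} (hx : ∀ i, x i ∈ M (.inr i) ∩ (A ∩ B)) :
    Set.range x = A ∩ B := by
  have hinj : Function.Injective x := fun i j hij =>
    Sum.inr.inj (hM.eq_of_mem (hx i).1 (hij ▸ (hx j).1))
  refine Set.eq_of_subset_of_ncard_le (Set.range_subset_iff.2 fun i => (hx i).2) ?_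
  rw [h.ncard_inter, Set.ncard_range_of_injective hinj, Nat.card_fin]

theorem not_planar_of_disjoint [Finite V] (h : IsSep G 3 A B) (hB : ConnectedOn G (B \ A))
    {M : Fin 3 ⊕ Fin 3 → Set V} (hM : IsModel K33 G M) {x : Fin 3 → V}
    (hx : ∀ i, x i ∈ M (.inr i) ∩ (A ∩ B)) {j k : Fin 3} (hjk : j ≠ k)
    (hj : Disjoint (M (.inl j)) A) (hk : Disjoint (M (.inl k)) A) :
    ¬ Planar ((addClique G (A ∩ B)).induce B) := by
  have hrange := h.range_eq_inter hM hx
  have hne : ∀ i j, i ≠ j → x i ≠ x j := fun i j hij hx' =>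
    hij (Sum.inr.inj (hM.eq_of_mem (hx i).1 (hx' ▸ (hx j).1)))
  have hinj : Function.Injective ![j, k] := by
    intro a b
    fin_cases a <;> fin_cases b <;> simp [hjk, hjk.symm]
  let f : Fin 2 ⊕ Fin 3 → Fin 3 ⊕ Fin 3 := Sum.map ![j, k] id
  have hN : IsModel (completeBipartiteGraph (Fin 2) (Fin 3)) G (M ∘ f) :=
    hM.comap (hinj.sumMap Function.injective_id) (by rintro (a | a) (b | b) <;> simp [K33, f])
  have hMB : ∀ w, ((M ∘ f) w ∩ B).Nonempty := by
    rintro (i | i)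
    · have hdisj : Disjoint (M (.inl (![j, k] i))) A := by fin_cases i <;> assumption
      obtain ⟨a, ha⟩ := (hM.connected (.inl (![j, k] i))).nonempty
      exact ⟨a, ha, h.symm.mem_left_of_notMem (hdisj.notMem_of_mem_left ha)⟩
    · exact ⟨x i, (hx i).1, (hx i).2.2⟩
  have hroot : IsRootedK23 (addClique G (A ∩ B)) B x (fun w => (M ∘ f) w ∩ B) :=
    ⟨h.isModel_inter hN hMB, fun w => Set.inter_subset_right, fun i => ⟨(hx i).1, (hx i).2.2⟩⟩
  refine hroot.not_planar
    (fun i j hij => addClique_adj.2 (.inr ⟨hne i j hij, (hx i).2, (hx j).2⟩)) ?_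
  rw [hrange, Set.sdiff_inter_self_eq_sdiff]
  exact hB.mono fun _ _ _ _ hab => le_addClique hab

theorem not_planar_or_of_K33 [Finite V] (h : IsSep G 3 A B) (hA : ConnectedOn G (A \ B))
    (hB : ConnectedOn G (B \ A)) {M : Fin 3 ⊕ Fin 3 → Set V} (hM : IsModel K33 G M) {j : Fin 3}
    (hj : j ≠ 0) (hMB : Disjoint (M (.inl 0)) B) (hMA : Disjoint (M (.inl j)) A) :
    ¬ Planar ((addClique G (A ∩ B)).induce A) ∨ ¬ Planar ((addClique G (A ∩ B)).induce B) := by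
  have hmeet : ∀ i, ∃ v, v ∈ M (.inr i) ∩ (A ∩ B) := fun i => by
    refine h.inter_nonempty (hM.connected _) ?_ ?_
    · obtain ⟨a, ha, b, hb, hab⟩ := hM.linked (w₁ := .inl 0) (w₂ := .inr i) (by simp [K33])
      exact ⟨b, hb, h.mem_left_of_adj hab (hMB.notMem_of_mem_left ha)⟩
    · obtain ⟨a, ha, b, hb, hab⟩ := hM.linked (w₁ := .inl j) (w₂ := .inr i) (by simp [K33])
      exact ⟨b, hb, h.symm.mem_left_of_adj hab (hMA.notMem_of_mem_left ha)⟩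
  choose x hx using hmeet
  obtain ⟨k, hk0, hkj⟩ : ∃ k : Fin 3, k ≠ 0 ∧ k ≠ j := by
    clear hMA
    revert j
    decide
  have hkX : Disjoint (M (.inl k)) (A ∩ B) := by
    rw [← h.range_eq_inter hM hx, Set.disjoint_right]
    rintro _ ⟨i, rfl⟩ hi
    simpa using hM.eq_of_mem hi (hx i).1
  by_cases hkA : Disjoint (M (.inl k)) A
  · exact Or.inr (h.not_planar_of_disjoint hB hM hx hkj hkA hMA)
  · have hkB : Disjoint (M (.inl k)) B := by
      by_contra hkB
      rw [Set.not_disjoint_iff_nonempty_inter] at hkA hkB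
      obtain ⟨v, hv, hvX⟩ := h.inter_nonempty (hM.connected _) hkA hkB
      exact hkX.notMem_of_mem_left hv hvX
    rw [Set.inter_comm A B] at hx ⊢
    exact Or.inl (h.symm.not_planar_of_disjoint hA hM hx hk0 hkB hMB)

theorem not_planar_or [Finite V] (h : IsSep G 3 A B) (hA : ConnectedOn G (A \ B))
    (hB : ConnectedOn G (B \ A)) (hG : ¬ Planar G) :
    ¬ Planar ((addClique G (A ∩ B)).induce A) ∨ ¬ Planar ((addClique G (A ∩ B)).induce B) := by
  rcases not_planar_iff.1 hG with hK | hK <;> obtain ⟨M, hM⟩ := isMinor_iff_exists_isModel.1 hK <;>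
    rcases h.isMinor_or_exists_disjoint hM with hK | hK | ⟨w₁, w₂, hne, hadj, h₁, h₂⟩
  · exact Or.inl fun hp => hp.1 hK
  · exact Or.inr fun hp => hp.1 hK
  · exact absurd hne hadj
  · exact Or.inl fun hp => hp.2 hK
  · exact Or.inr fun hp => hp.2 hK
  · obtain ⟨f, rfl⟩ := exists_iso_K33 w₁
    obtain ⟨w, rfl⟩ := f.surjective w₂
    rw [f.map_adj_iff] at hadj
    obtain ⟨j, rfl⟩ : ∃ j, w = .inl j := by
      rcases w with j | j
      · exact ⟨j, rfl⟩
      · exact absurd (by simp [K33]) hadj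
    exact h.not_planar_or_of_K33 hA hB (hM.comap f.injective fun _ _ => f.map_adj_iff.2)
      (by rintro rfl; exact hne rfl) h₁ h₂

end IsSep

/-! ### Cubic triangles -/

/-- The vertices `v i` form a triangle of cubic vertices of `G`, and `x i` is the neighbour of `v i`
outside the triangle. -/
structure IsCubicTriangle {V : Type*} (G : SimpleGraph V) (v x : Fin 3 → V) : Prop where
  injective : Function.Injective v
  adj : ∀ {i j}, i ≠ j → G.Adj (v i) (v j)
  adj_foot : ∀ i, G.Adj (v i) (x i)
  foot_ne : ∀ i j, x i ≠ v j
  eq_of_adj : ∀ {i a}, G.Adj (v i) a → a = x i ∨ ∃ j, a = v j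

/-- The vertices that can be reached from the corner `v i` of a triangle inside `S` while avoiding
the other two corners. -/
def cornerPart {V : Type*} (G : SimpleGraph V) (S : Set V) (v : Fin 3 → V) (i : Fin 3) : Set V :=
  component G (S \ v '' {i}ᶜ) (v i)

/-- The branch set `M w₀` of a model `M` of `K` contains three disjoint, pairwise linked connected
sets `T i`, attached to the branch sets of three distinct neighbours `π i` of `w₀`. -/
structure IsTripod {W V : Type*} (K : SimpleGraph W) (G : SimpleGraph V) (M : W → Set V) (w₀ : W)
    (T : Fin 3 → Set V) (π : Fin 3 → W) : Prop where
  model : IsModel K G M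
  parts : IsModel (⊤ : SimpleGraph (Fin 3)) G T
  subset : ∀ i, T i ⊆ M w₀
  adj : ∀ i, K.Adj w₀ (π i)
  injective : Function.Injective π
  linked : ∀ i, Linked G (T i) (M (π i))
  exists_linked : ∀ {w}, K.Adj w₀ w → ∃ i, Linked G (T i) (M w)

section CubicTriangle

variable {V W : Type*} {G : SimpleGraph V} {K : SimpleGraph W}
  {v x : Fin 3 → V} {M : W → Set V} {w₀ : W} {S : Set V} {T : Fin 3 → Set V} {π : Fin 3 → W}
  {i j : Fin 3} {u : V}

theorem cornerPart_subset (hv : Function.Injective v) (hi : v i ∈ S) :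
    cornerPart G S v i ⊆ S \ v '' {i}ᶜ :=
  component_subset ⟨hi, fun ⟨_, hj, hji⟩ => hj (hv hji)⟩

theorem corner_notMem_cornerPart (hv : Function.Injective v) (hi : v i ∈ S) (hji : j ≠ i) :
    v j ∉ cornerPart G S v i :=
  fun hj => (cornerPart_subset hv hi hj).2 ⟨j, hji, rfl⟩

theorem exists_mem_cornerPart (hS : ConnectedOn G S) (hv : ∀ i, v i ∈ S) (hu : u ∈ S) :
    ∃ i, u ∈ cornerPart G S v i := by
  refine hS.subset_of_closed (P := {u | ∃ i, u ∈ cornerPart G S v i}) (hv 0) ?_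
    ⟨0, mem_component_self _⟩ hu
  rintro c - d hd hcd ⟨i, hc⟩
  by_cases hdi : d ∈ v '' {i}ᶜ
  · obtain ⟨j, -, rfl⟩ := hdi
    exact ⟨j, mem_component_self _⟩
  · exact ⟨i, mem_component_of_adj hc hcd ⟨hd, hdi⟩⟩

theorem IsModel.exists_linked_cornerPart (hM : IsModel K G M) (hv : ∀ i, v i ∈ M w₀) {w : W}
    (hw : K.Adj w₀ w) : ∃ i, Linked G (cornerPart G (M w₀) v i) (M w) := by
  obtain ⟨a, ha, b, hb, hab⟩ := hM.linked hw
  obtain ⟨i, hi⟩ := exists_mem_cornerPart (hM.connected w₀) hv ha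
  exact ⟨i, a, hi, b, hb, hab⟩

namespace IsCubicTriangle

theorem foot_mem_cornerPart (h : IsCubicTriangle G v x) (hi : v i ∈ S)
    (hu : u ∈ cornerPart G S v i) (hui : u ≠ v i) : x i ∈ cornerPart G S v i := by
  obtain ⟨_, -, d, hd, rfl, hdi, hcd⟩ :=
    (connectedOn_component (v i)).exists_adj (P := {v i}) (mem_component_self _) hu rfl hui
  rcases h.eq_of_adj hcd with rfl | ⟨j, rfl⟩
  · exact hd
  · exact absurd hd (corner_notMem_cornerPart h.injective hi fun hji => hdi (hji ▸ rfl))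

theorem cornerPart_sdiff_subset (h : IsCubicTriangle G v x) (hi : v i ∈ S) (hj : v j ∈ S)
    (hij : i ≠ j) (hui : u ∈ cornerPart G S v i) (huj : u ∈ cornerPart G S v j) :
    cornerPart G S v i \ {v i} ⊆ cornerPart G S v j := by
  have hne : u ≠ v i := fun hu => corner_notMem_cornerPart h.injective hj hij (hu ▸ huj)
  have hconn : ConnectedOn G (cornerPart G S v i \ {v i}) := by
    refine (connectedOn_component (v i)).sdiff_singleton_of_forall_adj
      (h.foot_mem_cornerPart hi hui hne) (h.foot_ne i i) fun b hb hib => ?_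
    refine (h.eq_of_adj hib).resolve_right ?_
    rintro ⟨k, rfl⟩
    exact corner_notMem_cornerPart h.injective hi (fun hki => hib.ne (congrArg v hki.symm)) hb
  refine hconn.subset_component (fun b hb => ?_) ⟨hui, hne⟩ huj
  refine ⟨(cornerPart_subset h.injective hi hb.1).1, ?_⟩
  rintro ⟨k, -, rfl⟩
  exact corner_notMem_cornerPart h.injective hi (fun hki => hb.2 (congrArg v hki)) hb.1

open Classical in
theorem exists_private (h : IsCubicTriangle G v x) (hmin : ∀ u, ¬ IsMinor K (G.induce {u}ᶜ))
    (hM : IsModel K G M) (hv : ∀ i, v i ∈ M w₀) (k : Fin 3) :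
    ∃ w, K.Adj w₀ w ∧ Linked G (cornerPart G (M w₀) v k) (M w) ∧
      ∀ i, Linked G (cornerPart G (M w₀) v i) (M w) → i = k := by
  suffices ∃ w, K.Adj w₀ w ∧ ∀ i, Linked G (cornerPart G (M w₀) v i) (M w) → i = k by
    obtain ⟨w, hw, huniq⟩ := this
    obtain ⟨i, hi⟩ := hM.exists_linked_cornerPart hv hw
    exact ⟨w, hw, huniq i hi ▸ hi, huniq⟩
  by_contra! hcon
  have hconn : ConnectedOn G (⋃ i ∈ ({k}ᶜ : Set (Fin 3)), cornerPart G (M w₀) v i) :=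
    (ConnectedOn.top (Set.nonempty_compl_of_nontrivial k)).biUnion
      (fun i _ => connectedOn_component (v i)) fun i _ j _ hij =>
        ⟨v i, mem_component_self _, v j, mem_component_self _, h.adj hij⟩
  have hsub : ∀ u ∈ ⋃ i ∈ ({k}ᶜ : Set (Fin 3)), cornerPart G (M w₀) v i, u ∈ M w₀ ∧ u ≠ v k := by
    intro u hu
    obtain ⟨i, hik, hu⟩ := Set.mem_iUnion₂.1 hu
    refine ⟨(cornerPart_subset h.injective (hv i) hu).1, ?_⟩
    rintro rfl
    exact corner_notMem_cornerPart h.injective (hv i) (Ne.symm hik) hu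
  refine hmin (v k) (isMinor_induce_iff.2 ⟨_, hM.update hconn
    (fun w hw u hu => hM.notMem (hsub u hu).1 hw.symm) fun w hw => ?_, fun w u hu => ?_⟩)
  · obtain ⟨i, hi, hik⟩ := hcon w hw
    exact hi.mono (Set.subset_biUnion_of_mem (u := cornerPart G (M w₀) v) hik) subset_rfl
  · rcases eq_or_ne w w₀ with rfl | hw
    · rw [Function.update_self] at hu
      exact (hsub u hu).2
    · rw [Function.update_of_ne hw] at hu
      rintro rfl
      exact hM.notMem (hv k) hw.symm hu

theorem exists_isTripod (h : IsCubicTriangle G v x) (hmin : ∀ u, ¬ IsMinor K (G.induce {u}ᶜ))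
    (hM : IsModel K G M) (hv : ∀ i, v i ∈ M w₀) :
    ∃ π, IsTripod K G M w₀ (cornerPart G (M w₀) v) π := by
  choose π hadj hlinked huniq using h.exists_private hmin hM hv
  refine ⟨π, ⟨hM, ⟨fun i => connectedOn_component (v i), ?_, fun {i j} hij =>
    ⟨v i, mem_component_self _, v j, mem_component_self _, h.adj hij⟩⟩,
    fun i => (cornerPart_subset h.injective (hv i)).trans Set.sdiff_subset, hadj, ?_, hlinked,
    hM.exists_linked_cornerPart hv⟩⟩
  · intro i j u hui huj
    by_contra hij
    obtain ⟨a, ha, b, hb, hab⟩ := hlinked i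
    rcases eq_or_ne a (v i) with rfl | hai
    · have hb₀ : b ∉ M w₀ := hM.notMem hb (hadj i).ne'
      have hne : u ≠ v i := fun hu => corner_notMem_cornerPart h.injective (hv j) hij (hu ▸ huj)
      rcases h.eq_of_adj hab with rfl | ⟨k, rfl⟩
      · exact hb₀ (cornerPart_subset h.injective (hv i)
          (h.foot_mem_cornerPart (hv i) hui hne)).1
      · exact hb₀ (hv k)
    · exact hij (huniq i j ⟨a, h.cornerPart_sdiff_subset (hv i) (hv j) hij hui huj ⟨ha, hai⟩,
        b, hb, hab⟩).symm
  · exact fun i j hij => huniq j i (hij ▸ hlinked i)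

end IsCubicTriangle

open Classical in
theorem IsModel.isMinor_split {H : SimpleGraph (W ⊕ Fin 2)} (hM : IsModel K G M)
    (hT : IsModel (⊤ : SimpleGraph (Fin 3)) G T) (hTM : ∀ i, T i ⊆ M w₀)
    (hHK : ∀ a b, H.Adj (.inl a) (.inl b) → K.Adj a b)
    (hzero : ∀ a, H.Adj (.inl w₀) (.inl a) → Linked G (T 0) (M a))
    (hsucc : ∀ a k, a ≠ w₀ → H.Adj (.inl a) (.inr k) → Linked G (M a) (T k.succ)) :
    IsMinor H G := by
  have hN : IsModel (H.comap Sum.inl) G (Function.update M w₀ (T 0)) :=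
    (hM.comap Function.injective_id hHK).update (hT.connected 0)
      (fun w hw v hv => hM.notMem (hTM 0 hv) hw.symm) hzero
  have hdisj : ∀ w (k : Fin 2) v, v ∈ Function.update M w₀ (T 0) w → v ∉ T k.succ := by
    intro w k v hv hvk
    rcases eq_or_ne w w₀ with rfl | hw
    · rw [Function.update_self] at hv
      exact (Fin.succ_ne_zero k).symm (hT.eq_of_mem hv hvk)
    · rw [Function.update_of_ne hw] at hv
      exact hM.notMem hv hw (hTM _ hvk)
  have hlink : ∀ a k, H.Adj (.inl a) (.inr k) →
      Linked G (Function.update M w₀ (T 0) a) (T k.succ) := by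
    intro a k hak
    rcases eq_or_ne a w₀ with rfl | ha
    · rw [Function.update_self]
      exact hT.linked (Fin.succ_ne_zero k).symm
    · rw [Function.update_of_ne ha]
      exact hsucc a k ha hak
  refine isMinor_iff_exists_isModel.2 ⟨Sum.elim (Function.update M w₀ (T 0)) fun k => T k.succ,
    Sum.rec hN.connected fun k => hT.connected k.succ, ?_, ?_⟩
  · rintro (a | k) (b | l) u hu hu'
    · exact congrArg Sum.inl (hN.eq_of_mem hu hu')
    · exact absurd hu' (hdisj a l u hu)
    · exact absurd hu (hdisj b k u hu')
    · exact congrArg Sum.inr (Fin.succ_injective _ (hT.eq_of_mem hu hu'))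
  · rintro (a | k) (b | l) hab
    · exact hN.linked hab
    · exact hlink a l hab
    · exact (hlink b k hab.symm).symm
    · exact hT.linked fun hkl => hab.ne (congrArg Sum.inr (Fin.succ_injective _ hkl))

namespace IsTripod

theorem comp_perm (h : IsTripod K G M w₀ T π) (σ : Equiv.Perm (Fin 3)) :
    IsTripod K G M w₀ (T ∘ σ) (π ∘ σ) where
  model := h.model
  parts := h.parts.comap σ.injective fun _ _ hab => σ.injective.ne hab
  subset i := h.subset (σ i)
  adj i := h.adj (σ i)
  injective := h.injective.comp σ.injective
  linked i := h.linked (σ i)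
  exists_linked hw := by
    obtain ⟨i, hi⟩ := h.exists_linked hw
    exact ⟨σ.symm i, by rwa [Function.comp_apply, σ.apply_symm_apply]⟩

theorem isMinor_K33h {M : Fin 3 ⊕ Fin 3 → Set V} {π : Fin 3 → Fin 3 ⊕ Fin 3}
    (h : IsTripod K33 G M (.inl 0) T π) : IsMinor K33h G := by
  have hinr : ∀ i, ∃ j, π i = .inr j := fun i => by
    have hadj := h.adj i
    rcases hπ : π i with j | j
    · simp [hπ, K33] at hadj
    · exact ⟨j, rfl⟩
  choose τ hτ using hinr
  have hτinj : Function.Injective τ := fun i j hij => h.injective (by rw [hτ, hτ, hij])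
  let e := Equiv.ofBijective τ (Finite.injective_iff_bijective.1 hτinj)
  have h' := h.comp_perm ((Equiv.addRight 2).trans e.symm)
  have hlinked : ∀ i, Linked G ((T ∘ (Equiv.addRight 2).trans e.symm) i) (M (.inr (i + 2))) := by
    intro i
    have hi : (π ∘ (Equiv.addRight 2).trans e.symm) i = .inr (i + 2) :=
      (hτ _).trans (congrArg Sum.inr (e.apply_symm_apply _))
    exact hi ▸ h'.linked i
  refine h.model.isMinor_split h'.parts h'.subset ?_ ?_ ?_
  · rintro (a | a) (b | b) <;> simp [K33h, K33]
  · rintro (a | a) hadj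
    · simp [K33h] at hadj
    · obtain rfl : a = 2 := by
        revert hadj
        fin_cases a <;> simp [K33h]
      exact hlinked 0
  · rintro (a | a) k ha hadj
    · exact absurd hadj (by fin_cases k <;> simp_all [K33h])
    · obtain rfl : a = k.succ + 2 := by
        revert hadj
        fin_cases a <;> fin_cases k <;> simp [K33h]
      exact (hlinked k.succ).symm

theorem isMinor_K5h {M : Fin 5 → Set V} {w₀ : Fin 5} {π : Fin 3 → Fin 5}
    (h : IsTripod K5 G M w₀ T π) : IsMinor K5h G := by
  obtain ⟨w₄, hw₀, hw₄⟩ : ∃ w₄, w₄ ≠ w₀ ∧ ∀ i, w₄ ≠ π i := by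
    obtain ⟨f, hf, hfπ⟩ := exists_injective_notMem_range π
    by_cases hf0 : f 0 = w₀
    · exact ⟨f 1, fun hf1 => hf.ne zero_ne_one (hf0.trans hf1.symm), fun i => (hfπ i 1).symm⟩
    · exact ⟨f 0, hf0, fun i => (hfπ i 0).symm⟩
  obtain ⟨i, hi⟩ := h.exists_linked (w := w₄) hw₀.symm
  have h' := h.comp_perm (Equiv.swap 0 i)
  set π' := π ∘ Equiv.swap 0 i
  have hπ' : ∀ i, π' i ≠ w₀ ∧ π' i ≠ w₄ := fun i => ⟨(h'.adj i).ne', (hw₄ _).symm⟩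
  have hq : Function.Injective ![w₀, π' 1, π' 2, π' 0, w₄] := by
    have h01 : π' 0 ≠ π' 1 := h'.injective.ne (by decide)
    have h02 : π' 0 ≠ π' 2 := h'.injective.ne (by decide)
    have h12 : π' 1 ≠ π' 2 := h'.injective.ne (by decide)
    intro a b
    fin_cases a <;> fin_cases b <;> simp [*, hw₀.symm, Ne.symm]
  have hzero : Linked G ((T ∘ Equiv.swap 0 i) 0) (M w₄) := by
    rwa [Function.comp_apply, Equiv.swap_apply_left]
  refine (h.model.comap (K' := K5) hq fun a b hab => hq.ne hab).isMinor_split (w₀ := 0)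
    h'.parts h'.subset ?_ ?_ ?_
  · simp +contextual [K5h, K5]
  · intro a hadj
    fin_cases a
    · exact absurd rfl hadj.ne
    · simp [K5h] at hadj
    · simp [K5h] at hadj
    · exact h'.linked 0
    · exact hzero
  · intro a k ha hadj
    obtain ⟨rfl, rfl⟩ | ⟨rfl, rfl⟩ : (k = 0 ∧ a = 1) ∨ (k = 1 ∧ a = 2) := by
      revert hadj
      simp [K5h, ha]
    · exact (h'.linked 1).symm
    · exact (h'.linked 2).symm

end IsTripod

theorem IsCubicTriangle.planar_induce_addClique (h : IsCubicTriangle G v x) {B : Set V}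
    (hvB : ∀ i, v i ∉ B) (hmin : ∀ S : Set V, ¬ Planar (G.induce S) → S = Set.univ)
    (h5 : ¬ IsMinor K5h G) (h33 : ¬ IsMinor K33h G) :
    Planar ((addClique G (Set.range x)).induce B) := by
  have hproper : ∀ S : Set V, S ≠ Set.univ → Planar (G.induce S) := fun S hS => by
    by_contra hnp
    exact hS (hmin S hnp)
  have hdelete : ∀ u, Planar (G.induce {u}ᶜ) := fun u =>
    hproper _ fun hu => Set.singleton_ne_empty u (Set.compl_univ_iff.1 hu)
  have hB : Planar (G.induce B) := hproper B (Set.ne_univ_iff_exists_notMem B |>.2 ⟨v 0, hvB 0⟩)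
  have hY : ConnectedOn G (Set.range v) := by
    have hv := ConnectedOn.top (Set.univ_nonempty (α := Fin 3))
    rw [← Set.image_univ]
    exact hv.image ⟨v, fun hij => h.adj hij⟩
  by_contra hBx
  rcases hasModelThrough_of_not_planar hB hBx hY (Set.forall_mem_range.2 hvB)
    (Set.forall_mem_range.2 fun i => ⟨v i, Set.mem_range_self i, (h.adj_foot i).symm⟩) with
    ⟨M, hM, -, w₀, hw₀⟩ | ⟨M, hM, -, w₀, hw₀⟩
  · obtain ⟨π, hπ⟩ := h.exists_isTripod (fun u => (hdelete u).1) hM (Set.range_subset_iff.1 hw₀)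
    exact h5 hπ.isMinor_K5h
  · obtain ⟨f, rfl⟩ := exists_iso_K33 w₀
    obtain ⟨π, hπ⟩ := h.exists_isTripod (fun u => (hdelete u).2)
      (hM.comap f.injective fun _ _ => f.map_adj_iff.2) (Set.range_subset_iff.1 hw₀)
    exact h33 hπ.isMinor_K33h

end CubicTriangle

/-! ### Minimal lobes are fans or cubic triangles -/

/-- `w` is a non-cut vertex of the subgraph induced by `W`. -/
def IsNoncut {V : Type*} (G : SimpleGraph V) (W : Set V) (w : V) : Prop :=
  w ∈ W ∧ ConnectedOn G (W \ {w})

/-- `w` is the only neighbour of `x` in `W`. -/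
def IsSoleNeighbor {V : Type*} (G : SimpleGraph V) (W : Set V) (x w : V) : Prop :=
  ∀ v ∈ W, G.Adj x v ↔ v = w

/-- `W` is a union of components of `G - X`, for a set `X` of three vertices, and `W` is minimal
among the connected sets with neighbours at each vertex of `X`; moreover the vertices of `W` have
degree at least three. -/
structure IsMinimalLobe {V : Type*} (G : SimpleGraph V) (W X : Set V) : Prop where
  ncard_eq : X.ncard = 3
  notMem : ∀ {x}, x ∈ X → x ∉ W
  connected : ConnectedOn G W
  exists_adj : ∀ x ∈ X, ∃ w ∈ W, G.Adj x w
  mem_or_mem : ∀ {w a}, w ∈ W → G.Adj w a → a ∈ W ∨ a ∈ X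
  eq_of_subset : ∀ {W'}, W' ⊆ W → ConnectedOn G W' → (∀ x ∈ X, ∃ w ∈ W', G.Adj x w) → W' = W
  exists_third : ∀ w ∈ W, ∀ a b, ∃ c, G.Adj w c ∧ c ≠ a ∧ c ≠ b

/-- `p` is an induced path whose vertices are all adjacent to the hub `h`. The two further vertices
`s` and `t` have exactly one neighbour on `p` each, namely its first and its last vertex. -/
structure IsFan {V : Type*} {k : ℕ} (G : SimpleGraph V) (p : pathGraph (k + 1) ↪g G) (h s t : V) :
    Prop where
  injective : Function.Injective ![h, s, t]
  ne : ∀ i j, p i ≠ ![h, s, t] j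
  adj_hub : ∀ i, G.Adj (p i) h
  adj_start_iff : ∀ i, G.Adj s (p i) ↔ i = 0
  adj_end_iff : ∀ i, G.Adj t (p i) ↔ i = Fin.last k

section Lobe

variable {V : Type*} {G : SimpleGraph V} {W X : Set V} {u v w x y : V} {k : ℕ}

/-- The induced path obtained from `p` by adding a new first vertex `u`. -/
def consPath (p : pathGraph (k + 1) ↪g G) (u : V) (hu : u ∉ Set.range p)
    (hadj : ∀ i, G.Adj u (p i) ↔ i = 0) : pathGraph (k + 2) ↪g G where
  toFun := Fin.cons u p
  inj' := Fin.cons_injective_iff.2 ⟨hu, p.injective⟩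
  map_rel_iff' {i j} := by
    change G.Adj (Fin.cons (α := fun _ => V) u p i) (Fin.cons (α := fun _ => V) u p j) ↔ _
    refine Fin.cases ?_ (fun i => ?_) i <;> refine Fin.cases ?_ (fun j => ?_) j
    · simp
    · rw [Fin.cons_zero, Fin.cons_succ, hadj, pathGraph_adj, Fin.ext_iff]
      simp
    · rw [Fin.cons_zero, Fin.cons_succ, G.adj_comm, hadj, pathGraph_adj, Fin.ext_iff]
      simp
    · simp [pathGraph_adj]

theorem IsNoncut.of_adj (hu : u ∈ W) (hw : IsNoncut G (W \ {u}) w) (hx : x ∈ W) (hxw : x ≠ w)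
    (hux : G.Adj u x) : IsNoncut G W w := by
  obtain ⟨⟨hwW, hwu⟩, hconn⟩ := hw
  refine ⟨hwW, ?_⟩
  have hins := hconn.insert (b := x) ⟨⟨hx, hux.ne'⟩, hxw⟩ hux
  rwa [Set.sdiff_sdiff_comm, Set.insert_sdiff_singleton,
    Set.insert_eq_of_mem (Set.mem_sdiff_singleton.2 ⟨hu, Ne.symm hwu⟩)] at hins

theorem exists_isNoncut_ne [Finite V] (hW : ConnectedOn G W) (hu : u ∈ W) (hne : W ≠ {u}) :
    ∃ w, IsNoncut G W w ∧ w ≠ u := by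
  obtain ⟨w, hw, hwu, hconn⟩ := hW.exists_sdiff_singleton (.singleton u)
    ((Set.singleton_subset_iff.2 hu).ssubset_of_ne hne.symm)
  exact ⟨w, ⟨hw, hconn⟩, hwu⟩

theorem IsSoleNeighbor.eq (hw : IsSoleNeighbor G W x w) (hv : IsSoleNeighbor G W x v)
    (hwW : w ∈ W) : w = v :=
  (hv w hwW).1 ((hw w hwW).2 rfl)

theorem IsNoncut.exists_isSoleNeighbor [Finite V] (hu : IsNoncut G W u) (hW : ConnectedOn G W)
    (hv : v ∈ W) (hvu : v ≠ u) (h : ∀ w, IsNoncut G W w → w = u ∨ w = v) :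
    ∃ c ∈ W, IsSoleNeighbor G W u c ∧ ∀ w, IsNoncut G (W \ {u}) w → w = c ∨ w = v := by
  have huniq : ∀ w, IsNoncut G (W \ {u}) w → w ≠ v → ∀ d ∈ W, G.Adj u d → d = w := by
    intro w hw hwv d hd hud
    by_contra hdw
    rcases h w (.of_adj hu.1 hw hd hdw hud) with rfl | rfl
    · exact hw.1.2 rfl
    · exact hwv rfl
  obtain ⟨a, -, c, hc, rfl, -, huc⟩ := hW.exists_adj (P := {u}) hu.1 hv rfl hvu
  suffices hc' : ∀ d ∈ W, G.Adj a d → d = c from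
    ⟨c, hc, fun d hd => ⟨hc' d hd, fun hdc => hdc ▸ huc⟩, fun w hw =>
      or_iff_not_imp_right.2 fun hwv => (huniq w hw hwv c hc huc).symm⟩
  by_cases hWv : W \ {a} = {v}
  · have hmem : ∀ d ∈ W, G.Adj a d → d = v := fun d hd had =>
      hWv.subset (show d ∈ W \ {a} from ⟨hd, had.ne'⟩)
    exact fun d hd had => (hmem d hd had).trans (hmem c hc huc).symm
  · obtain ⟨w, hw, hwv⟩ := exists_isNoncut_ne hu.2 (show v ∈ W \ {a} from ⟨hv, hvu⟩) hWv
    exact fun d hd had => (huniq w hw hwv d hd had).trans (huniq w hw hwv c hc huc).symm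

theorem exists_pathGraph_embedding [Finite V] (hW : ConnectedOn G W) (hu : u ∈ W) (hv : v ∈ W)
    (h : ∀ w, IsNoncut G W w → w = u ∨ w = v) :
    ∃ k, ∃ p : pathGraph (k + 1) ↪g G, Set.range p = W ∧ p 0 = u ∧ p (Fin.last k) = v := by
  induction W using WellFoundedLT.induction generalizing u with
  | ind W ih =>
  by_cases hWv : W = {v}
  · obtain rfl : u = v := by rwa [hWv] at hu
    exact ⟨0, ⟨⟨fun _ => u, fun i j _ => Subsingleton.elim (α := Fin 1) i j⟩,
      by simp [pathGraph_adj]⟩, hWv ▸ Set.range_const, rfl, rfl⟩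
  obtain ⟨w, hw, hwv⟩ := exists_isNoncut_ne hW hv hWv
  obtain rfl : u = w := ((h w hw).resolve_right hwv).symm
  obtain ⟨c, hc, hsole, hends⟩ := hw.exists_isSoleNeighbor hW hv hwv.symm h
  have huc : G.Adj u c := (hsole c hc).2 rfl
  obtain ⟨k, p, hp, hp0, hpk⟩ := ih (W \ {u}) (Set.sdiff_singleton_ssubset.2 hu) hw.2
    (u := c) ⟨hc, huc.ne'⟩ ⟨hv, hwv.symm⟩ hends
  have hadj : ∀ i, G.Adj u (p i) ↔ i = 0 := fun i => by
    rw [hsole _ (hp.subset (Set.mem_range_self i)).1, ← hp0, p.injective.eq_iff]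
  refine ⟨k + 1, consPath p u (fun hu' => (hp.subset hu').2 rfl) hadj, ?_, rfl, hpk⟩
  change Set.range (Fin.cons (α := fun _ => V) u p) = W
  rw [Fin.range_cons, hp, Set.insert_sdiff_singleton, Set.insert_eq_of_mem hu]

namespace IsMinimalLobe

theorem exists_isSoleNeighbor (h : IsMinimalLobe G W X) (hw : IsNoncut G W w) :
    ∃ x ∈ X, IsSoleNeighbor G W x w := by
  by_contra! hcon
  refine (h.eq_of_subset Set.sdiff_subset hw.2 fun x hx => ?_).ge hw.1 |>.2 rfl
  by_contra! hno
  have huniq : ∀ v ∈ W, G.Adj x v → v = w := fun v hv hxv =>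
    by_contra fun hvw => hno v ⟨hv, hvw⟩ hxv
  obtain ⟨v, hv, hxv⟩ := h.exists_adj x hx
  obtain rfl := huniq v hv hxv
  refine hcon x hx fun u hu => ⟨huniq u hu, ?_⟩
  rintro rfl
  exact hxv

section Corners

variable {c f : Fin 3 → V} {i j : Fin 3}

theorem range_eq_of_isSoleNeighbor [Finite V] (h : IsMinimalLobe G W X) (hc : Function.Injective c)
    (hcW : ∀ i, c i ∈ W) (hfX : ∀ i, f i ∈ X) (hf : ∀ i, IsSoleNeighbor G W (f i) (c i)) :
    Set.range f = X := by
  have hinj : Function.Injective f := fun i j hij => hc ((hf i).eq (hij ▸ hf j) (hcW i))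
  refine Set.eq_of_subset_of_ncard_le (Set.range_subset_iff.2 hfX) ?_
  rw [h.ncard_eq, Set.ncard_range_of_injective hinj, Nat.card_fin]

theorem mem_of_adj_corner [Finite V] (h : IsMinimalLobe G W X) (hc : Function.Injective c)
    (hcW : ∀ i, c i ∈ W) (hfX : ∀ i, f i ∈ X) (hf : ∀ i, IsSoleNeighbor G W (f i) (c i))
    (hv : G.Adj (c i) v) (hvf : v ≠ f i) : v ∈ W := by
  refine (h.mem_or_mem (hcW i) hv).resolve_right fun hvX => hvf ?_
  obtain ⟨j, rfl⟩ := (h.range_eq_of_isSoleNeighbor hc hcW hfX hf).ge hvX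
  rw [hc ((hf j _ (hcW i)).1 hv.symm)]

theorem adj_corners [Finite V] (h : IsMinimalLobe G W X) (hc : Function.Injective c)
    (hnc : ∀ i, IsNoncut G W (c i)) (hfX : ∀ i, f i ∈ X)
    (hf : ∀ i, IsSoleNeighbor G W (f i) (c i)) (hij : i ≠ j) : G.Adj (c i) (c j) := by
  have hcW : ∀ i, c i ∈ W := fun i => (hnc i).1
  obtain ⟨l, hlj, hl⟩ : ∃ l : Fin 3, l ≠ j ∧ ∀ m, m = j ∨ m = i ∨ m = l := by
    revert i j
    decide
  have hends : ∀ s, IsNoncut G (W \ {c j}) s → s = c i ∨ s = c l := by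
    intro s hs
    obtain ⟨d, hd, hdf, hds⟩ := h.exists_third (c j) (hcW j) (f j) s
    have hsW := hs.of_adj (hcW j) (h.mem_of_adj_corner hc hcW hfX hf hd hdf) hds hd
    obtain ⟨x, hx, hxs⟩ := h.exists_isSoleNeighbor hsW
    obtain ⟨m, rfl⟩ := (h.range_eq_of_isSoleNeighbor hc hcW hfX hf).ge hx
    obtain rfl := (hf m).eq hxs (hcW m)
    rcases hl m with rfl | rfl | rfl
    · exact absurd rfl hs.1.2
    · exact Or.inl rfl
    · exact Or.inr rfl
  obtain ⟨k, p, hp, hp0, -⟩ := exists_pathGraph_embedding (hnc j).2 (u := c i) (v := c l)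
    ⟨hcW i, hc.ne hij⟩ ⟨hcW l, hc.ne hlj⟩ hends
  have honpath : ∀ d, G.Adj (c i) d → d ≠ f i → d ≠ c j → ∃ m, p m = d ∧ m.val = 1 := by
    intro d hd hdf hdj
    obtain ⟨m, rfl⟩ := hp.ge ⟨h.mem_of_adj_corner hc hcW hfX hf hd hdf, hdj⟩
    rw [← hp0, p.map_adj_iff, pathGraph_adj] at hd
    exact ⟨m, rfl, by simpa [eq_comm] using hd⟩
  by_contra hadj
  obtain ⟨d, hd, hdf, -⟩ := h.exists_third (c i) (hcW i) (f i) (f i)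
  obtain ⟨e, he, hef, hed⟩ := h.exists_third (c i) (hcW i) (f i) d
  obtain ⟨m, rfl, hm⟩ := honpath d hd hdf fun hdj => hadj (hdj ▸ hd)
  obtain ⟨n, rfl, hn⟩ := honpath e he hef fun hej => hadj (hej ▸ he)
  exact hed (congrArg p (Fin.ext (hn.trans hm.symm)))

theorem exists_isCubicTriangle [Finite V] (h : IsMinimalLobe G W X) (hc : Function.Injective c)
    (hnc : ∀ i, IsNoncut G W (c i)) :
    ∃ f, Set.range f = X ∧ IsCubicTriangle G c f := by
  choose f hfX hf using fun i => h.exists_isSoleNeighbor (hnc i)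
  have hcW : ∀ i, c i ∈ W := fun i => (hnc i).1
  have hrange : Set.range c = W := by
    refine h.eq_of_subset (Set.range_subset_iff.2 hcW) ?_ ?_
    · rw [← Set.image_univ]
      exact (ConnectedOn.top Set.univ_nonempty).image
        ⟨c, fun hij => h.adj_corners hc hnc hfX hf hij⟩
    · rw [← h.range_eq_of_isSoleNeighbor hc hcW hfX hf]
      rintro _ ⟨i, rfl⟩
      exact ⟨c i, Set.mem_range_self i, (hf i _ (hcW i)).2 rfl⟩
  refine ⟨f, h.range_eq_of_isSoleNeighbor hc hcW hfX hf, hc, h.adj_corners hc hnc hfX hf,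
    fun i => ((hf i _ (hcW i)).2 rfl).symm, fun i j hij => h.notMem (hfX i) (hij ▸ hcW j), ?_⟩
  intro i a ha
  refine or_iff_not_imp_left.2 fun haf => ?_
  obtain ⟨j, rfl⟩ := hrange.ge (h.mem_of_adj_corner hc hcW hfX hf ha haf)
  exact ⟨j, rfl⟩

end Corners

theorem exists_ends [Finite V] (h : IsMinimalLobe G W X)
    (hnc : ¬ ∃ c : Fin 3 → V, Function.Injective c ∧ ∀ i, IsNoncut G W (c i)) :
    ∃ u ∈ W, ∃ v ∈ W, (∀ w, IsNoncut G W w → w = u ∨ w = v) ∧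
      ∃ s ∈ X, ∃ t ∈ X, s ≠ t ∧ IsSoleNeighbor G W s u ∧ IsSoleNeighbor G W t v := by
  obtain ⟨a, ha⟩ := h.connected.nonempty
  by_cases hWa : W = {a}
  · have hsole : ∀ x ∈ X, IsSoleNeighbor G W x a := by
      intro x hx v hv
      obtain ⟨w, hw, hxw⟩ := h.exists_adj x hx
      rw [hWa, Set.mem_singleton_iff] at hv hw
      simpa [hv] using hw ▸ hxw
    obtain ⟨s, t, hs, ht, hst⟩ := (Set.one_lt_ncard_iff (Set.toFinite X)).1
      (h.ncard_eq ▸ (by norm_num : 1 < 3))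
    exact ⟨a, ha, a, ha, fun w hw => Or.inl (hWa.subset hw.1), s, hs, t, ht, hst,
      hsole s hs, hsole t ht⟩
  · obtain ⟨u, hu, -⟩ := exists_isNoncut_ne h.connected ha hWa
    have hWu : W ≠ {u} := by
      rintro rfl
      exact hWa (congrArg _ (Set.mem_singleton_iff.1 ha).symm)
    obtain ⟨v, hv, hvu⟩ := exists_isNoncut_ne h.connected hu.1 hWu
    obtain ⟨s, hs, hsu⟩ := h.exists_isSoleNeighbor hu
    obtain ⟨t, ht, htv⟩ := h.exists_isSoleNeighbor hv
    refine ⟨u, hu.1, v, hv.1, fun w hw => ?_, s, hs, t, ht, ?_, hsu, htv⟩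
    · by_contra! hne
      refine hnc ⟨![u, v, w], ?_, ?_⟩
      · intro i j
        fin_cases i <;> fin_cases j <;> simp [hvu, hvu.symm, hne.1, hne.2, hne.1.symm, hne.2.symm]
      · intro i
        fin_cases i <;> assumption
    · rintro rfl
      exact hvu (htv.eq hsu hv.1)

theorem adj_hub {k : ℕ} {p : pathGraph (k + 1) ↪g G} {b s t : V} (h : IsMinimalLobe G W X)
    (hp : Set.range p = W) (hX : X = {b, s, t}) (hstart : ∀ i, G.Adj s (p i) ↔ i = 0)
    (hend : ∀ i, G.Adj t (p i) ↔ i = Fin.last k) (i : Fin (k + 1)) : G.Adj (p i) b := by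
  have hpW : p i ∈ W := hp.subset (Set.mem_range_self i)
  obtain ⟨d, hd, hprev, hnext⟩ := h.exists_third (p i) hpW
    (Fin.cons (α := fun _ => V) s p i.castSucc) (Fin.snoc (α := fun _ => V) p t i.succ)
  rcases h.mem_or_mem hpW hd with hdW | hdX
  · obtain ⟨j, rfl⟩ := hp.ge hdW
    rw [p.map_adj_iff, pathGraph_adj] at hd
    rcases hd with hij | hji
    · refine absurd ?_ hnext
      rw [show i.succ = j.castSucc from Fin.ext hij, Fin.snoc_castSucc]
    · refine absurd ?_ hprev
      rw [show i.castSucc = j.succ from Fin.ext hji.symm, Fin.cons_succ]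
  · rw [hX] at hdX
    rcases hdX with rfl | rfl | rfl
    · exact hd
    · obtain rfl := (hstart i).1 hd.symm
      exact absurd rfl hprev
    · obtain rfl := (hend i).1 hd.symm
      exact absurd (by rw [Fin.succ_last, Fin.snoc_last]) hnext

theorem exists_isFan [Finite V] (h : IsMinimalLobe G W X)
    (hnc : ¬ ∃ c : Fin 3 → V, Function.Injective c ∧ ∀ i, IsNoncut G W (c i)) :
    ∃ (k : ℕ) (p : pathGraph (k + 1) ↪g G) (b s t : V),
      Set.range p = W ∧ Set.range ![b, s, t] = X ∧ IsFan G p b s t := by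
  obtain ⟨u, hu, v, hv, hends, s, hs, t, ht, hst, hsu, htv⟩ := h.exists_ends hnc
  obtain ⟨b, hb⟩ : ∃ b, X \ {s, t} = {b} := by
    rw [← Set.ncard_eq_one, Set.ncard_sdiff (Set.pair_subset hs ht), h.ncard_eq,
      Set.ncard_pair hst]
  have hX : X = {b, s, t} := by
    rw [← Set.sdiff_union_of_subset (Set.pair_subset hs ht), hb, Set.singleton_union]
  obtain ⟨k, p, hp, rfl, rfl⟩ := exists_pathGraph_embedding h.connected hu hv hends
  have hpW : ∀ i, p i ∈ W := fun i => hp.subset (Set.mem_range_self i)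
  have hstart : ∀ i, G.Adj s (p i) ↔ i = 0 := fun i =>
    (hsu _ (hpW i)).trans p.injective.eq_iff
  have hend : ∀ i, G.Adj t (p i) ↔ i = Fin.last k := fun i =>
    (htv _ (hpW i)).trans p.injective.eq_iff
  have hbst : b ∉ ({s, t} : Set V) := (hb.ge rfl).2
  have hrange : Set.range ![b, s, t] = X := by
    simp only [Matrix.range_cons, Matrix.range_empty, Set.union_empty, Set.singleton_union, hX]
  refine ⟨k, p, b, s, t, hp, hrange, ⟨?_, fun i j hij => ?_, fun i => ?_, hstart, hend⟩⟩
  · rw [Set.mem_insert_iff, Set.mem_singleton_iff, not_or] at hbst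
    intro i j
    fin_cases i <;> fin_cases j <;> simp [hst, hst.symm, hbst, Ne.symm hbst.1, Ne.symm hbst.2]
  · exact h.notMem (hrange.le ⟨j, rfl⟩) (hij ▸ hpW i)
  · exact h.adj_hub hp hX hstart hend i

end IsMinimalLobe

end Lobe

/-! ### Fans complete to wheels -/

section Fan

theorem wheelGraph_adj_some_some {k : ℕ} {i j : Fin (k + 3)} :
    (wheelGraph (k + 3)).Adj (some i) (some j) ↔
      (pathGraph (k + 3)).Adj i j ∨ i = 0 ∧ j = Fin.last _ ∨ i = Fin.last _ ∧ j = 0 := by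
  have hmod : ∀ i : Fin (k + 3), (i.val + 1) % (k + 3) = if i.val = k + 2 then 0 else i.val + 1 :=
    fun i => by
      split_ifs with hi
      · simp [hi]
      · exact Nat.mod_eq_of_lt (by omega)
  simp only [wheelGraph, fromRel_adj, pathGraph_adj, hmod, ne_eq, Option.some_inj, Fin.ext_iff,
    Fin.val_zero, Fin.val_last]
  split_ifs <;> omega

variable {V : Type*} {G : SimpleGraph V} {k : ℕ} {p : pathGraph (k + 1) ↪g G} {h s t w : V}
  {F : SimpleGraph V} {S T W : Set V} {x : Fin 3 → V}

/-- Three disjoint, pairwise adjacent connected sets contain one vertex of `x` each and otherwise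
lie in `W`, so that contracting them turns `x` into a triangle. -/
def HasRootedTriangle {V : Type*} (G : SimpleGraph V) (W : Set V) (x : Fin 3 → V) : Prop :=
  ∃ C : Fin 3 → Set V, IsModel ⊤ G C ∧ ∀ i, x i ∈ C i ∧ C i ⊆ insert (x i) W

/-- The cyclic sequence of the vertices of a wheel other than its hub, obtained from the path `p` of
a fan by adding `s` in front and `t` at the end. -/
def fanRim (p : pathGraph (k + 1) ↪g G) (s t : V) : Fin (k + 3) → V :=
  Fin.cons s (Fin.snoc (α := fun _ => V) p t)

theorem fanRim_zero : fanRim p s t 0 = s := rfl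

theorem fanRim_last : fanRim p s t (Fin.last _) = t := by
  rw [fanRim, ← Fin.succ_last, Fin.cons_succ, Fin.snoc_last]

theorem fanRim_succ_castSucc (i : Fin (k + 1)) : fanRim p s t i.castSucc.succ = p i := by
  rw [fanRim, Fin.cons_succ, Fin.snoc_castSucc]

theorem forall_fanRim {P : Fin (k + 3) → Prop} (hs : P 0) (ht : P (Fin.last _))
    (hp : ∀ i : Fin (k + 1), P i.castSucc.succ) (i : Fin (k + 3)) : P i :=
  Fin.cases hs (fun i => Fin.lastCases ht hp i) i

theorem range_fanRim : Set.range (fanRim p s t) = insert s (insert t (Set.range p)) := by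
  rw [fanRim, Fin.range_cons, Fin.range_snoc]

theorem HasRootedTriangle.isMinor (h : HasRootedTriangle G W x) (hGF : G ≤ F) (hWS : Disjoint W S)
    (hST : S ⊆ T) (hxT : Set.range x ⊆ T) (hWT : W ⊆ T) :
    IsMinor ((addClique F (Set.range x)).induce S) (F.induce T) := by
  obtain ⟨C, hC, hCx⟩ := h
  have hCF : IsModel ⊤ F C :=
    ⟨fun i => (hC.connected i).mono fun _ _ _ _ hab => hGF hab, hC.eq_of_mem, fun hij =>
      let ⟨a, ha, b, hb, hab⟩ := hC.linked hij
      ⟨a, ha, b, hb, hGF hab⟩⟩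
  refine (isMinor_induce_addClique hCF (fun i => (hCx i).1) fun i v hv hvS => ?_).trans
    (isMinor_induce_mono (Set.union_subset hST (Set.iUnion_subset fun i => ?_))
      fun _ _ _ _ hab => hab)
  · exact ((hCx i).2 hv).resolve_right fun hvW => hWS.notMem_of_mem_left hvW hvS
  · exact (hCx i).2.trans (Set.insert_subset (hxT ⟨i, rfl⟩) hWT)

theorem hasRootedTriangle_of_adj {D : Fin 3 → Set V} {i j : Fin 3}
    (hD : IsModel (⊥ : SimpleGraph (Fin 3)) G D) (hx : ∀ i, x i ∈ D i ∧ D i ⊆ insert (x i) W)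
    (hw : w ∈ W) (hwD : ∀ i, w ∉ D i) (hadj : ∀ i, ∃ v ∈ D i, G.Adj w v) (hij : i ≠ j)
    (hlink : Linked G (D i) (D j)) : HasRootedTriangle G W x := by
  obtain ⟨l, hli, hlj, hl⟩ : ∃ l : Fin 3, l ≠ i ∧ l ≠ j ∧
      ∀ a b, a ≠ b → a = l ∨ b = l ∨ a = i ∧ b = j ∨ a = j ∧ b = i := by
    clear * - hij
    revert i j
    decide
  obtain ⟨v, hv, hwv⟩ := hadj l
  have hC := hD.update (w₀ := l) ((hD.connected l).insert hv hwv)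
    (fun m hm u hu hum => hu.elim (fun hu => hwD m (hu ▸ hum)) fun hu => hm (hD.eq_of_mem hum hu))
    fun _ h => h.elim
  set C := Function.update D l (insert w (D l))
  have hself : C l = insert w (D l) := Function.update_self ..
  have hof_ne : ∀ m ≠ l, C m = D m := fun m hm => Function.update_of_ne hm ..
  have hlinkl : ∀ m ≠ l, Linked G (C l) (C m) := fun m hm => by
    obtain ⟨u, hu, hwu⟩ := hadj m
    exact ⟨w, hself ▸ Set.mem_insert w _, u, hof_ne m hm ▸ hu, hwu⟩
  have hlinkij : Linked G (C i) (C j) := by rwa [hof_ne i hli.symm, hof_ne j hlj.symm]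
  refine ⟨C, ⟨hC.connected, hC.eq_of_mem, fun {a b} hab => ?_⟩, fun m => ?_⟩
  · rcases hl a b hab with rfl | rfl | ⟨rfl, rfl⟩ | ⟨rfl, rfl⟩
    · exact hlinkl b (Ne.symm hab)
    · exact (hlinkl a hab).symm
    · exact hlinkij
    · exact hlinkij.symm
  · rcases eq_or_ne m l with rfl | hm
    · rw [hself]
      exact ⟨.inr (hx m).1, Set.insert_subset (.inr hw) (hx m).2⟩
    · rw [hof_ne m hm]
      exact hx m

namespace IsFan

theorem hub_ne_start (hp : IsFan G p h s t) : h ≠ s :=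
  hp.injective.ne (show (0 : Fin 3) ≠ 1 by decide)

theorem hub_ne_end (hp : IsFan G p h s t) : h ≠ t :=
  hp.injective.ne (show (0 : Fin 3) ≠ 2 by decide)

theorem start_ne_end (hp : IsFan G p h s t) : s ≠ t :=
  hp.injective.ne (show (1 : Fin 3) ≠ 2 by decide)

theorem addClique_adj_iff (hp : IsFan G p h s t) (i : Fin (k + 1)) {v : V} :
    (addClique G (Set.range ![h, s, t])).Adj (p i) v ↔ G.Adj (p i) v := by
  rw [addClique_adj, or_iff_left]
  rintro ⟨-, ⟨j, hj⟩, -⟩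
  exact hp.ne i j hj.symm

theorem addClique_adj_fanRim (hp : IsFan G p h s t) (i j : Fin (k + 3)) :
    (addClique G (Set.range ![h, s, t])).Adj (fanRim p s t i) (fanRim p s t j) ↔
      (wheelGraph (k + 3)).Adj (some i) (some j) := by
  have hst : (addClique G (Set.range ![h, s, t])).Adj s t :=
    addClique_adj.2 (.inr ⟨hp.start_ne_end, ⟨1, rfl⟩, ⟨2, rfl⟩⟩)
  have hps : ∀ i, (addClique G (Set.range ![h, s, t])).Adj (p i) s ↔ i.val = 0 := fun i => by
    rw [hp.addClique_adj_iff, G.adj_comm, hp.adj_start_iff, Fin.ext_iff, Fin.val_zero]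
  have hpt : ∀ i, (addClique G (Set.range ![h, s, t])).Adj (p i) t ↔ i.val = k := fun i => by
    rw [hp.addClique_adj_iff, G.adj_comm, hp.adj_end_iff, Fin.ext_iff, Fin.val_last]
  have hpp : ∀ i j, (addClique G (Set.range ![h, s, t])).Adj (p i) (p j) ↔
      i.val + 1 = j ∨ j.val + 1 = i := fun i j => by
    rw [hp.addClique_adj_iff, p.map_adj_iff, pathGraph_adj]
  rw [wheelGraph_adj_some_some, pathGraph_adj]
  generalize addClique G (Set.range ![h, s, t]) = F at *
  have hsp := fun i => (F.adj_comm s (p i)).trans (hps i)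
  have htp := fun i => (F.adj_comm t (p i)).trans (hpt i)
  induction i using forall_fanRim <;> induction j using forall_fanRim <;>
    simp only [fanRim_zero, fanRim_last, fanRim_succ_castSucc, hps, hsp, hpt, htp, hpp, hst,
      hst.symm, SimpleGraph.irrefl, Fin.ext_iff, Fin.val_zero, Fin.val_last, Fin.val_succ,
      Fin.val_castSucc, false_iff, and_self, true_or, or_true] <;> omega

theorem fanRim_injective (hp : IsFan G p h s t) : Function.Injective (fanRim p s t) := by
  refine Fin.cons_injective_iff.2 ⟨?_, Fin.snoc_injective_iff.2 ⟨p.injective, ?_⟩⟩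
  · rw [Fin.range_snoc]
    rintro (hst | ⟨i, hi⟩)
    · exact hp.start_ne_end hst
    · exact hp.ne i 1 hi
  · rintro ⟨i, hi⟩
    exact hp.ne i 2 hi

theorem addClique_adj_hub_fanRim (hp : IsFan G p h s t) (i : Fin (k + 3)) :
    (addClique G (Set.range ![h, s, t])).Adj h (fanRim p s t i) := by
  induction i using forall_fanRim with
  | hs => exact addClique_adj.2 (.inr ⟨hp.hub_ne_start, ⟨0, rfl⟩, ⟨1, rfl⟩⟩)
  | ht =>
    rw [fanRim_last]
    exact addClique_adj.2 (.inr ⟨hp.hub_ne_end, ⟨0, rfl⟩, ⟨2, rfl⟩⟩)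
  | hp i => exact le_addClique (fanRim_succ_castSucc i ▸ (hp.adj_hub i).symm)

/-- The wheel formed by a fan and its three outer vertices, once these are made adjacent. -/
def wheelEmbedding (hp : IsFan G p h s t) :
    wheelGraph (k + 3) ↪g addClique G (Set.range ![h, s, t]) where
  toFun o := o.elim h (fanRim p s t)
  inj' := Option.injective_iff.2
    ⟨hp.fanRim_injective, fun ⟨i, hi⟩ => (hp.addClique_adj_hub_fanRim i).ne hi.symm⟩
  map_rel_iff' {a b} := by
    rcases a with _ | i <;> rcases b with _ | j
    · simp
    · exact iff_of_true (hp.addClique_adj_hub_fanRim j) (by simp [wheelGraph])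
    · exact iff_of_true (hp.addClique_adj_hub_fanRim i).symm (by simp [wheelGraph])
    · exact hp.addClique_adj_fanRim i j

theorem isWheel (hp : IsFan G p h s t) :
    IsWheel (deltaGraph G (Set.range p ∪ Set.range ![h, s, t]) (Set.range ![h, s, t])) := by
  have hrange : Set.range hp.wheelEmbedding = Set.range p ∪ Set.range ![h, s, t] := by
    change Set.range (fun o : Option (Fin (k + 3)) => o.elim h (fanRim p s t)) = _
    rw [Option.range_eq]
    change insert h (Set.range (fanRim p s t)) = _
    simp only [range_fanRim, Matrix.range_cons, Matrix.range_empty, Set.union_empty, Set.insert_eq]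
    ac_rfl
  rw [deltaGraph_eq, ← hrange]
  exact ⟨k + 3, by omega, ⟨hp.wheelEmbedding.isoInduceRange.symm⟩⟩

theorem hasRootedTriangle_of_pos (hp : IsFan G p h s t) (hk : k ≠ 0) :
    HasRootedTriangle G (Set.range p) ![h, s, t] := by
  obtain ⟨k, rfl⟩ := Nat.exists_eq_succ_of_ne_zero hk
  have hsucc : ConnectedOn G (Set.range (p ∘ Fin.succ)) :=
    .range (pathGraph_connected k)
      (p.toHom.comp ⟨Fin.succ, fun {i j} hij => by simpa [pathGraph_adj] using hij⟩)
  have hD := (IsModel.singleton (K := ⊥) (G := G) hp.injective fun _ _ h => h.elim).update (w₀ := 2)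
    (hsucc.insert ⟨Fin.last k, rfl⟩ ((hp.adj_end_iff _).2 rfl))
    (by
      rintro i hi v (rfl | ⟨j, rfl⟩) hvi
      · exact hi (hp.injective (a₁ := 2) hvi).symm
      · exact hp.ne _ i hvi)
    fun _ h => h.elim
  set D : Fin 3 → Set V := Function.update (fun i => {![h, s, t] i}) 2
    (insert t (Set.range (p ∘ Fin.succ)))
  have hx : ∀ i, ![h, s, t] i ∈ D i ∧ D i ⊆ insert (![h, s, t] i) (Set.range (p ∘ Fin.succ)) := by
    intro i
    fin_cases i
    · exact ⟨rfl, fun _ => .inl⟩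
    · exact ⟨rfl, fun _ => .inl⟩
    · exact ⟨Set.mem_insert t _, subset_rfl⟩
  have hp₁ : p (Fin.succ 0) ∈ D 2 := .inr ⟨0, rfl⟩
  refine hasRootedTriangle_of_adj (w := p 0) (i := 0) (j := 2) hD
    (fun i => (hx i).imp_right fun hi =>
      hi.trans (Set.insert_subset_insert (Set.range_comp_subset_range _ _)))
    ⟨0, rfl⟩ ?_ ?_ (by decide) ⟨h, (hx 0).1, _, hp₁, (hp.adj_hub _).symm⟩
  · intro i hi
    rcases (hx i).2 hi with hi | ⟨j, hj⟩
    exacts [hp.ne 0 i hi, Fin.succ_ne_zero j (p.injective hj)]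
  · intro i
    fin_cases i
    · exact ⟨h, (hx 0).1, hp.adj_hub 0⟩
    · exact ⟨s, (hx 1).1, ((hp.adj_start_iff 0).2 rfl).symm⟩
    · exact ⟨_, hp₁, p.map_adj_iff.2 (pathGraph_adj.2 (.inl rfl))⟩

theorem adj_of_single {p : pathGraph 1 ↪g G} (hp : IsFan G p h s t) (i : Fin 3) :
    G.Adj (p 0) (![h, s, t] i) := by
  fin_cases i
  exacts [hp.adj_hub 0, ((hp.adj_start_iff 0).2 rfl).symm, ((hp.adj_end_iff 0).2 rfl).symm]

/-- The star formed by a fan on a single vertex. -/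
def starEmbedding {p : pathGraph 1 ↪g G} (hp : IsFan G p h s t)
    (hind : ∀ i j, ¬ G.Adj (![h, s, t] i) (![h, s, t] j)) : K13 ↪g G where
  toFun := Fin.cons (p 0) ![h, s, t]
  inj' := Fin.cons_injective_iff.2 ⟨fun ⟨i, hi⟩ => hp.ne 0 i hi.symm, hp.injective⟩
  map_rel_iff' {a b} := by
    cases a using Fin.cases with
    | zero =>
      cases b using Fin.cases with
      | zero => simp
      | succ j => exact iff_of_true (hp.adj_of_single j) (by simp [K13, (Fin.succ_ne_zero j).symm])
    | succ i =>
      cases b using Fin.cases with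
      | zero => exact iff_of_true (hp.adj_of_single i).symm (by simp [K13])
      | succ j => exact iff_of_false (hind i j) (by simp [K13])

theorem hasRootedTriangle_or_iso_K13 (hp : IsFan G p h s t) :
    HasRootedTriangle G (Set.range p) ![h, s, t] ∨
      Nonempty (G.induce (Set.range p ∪ Set.range ![h, s, t]) ≃g K13) := by
  rcases eq_or_ne k 0 with rfl | hk
  · by_cases! hind : ∀ i j, ¬ G.Adj (![h, s, t] i) (![h, s, t] j)
    · have hrange : Set.range (hp.starEmbedding hind) = Set.range p ∪ Set.range ![h, s, t] := by
        change Set.range (Fin.cons (p 0) ![h, s, t] : Fin 4 → V) = _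
        rw [Fin.range_cons, Set.range_unique (ι := Fin 1), Set.insert_eq]
        rfl
      rw [← hrange]
      exact .inr ⟨(hp.starEmbedding hind).isoInduceRange.symm⟩
    · obtain ⟨i, j, hij⟩ := hind
      exact .inl <| hasRootedTriangle_of_adj (D := fun i => {![h, s, t] i})
        (.singleton hp.injective fun _ _ h => h.elim) (fun _ => ⟨rfl, fun _ => .inl⟩) ⟨0, rfl⟩
        (fun i => hp.ne 0 i) (fun i => ⟨_, rfl, hp.adj_of_single i⟩)
        (fun h => hij.ne (congrArg _ h)) ⟨_, rfl, _, rfl, hij⟩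
  · exact .inl (hp.hasRootedTriangle_of_pos hk)

end IsFan

end Fan

/-! ### Admissible graphs -/

/-- Deleting three vertices of `G` leaves at most two components. A distribution of the components
of `G - X` into three classes is encoded as a colouring of the vertices, and at least one of the
three colours has to be absent. -/
def NoThreeWayCut {V : Type*} (G : SimpleGraph V) : Prop :=
  ∀ X : Set V, X.ncard = 3 → ∀ c : V → Fin 3,
    (∀ a b, a ∉ X → b ∉ X → G.Adj a b → c a = c b) → ∃ i, ∀ a, a ∉ X → c a ≠ i

/-- The graphs to which the induction applies: 3-connected nonplanar graphs without a minor among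
the four excluded graphs and without three vertices leaving more than two components. -/
structure IsAdmissible {V : Type*} (G : SimpleGraph V) : Prop where
  kConnected : KConnected G 3
  not_planar : ¬ Planar G
  not_isMinor_K5plus : ¬ IsMinor K5plus G
  not_isMinor_K33plus : ¬ IsMinor K33plus G
  not_isMinor_K5h : ¬ IsMinor K5h G
  not_isMinor_K33h : ¬ IsMinor K33h G
  noThreeWayCut : NoThreeWayCut G

section Admissible

variable {V W : Type*} {G : SimpleGraph V} {K : SimpleGraph W} {A B X P Q : Set V} {v : V} {k n : ℕ}

theorem noThreeWayCut_of_card_le [Finite V]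
    (h : ∀ x y z : V, Nat.card (G.induce (({x, y, z} : Set V)ᶜ)).ConnectedComponent ≤ 2) :
    NoThreeWayCut G := by
  intro X hX c hc
  obtain ⟨x, y, z, -, -, -, rfl⟩ := Set.ncard_eq_three.1 hX
  by_contra! hall
  let H := G.induce (({x, y, z} : Set V)ᶜ)
  have hwalk : ∀ a b, H.Walk a b → c a = c b := fun _ _ p => by
    induction p with
    | nil => rfl
    | @cons u v _ hadj _ ih => exact (hc u v u.2 v.2 hadj).trans ih
  have hsurj : Function.Surjective
      (ConnectedComponent.lift (G := H) (fun a => c a) fun a b p _ => hwalk a b p) := fun i =>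
    let ⟨a, ha, hai⟩ := hall i
    ⟨H.connectedComponentMk ⟨a, ha⟩, hai⟩
  have : Finite H.ConnectedComponent := Quot.finite _
  have hcard := (Nat.card_le_card_of_surjective _ hsurj).trans (h x y z)
  simp at hcard

theorem NoThreeWayCut.mem_or_mem (hG : NoThreeWayCut G) (hX : X.ncard = 3)
    (hP : ∀ a ∈ P, ∀ b, b ∉ X → G.Adj a b → b ∈ P) (hPX : (P \ X).Nonempty)
    (hQ : ∀ a ∈ Q, a ∉ X → ∀ b, G.Adj a b → b ∈ Q) (hQX : ((Q \ P) \ X).Nonempty)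
    (hv : v ∉ X) : v ∈ P ∨ v ∈ Q := by
  classical
  by_contra! hvPQ
  let c : V → Fin 3 := fun u => if u ∈ P then 0 else if u ∈ Q then 1 else 2
  have hc : ∀ a b, a ∉ X → b ∉ X → G.Adj a b → c a = c b := by
    intro a b ha hb hab
    have hPiff : a ∈ P ↔ b ∈ P := ⟨fun h => hP a h b hb hab, fun h => hP b h a ha hab.symm⟩
    have hQiff : a ∈ Q ↔ b ∈ Q := ⟨fun h => hQ a h ha b hab, fun h => hQ b h hb a hab.symm⟩
    simp only [c, hPiff, hQiff]
  obtain ⟨p, hp, hpX⟩ := hPX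
  obtain ⟨q, ⟨hq, hqP⟩, hqX⟩ := hQX
  obtain ⟨i, hi⟩ := hG X hX c hc
  fin_cases i
  · exact hi p hpX (by simp [c, hp])
  · exact hi q hqX (by simp [c, hq, hqP])
  · exact hi v hv (by simp [c, hvPQ.1, hvPQ.2])

theorem exists_range_eq_of_ncard_eq_three (hX : X.ncard = 3) :
    ∃ x : Fin 3 → V, Set.range x = X := by
  obtain ⟨a, b, c, -, -, -, rfl⟩ := Set.ncard_eq_three.1 hX
  exact ⟨![a, b, c], by
    simp only [Matrix.range_cons, Matrix.range_empty, Set.union_empty, Set.insert_eq]⟩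

theorem IsMinor.card_le [Finite V] (h : IsMinor K G) : Nat.card W ≤ Nat.card V := by
  obtain ⟨B, hB⟩ := isMinor_iff_exists_isModel.1 h
  choose f hf using fun w => (hB.connected w).nonempty
  exact Nat.card_le_card_of_injective f fun w₁ w₂ hw => hB.eq_of_mem (hf w₁) (hw ▸ hf w₂)

theorem five_le_card_of_not_planar [Finite V] (h : ¬ Planar G) : 5 ≤ Nat.card V := by
  rcases not_planar_iff.1 h with hK | hK
  · simpa using hK.card_le
  · have hcard := hK.card_le
    simp only [Nat.card_eq_fintype_card, Fintype.card_sum, Fintype.card_fin] at hcard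
    omega

theorem isEmpty_iso_K13_of_five_le (h : 5 ≤ Nat.card V) : IsEmpty (G ≃g K13) :=
  ⟨fun f => by simp [Nat.card_congr f.toEquiv] at h⟩

theorem KConnected.exists_adj_ne_ne [Finite V] (hG : KConnected G 3) (w a b : V) :
    ∃ c, G.Adj w c ∧ c ≠ a ∧ c ≠ b := by
  have hab : (({a, b} : Set V) \ {w}).ncard ≤ 2 :=
    (Set.ncard_le_ncard Set.sdiff_subset).trans
      ((Set.ncard_insert_le a {b}).trans (by rw [Set.ncard_singleton]))
  obtain ⟨d, hd⟩ : ∃ d, d ∉ insert w (({a, b} : Set V) \ {w}) := by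
    rw [← Set.ne_univ_iff_exists_notMem]
    intro huniv
    have hcard := Set.ncard_insert_le w (({a, b} : Set V) \ {w})
    rw [huniv, Set.ncard_univ] at hcard
    have := hG.1
    omega
  obtain ⟨_, -, c, hc, rfl, hcw, hwc⟩ := ConnectedOn.exists_adj (hG.2 _ (Nat.lt_succ_of_le hab))
    (P := {w}) (a := w) (b := d) (fun h => h.2 rfl) (fun h => hd (.inr h)) rfl
    (fun h => hd (.inl h))
  exact ⟨c, hwc, fun h => hc ⟨.inl h, hcw⟩, fun h => hc ⟨.inr h, hcw⟩⟩

namespace IsSep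

theorem sdiff_nonempty (h : IsSep G n A B) : (A \ B).Nonempty :=
  let ⟨a, ha⟩ := (Set.ne_univ_iff_exists_notMem B).1 h.2.2.1
  ⟨a, h.mem_left_of_notMem ha, ha⟩

theorem connectedOn_sdiff (h : IsSep G 3 A B) (hG : NoThreeWayCut G) :
    ConnectedOn G (A \ B) := by
  obtain ⟨a, ha⟩ := h.sdiff_nonempty
  obtain ⟨b, -, hbA⟩ := h.symm.sdiff_nonempty
  have hC : component G (A \ B) a ⊆ A \ B := component_subset ha
  have hA : ∀ u ∈ A, u ∉ A ∩ B → ∀ v, G.Adj u v → v ∈ A := fun u hu huX v huv =>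
    h.mem_left_of_adj huv fun huB => huX ⟨hu, huB⟩
  suffices A \ B ⊆ component G (A \ B) a from hC.antisymm this ▸ connectedOn_component a
  have hclosed : ∀ u ∈ component G (A \ B) a, ∀ v, v ∉ A ∩ B → G.Adj u v →
      v ∈ component G (A \ B) a := fun u hu v hv huv =>
    have hvA : v ∈ A := h.mem_left_of_adj huv (hC hu).2
    mem_component_of_adj hu huv ⟨hvA, fun hvB => hv ⟨hvA, hvB⟩⟩
  refine fun d hd => by_contra fun hdC => hbA ?_
  exact (hG.mem_or_mem h.ncard_inter hclosed ⟨a, mem_component_self a, fun haX => ha.2 haX.2⟩ hA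
    ⟨d, ⟨hd.1, hdC⟩, fun hdX => hd.2 hdX.2⟩ fun hbX => hbA hbX.1).elim (fun hb => (hC hb).1) id

theorem exists_adj [Finite V] (h : IsSep G n A B) (hG : KConnected G n) (hv : v ∈ A ∩ B) :
    ∃ w ∈ A \ B, G.Adj v w := by
  obtain ⟨a, ha⟩ := h.sdiff_nonempty
  obtain ⟨b, hb⟩ := h.symm.sdiff_nonempty
  have hcard : ((A ∩ B) \ {v}).ncard < n :=
    h.ncard_inter ▸ Set.ncard_sdiff_singleton_lt_of_mem hv
  obtain ⟨c, -, d, hd, hc, hdA, hcd⟩ := ConnectedOn.exists_adj (hG.2 _ hcard) (P := A \ B)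
    (fun haX => ha.2 haX.1.2) (fun hbX => hb.2 hbX.1.1) ha (fun hbA => hb.2 hbA.1)
  have hdA' : d ∈ A := h.mem_left_of_adj hcd hc.2
  have hdv : d = v := by_contra fun hne => hd ⟨⟨hdA', not_not.1 fun hdB => hdA ⟨hdA', hdB⟩⟩, hne⟩
  exact ⟨c, hc, hdv ▸ hcd.symm⟩

theorem kConnected_induce_addClique [Finite V] (h : IsSep G n A B) (hG : KConnected G k)
    (hB : k < B.ncard) : KConnected ((addClique G (A ∩ B)).induce B) k := by
  refine ⟨(Nat.card_coe_set_eq B).symm ▸ hB, fun s hs => ?_⟩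
  have himage : Subtype.val '' sᶜ = (Subtype.val '' s)ᶜ ∩ B := by
    rw [← Set.range_sdiff_image Subtype.val_injective, Subtype.range_coe, Set.sdiff_eq,
      Set.inter_comm]
  have hcard : (Subtype.val '' s).ncard < k := (Set.ncard_image_le s.toFinite).trans_lt hs
  refine ConnectedOn.of_image (f := Embedding.induce B) ?_
  change ConnectedOn _ (Subtype.val '' sᶜ)
  rw [himage]
  refine h.connectedOn_inter (hG.2 _ hcard) ?_
  rw [Set.inter_comm]
  exact Set.sdiff_nonempty_of_ncard_lt_ncard (hcard.trans hB)

theorem noThreeWayCut_induce_addClique (h : IsSep G n A B) (hG : NoThreeWayCut G) :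
    NoThreeWayCut ((addClique G (A ∩ B)).induce B) := by
  classical
  intro Y hY c hc
  have hY' : (Subtype.val '' Y).ncard = 3 := by
    rwa [Set.ncard_image_of_injective _ Subtype.val_injective]
  have hmem : ∀ {u} (hu : u ∈ B), u ∉ Subtype.val '' Y → (⟨u, hu⟩ : B) ∉ Y :=
    fun hu hY hu' => hY ⟨_, hu', rfl⟩
  -- The clique on the cut is monochromatic; its colour extends the colouring beyond `B`.
  obtain ⟨c₀, hc₀⟩ : ∃ c₀, ∀ u (hu : u ∈ A ∩ B), u ∉ Subtype.val '' Y → c ⟨u, hu.2⟩ = c₀ := by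
    by_cases! hex : ∃ u, ∃ _ : u ∈ A ∩ B, u ∉ Subtype.val '' Y
    · obtain ⟨w, hw, hwY⟩ := hex
      refine ⟨c ⟨w, hw.2⟩, fun u hu huY => ?_⟩
      rcases eq_or_ne u w with rfl | hne
      · rfl
      · exact hc _ _ (hmem _ huY) (hmem _ hwY) (addClique_adj.2 (.inr ⟨hne, hu, hw⟩))
    · exact ⟨0, fun u hu huY => absurd (hex u hu) huY⟩
  let c' : V → Fin 3 := fun u => if hu : u ∈ B then c ⟨u, hu⟩ else c₀
  have hc' : ∀ u v, u ∉ Subtype.val '' Y → v ∉ Subtype.val '' Y → G.Adj u v → c' u = c' v := by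
    intro u v hu hv huv
    by_cases huB : u ∈ B <;> by_cases hvB : v ∈ B <;> simp only [c', huB, hvB, dif_pos, dif_neg,
      not_false_eq_true]
    · exact hc _ _ (hmem _ hu) (hmem _ hv) (le_addClique huv)
    · exact hc₀ u ⟨h.mem_left_of_adj huv.symm hvB, huB⟩ hu
    · exact (hc₀ v ⟨h.mem_left_of_adj huv huB, hvB⟩ hv).symm
  obtain ⟨i, hi⟩ := hG _ hY' c' hc'
  refine ⟨i, fun u hu hui => hi u ?_ (by simpa [c'] using hui)⟩
  rintro ⟨u', hu', heq⟩
  exact hu (Subtype.ext heq ▸ hu')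

end IsSep

namespace IsAdmissible

theorem eq_univ (hG : IsAdmissible G) {S : Set V} (hS : ¬ Planar (G.induce S)) : S = Set.univ :=
  eq_univ_of_not_planar_induce
    (connectedOn_univ.1 (Set.compl_empty (α := V) ▸ hG.kConnected.2 ∅ (by simp)))
    hG.not_isMinor_K5plus hG.not_isMinor_K33plus hS

variable [Finite V]

theorem isMinimalLobe (hG : IsAdmissible G) (h : IsSep G 3 A B)
    (hB : ¬ Planar ((addClique G (A ∩ B)).induce B)) : IsMinimalLobe G (A \ B) (A ∩ B) where
  ncard_eq := h.ncard_inter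
  notMem hx hxW := hxW.2 hx.2
  connected := h.connectedOn_sdiff hG.noThreeWayCut
  exists_adj _ hx := h.exists_adj hG.kConnected hx
  mem_or_mem {w a} hw hwa := by
    have ha : a ∈ A := h.mem_left_of_adj hwa hw.2
    exact (em (a ∈ B)).symm.imp (fun haB => ⟨ha, haB⟩) fun haB => ⟨ha, haB⟩
  exists_third w _ := hG.kConnected.exists_adj_ne_ne w
  eq_of_subset {W'} hW' hconn hadj := by
    have hplanar : Planar (G.induce B) := by
      by_contra hnp
      exact h.2.2.1 (hG.eq_univ hnp)
    obtain ⟨x, hx⟩ := exists_range_eq_of_ncard_eq_three h.ncard_inter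
    have hnp : ¬ Planar (G.induce (B ∪ W')) := by
      rcases hasModelThrough_of_not_planar hplanar (hx ▸ hB) hconn (fun v hv => (hW' hv).2)
        (hx ▸ hadj) with ⟨M, hM, hMB, -⟩ | ⟨M, hM, hMB, -⟩
      · exact fun hp => hp.1 (isMinor_induce_iff.2 ⟨M, hM, hMB⟩)
      · exact fun hp => hp.2 (isMinor_induce_iff.2 ⟨M, hM, hMB⟩)
    exact hW'.antisymm fun v hv => ((hG.eq_univ hnp).superset (Set.mem_univ v)).resolve_left hv.2

theorem exists_isFan (hG : IsAdmissible G) (h : IsSep G 3 A B)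
    (hB : ¬ Planar ((addClique G (A ∩ B)).induce B)) :
    ∃ k, ∃ p : pathGraph (k + 1) ↪g G, ∃ x y z,
      Set.range p = A \ B ∧ Set.range ![x, y, z] = A ∩ B ∧ IsFan G p x y z := by
  refine (hG.isMinimalLobe h hB).exists_isFan ?_
  rintro ⟨c, hc, hnoncut⟩
  obtain ⟨f, hf, hcubic⟩ := (hG.isMinimalLobe h hB).exists_isCubicTriangle hc hnoncut
  exact hB (hf ▸ hcubic.planar_induce_addClique (fun i => (hnoncut i).1.2) (fun _ => hG.eq_univ)
    hG.not_isMinor_K5h hG.not_isMinor_K33h)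

theorem induce_addClique (hG : IsAdmissible G) (h : IsSep G 3 A B)
    (hB : ¬ Planar ((addClique G (A ∩ B)).induce B))
    (hminor : IsMinor ((addClique G (A ∩ B)).induce B) G) :
    IsAdmissible ((addClique G (A ∩ B)).induce B) where
  kConnected := h.kConnected_induce_addClique hG.kConnected
    ((five_le_card_of_not_planar hB).trans_eq (Nat.card_coe_set_eq B) |>.trans_lt' (by norm_num))
  not_planar := hB
  not_isMinor_K5plus hK := hG.not_isMinor_K5plus (hK.trans hminor)
  not_isMinor_K33plus hK := hG.not_isMinor_K33plus (hK.trans hminor)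
  not_isMinor_K5h hK := hG.not_isMinor_K5h (hK.trans hminor)
  not_isMinor_K33h hK := hG.not_isMinor_K33h (hK.trans hminor)
  noThreeWayCut := h.noThreeWayCut_induce_addClique hG.noThreeWayCut

end IsAdmissible

end Admissible

/-! ### Wheel sums -/

/-- `G[B]` is obtained from `G'` by 3-summing wheels onto distinct triangles, where the injection
`g` places `G'` inside `B`: the `i`-th wheel is attached to the triangle `T i`, and `W i` is the set
of its other vertices. The last field, which makes wheel sums compose, says that removing a wheel
and restoring its triangle leaves a nonplanar graph. -/
structure IsWheelSum {V U : Type*} {k : ℕ} (G : SimpleGraph V) (B : Set V) (G' : SimpleGraph U)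
    (g : U ↪ V) (W : Fin k → Set V) (T : Fin k → Set U) : Prop where
  range_subset : Set.range g ⊆ B
  subset : ∀ i, W i ⊆ B
  ncard_eq : ∀ i, (T i).ncard = 3
  isClique : ∀ i, G'.IsClique (T i)
  injective : Function.Injective T
  disjoint_range : ∀ i, Disjoint (W i) (Set.range g)
  pairwise_disjoint : Pairwise fun i j => Disjoint (W i) (W j)
  subset_union : B ⊆ Set.range g ∪ ⋃ i, W i
  nonempty : ∀ i, (W i).Nonempty
  isWheel : ∀ i, IsWheel ((addClique G (g '' T i)).induce (W i ∪ g '' T i))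
  adj_of_adj : ∀ ⦃a b⦄, G.Adj (g a) (g b) → G'.Adj a b
  adj_or_mem : ∀ ⦃a b⦄, G'.Adj a b → G.Adj (g a) (g b) ∨ ∃ i, a ∈ T i ∧ b ∈ T i
  mem_of_adj : ∀ ⦃i v w⦄, v ∈ W i → w ∈ B → G.Adj v w → w ∈ W i ∪ g '' T i
  not_planar : ∀ i, ¬ Planar ((addClique G (g '' T i)).induce (B \ W i))

section WheelSum

theorem IsWheel.of_iso {V W : Type*} {G : SimpleGraph V} {H : SimpleGraph W} (f : G ≃g H)
    (h : IsWheel H) : IsWheel G :=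
  let ⟨n, hn, ⟨e⟩⟩ := h
  ⟨n, hn, ⟨f.trans e⟩⟩

theorem addClique_induce {V : Type*} (G : SimpleGraph V) (B : Set V) (Y : Set B) :
    addClique (G.induce B) Y = (addClique G (Subtype.val '' Y)).induce B := by
  ext a b
  simp [addClique_adj, Subtype.ext_iff]

theorem nonempty_iso_induce_induce {V : Type*} (G : SimpleGraph V) (B : Set V) (S : Set B) :
    Nonempty (G.induce (Subtype.val '' S) ≃g (G.induce B).induce S) :=
  ⟨.symm ⟨Equiv.Set.image Subtype.val S Subtype.val_injective, Iff.rfl⟩⟩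

variable {V U : Type*} {G : SimpleGraph V} {A B : Set V} {G' : SimpleGraph U} {k : ℕ} {g : U ↪ V}
  {W : Fin k → Set V} {T : Fin k → Set U} {i : Fin k} {v : V} {x : Fin 3 → V}

namespace IsWheelSum

theorem refl (G : SimpleGraph V) :
    IsWheelSum G Set.univ G (.refl V) (Fin.elim0 : Fin 0 → Set V) Fin.elim0 where
  range_subset := Set.subset_univ _
  subset i := i.elim0
  ncard_eq i := i.elim0
  isClique i := i.elim0
  injective i := i.elim0
  disjoint_range i := i.elim0
  pairwise_disjoint i := i.elim0
  subset_union v _ := .inl ⟨v, rfl⟩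
  nonempty i := i.elim0
  isWheel i := i.elim0
  adj_of_adj _ _ h := h
  adj_or_mem _ _ h := .inl h
  mem_of_adj i := i.elim0
  not_planar i := i.elim0

theorem of_induce {g : U ↪ B} {W : Fin k → Set B}
    (h : IsWheelSum (G.induce B) Set.univ G' g W T) :
    IsWheelSum G B G' (g.trans (.subtype (· ∈ B))) (fun i => Subtype.val '' W i) T := by
  have himage : ∀ i, g.trans (.subtype (· ∈ B)) '' T i = Subtype.val '' (g '' T i) :=
    fun i => Set.image_comp Subtype.val g (T i)
  have hinj : Function.Injective (Subtype.val : B → V) := Subtype.val_injective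
  have hrange : Set.range (g.trans (.subtype (· ∈ B))) = Subtype.val '' Set.range g :=
    Set.range_comp Subtype.val g
  exact {
    range_subset := Set.range_subset_iff.2 fun u => (g u).2
    subset := fun i => Subtype.coe_image_subset B (W i)
    ncard_eq := h.ncard_eq
    isClique := h.isClique
    injective := h.injective
    disjoint_range := fun i => hrange ▸ (Set.disjoint_image_iff hinj).2 (h.disjoint_range i)
    pairwise_disjoint := fun i j hij => (Set.disjoint_image_iff hinj).2 (h.pairwise_disjoint hij)
    subset_union := by
      rw [hrange, ← Set.image_iUnion, ← Set.image_union]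
      exact fun v hv => ⟨⟨v, hv⟩, h.subset_union trivial, rfl⟩
    nonempty := fun i => (h.nonempty i).image _
    isWheel := fun i => by
      obtain ⟨f⟩ := nonempty_iso_induce_induce (addClique G (Subtype.val '' (g '' T i))) B
        (W i ∪ g '' T i)
      rw [himage, ← Set.image_union]
      exact .of_iso f (addClique_induce G B _ ▸ h.isWheel i)
    adj_of_adj := h.adj_of_adj
    adj_or_mem := h.adj_or_mem
    mem_of_adj := by
      rintro i _ w ⟨v, hv, rfl⟩ hw hvw
      rw [himage, ← Set.image_union]
      exact ⟨⟨w, hw⟩, h.mem_of_adj hv trivial hvw, rfl⟩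
    not_planar := fun i hplanar => by
      obtain ⟨f⟩ := nonempty_iso_induce_induce (addClique G (Subtype.val '' (g '' T i))) B
        (Set.univ \ W i)
      have himage' : Subtype.val '' (Set.univ \ W i) = B \ Subtype.val '' W i := by
        rw [Set.image_sdiff hinj, Set.image_univ, Subtype.range_coe]
      refine h.not_planar i (addClique_induce G B _ ▸ Planar.of_isMinor ?_
        (isMinor_of_injective f.symm.toHom f.symm.injective))
      rwa [himage', ← himage] }

theorem apply_notMem (h : IsWheelSum G B G' g W T) (u : U) : g u ∉ W i :=
  fun hu => (h.disjoint_range i).notMem_of_mem_left hu ⟨u, rfl⟩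

theorem apply_mem (h : IsWheelSum G B G' g W T) (u : U) : g u ∈ B :=
  h.range_subset ⟨u, rfl⟩

theorem exists_apply_notMem (h : IsWheelSum G B G' g W T) (hU : 5 ≤ Nat.card U) (i : Fin k) :
    ∃ u, g u ∉ g '' T i := by
  have hT : T i ≠ Set.univ := fun huniv => by
    have := h.ncard_eq i
    rw [huniv, Set.ncard_univ] at this
    omega
  obtain ⟨u, hu⟩ := (Set.ne_univ_iff_exists_notMem _).1 hT
  exact ⟨u, fun hu' => hu (g.injective.mem_set_image.1 hu')⟩

theorem inter_subset_of_mem (h : IsWheelSum (addClique G (A ∩ B)) B G' g W T) (hv : v ∈ A ∩ B)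
    (hvW : v ∈ W i) : A ∩ B ⊆ W i ∪ g '' T i := fun u hu =>
  (eq_or_ne v u).elim (fun hvu => .inl (hvu ▸ hvW)) fun hvu =>
    h.mem_of_adj hvW hu.2 (addClique_adj.2 (.inr ⟨hvu, hv, hu⟩))

theorem union_inter_sdiff (h : IsWheelSum (addClique G (A ∩ B)) B G' g W T)
    (hAB : A ∩ B ⊆ W i ∪ g '' T i) : (A ∪ (W i ∪ g '' T i)) ∩ (B \ W i) = g '' T i := by
  ext u
  constructor
  · rintro ⟨hu | hu | hu, huB, huW⟩
    · exact (hAB ⟨hu, huB⟩).resolve_left huW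
    · exact absurd hu huW
    · exact hu
  · rintro ⟨t, ht, rfl⟩
    exact ⟨.inr (.inr ⟨t, ht, rfl⟩), h.apply_mem t, h.apply_notMem t⟩

theorem ncard_image (h : IsWheelSum G B G' g W T) (i : Fin k) : (g '' T i).ncard = 3 := by
  rw [Set.ncard_image_of_injective _ g.injective, h.ncard_eq]

theorem isSep_union (h : IsWheelSum (addClique G (A ∩ B)) B G' g W T) (hAB : IsSep G 3 A B)
    (hU : 5 ≤ Nat.card U) (hsub : A ∩ B ⊆ W i ∪ g '' T i) :
    IsSep G 3 (A ∪ (W i ∪ g '' T i)) (B \ W i) := by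
  refine ⟨?_, ?_, ?_, ?_, fun p q hpq => ?_⟩
  · refine Set.eq_univ_of_forall fun u => ?_
    by_cases hu : u ∈ W i
    · exact .inl (.inr (.inl hu))
    · exact (hAB.1.superset (Set.mem_univ u)).imp .inl fun huB => ⟨huB, hu⟩
  · obtain ⟨u, hu⟩ := h.exists_apply_notMem hU i
    have huW := h.apply_notMem (i := i) u
    refine (Set.ne_univ_iff_exists_notMem _).2 ⟨g u, ?_⟩
    rintro (huA | huW' | huT)
    · exact (hsub ⟨huA, h.apply_mem u⟩).elim huW hu
    · exact huW huW'
    · exact hu huT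
  · exact fun huniv => hAB.2.2.1 (Set.univ_subset_iff.1 (huniv ▸ Set.sdiff_subset))
  · rw [h.union_inter_sdiff hsub, h.ncard_image]
  · rcases hAB.2.2.2.2 hpq with hA | hB
    · exact .inl ⟨.inl hA.1, .inl hA.2⟩
    by_cases hp : p ∈ W i
    · exact .inl ⟨.inr (.inl hp), .inr (h.mem_of_adj hp hB.2 (le_addClique hpq))⟩
    by_cases hq : q ∈ W i
    · exact .inl ⟨.inr (h.mem_of_adj hq hB.1 (le_addClique hpq.symm)), .inr (.inl hq)⟩
    · exact .inr ⟨⟨hB.1, hp⟩, hB.2, hq⟩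

theorem ncard_lt_ncard_union [Finite V] (h : IsWheelSum G B G' g W T) (hAB : (A ∩ B).ncard = 3) :
    A.ncard < (A ∪ (W i ∪ g '' T i)).ncard := by
  refine Set.ncard_lt_ncard ⟨Set.subset_union_left, fun hsub => ?_⟩
  have hlt : (g '' T i).ncard < (W i ∪ g '' T i).ncard := by
    obtain ⟨w, hw⟩ := h.nonempty i
    refine Set.ncard_lt_ncard ⟨Set.subset_union_right, fun hle => ?_⟩
    obtain ⟨t, -, rfl⟩ := hle (.inl hw)
    exact h.apply_notMem t hw
  have hle : (W i ∪ g '' T i).ncard ≤ (A ∩ B).ncard := by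
    refine Set.ncard_le_ncard (Set.subset_inter (Set.subset_union_right.trans hsub) ?_)
    exact Set.union_subset (h.subset i) ((Set.image_subset_range _ _).trans h.range_subset)
  rw [h.ncard_image] at hlt
  omega

theorem not_planar_union_inter_sdiff (h : IsWheelSum (addClique G (A ∩ B)) B G' g W T)
    (hsub : A ∩ B ⊆ W i ∪ g '' T i) :
    ¬ Planar ((addClique G ((A ∪ (W i ∪ g '' T i)) ∩ (B \ W i))).induce (B \ W i)) := by
  rw [h.union_inter_sdiff hsub]
  refine fun hplanar => h.not_planar i (hplanar.of_isMinor ?_)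
  refine isMinor_induce_mono subset_rfl fun p hp q hq hpq => addClique_adj.2 ?_
  rcases addClique_adj.1 hpq with hpq | hpq
  · refine (addClique_adj.1 hpq).imp_right fun ⟨hne, hpX, hqX⟩ => ?_
    exact ⟨hne, (hsub hpX).resolve_left hp.2, (hsub hqX).resolve_left hq.2⟩
  · exact .inr hpq

end IsWheelSum

end WheelSum

section Reduction

variable {V U : Type*} {G : SimpleGraph V} {A B : Set V} {G' : SimpleGraph U} {k n : ℕ} {g : U ↪ V}
  {W : Fin k → Set V} {T : Fin k → Set U} {i : Fin k} {v w : V} {x : Fin 3 → V}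

namespace IsWheelSum

theorem image_preimage_inter (h : IsWheelSum G B G' g W T) (hA : ∀ i, Disjoint (W i) A) :
    g '' (g ⁻¹' (A ∩ B)) = A ∩ B :=
  Set.image_preimage_eq_of_subset fun _ hv => (h.subset_union hv.2).resolve_right fun hvW =>
    let ⟨i, hi⟩ := Set.mem_iUnion.1 hvW
    (hA i).notMem_of_mem_left hi hv.1

theorem mem_of_adj_of_disjoint (h : IsWheelSum (addClique G (A ∩ B)) B G' g W T)
    (hAB : IsSep G n A B) (hA : Disjoint (W i) A) (hv : v ∈ W i) (hvw : G.Adj v w) :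
    w ∈ W i ∪ g '' T i :=
  h.mem_of_adj hv (hAB.symm.mem_left_of_adj hvw (hA.notMem_of_mem_left hv)) (le_addClique hvw)

theorem preimage_inter_ne (h : IsWheelSum (addClique G (A ∩ B)) B G' g W T)
    (hG : NoThreeWayCut G) (hAB : IsSep G 3 A B) (hU : 5 ≤ Nat.card U)
    (hA : ∀ i, Disjoint (W i) A) : g ⁻¹' (A ∩ B) ≠ T i := by
  intro heq
  have hT : g '' T i = A ∩ B := heq ▸ h.image_preimage_inter hA
  obtain ⟨a, haA, haB⟩ := hAB.sdiff_nonempty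
  obtain ⟨w, hw⟩ := h.nonempty i
  obtain ⟨u, hu⟩ := h.exists_apply_notMem hU i
  rw [hT] at hu
  have hW : ∀ p ∈ W i, ∀ q, q ∉ A ∩ B → G.Adj p q → q ∈ W i := fun p hp q hq hpq =>
    (h.mem_of_adj_of_disjoint hAB (hA i) hp hpq).resolve_right fun hqT => hq (hT ▸ hqT)
  have hAadj : ∀ p ∈ A, p ∉ A ∩ B → ∀ q, G.Adj p q → q ∈ A := fun p hp hpX _ hpq =>
    hAB.mem_left_of_adj hpq fun hpB => hpX ⟨hp, hpB⟩
  have hu' := hG.mem_or_mem hAB.ncard_inter hW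
    ⟨w, hw, fun hwX => (hA i).notMem_of_mem_left hw hwX.1⟩ hAadj
    ⟨a, ⟨haA, fun haW => haB (h.subset i haW)⟩, fun haX => haB haX.2⟩ hu
  exact hu'.elim (h.apply_notMem u) fun huA => hu ⟨huA, h.apply_mem u⟩

theorem isWheel_of_disjoint (h : IsWheelSum (addClique G (A ∩ B)) B G' g W T)
    (hA : Disjoint (W i) A) : IsWheel ((addClique G (g '' T i)).induce (W i ∪ g '' T i)) := by
  refine .of_iso ⟨.refl _, fun {a b} => ?_⟩ (h.isWheel i)
  have hT : ∀ p ∈ W i ∪ g '' T i, p ∈ A ∩ B → p ∈ g '' T i := fun p hp hpX =>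
    hp.resolve_left fun hpW => hA.notMem_of_mem_left hpW hpX.1
  have ha := hT a a.2
  have hb := hT b b.2
  simp only [comap_adj, addClique_adj, Equiv.refl_apply, Function.Embedding.subtype_apply]
  tauto

theorem not_planar_of_disjoint (h : IsWheelSum (addClique G (A ∩ B)) B G' g W T)
    (hA : Disjoint (W i) A) (hx : Set.range x = A ∩ B) (htri : HasRootedTriangle G (A \ B) x) :
    ¬ Planar ((addClique G (g '' T i)).induce (Set.univ \ W i)) := by
  have hAW : A ⊆ Set.univ \ W i := fun v hv => ⟨trivial, hA.notMem_of_mem_right hv⟩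
  have hminor := htri.isMinor (F := addClique G (g '' T i)) (S := B \ W i) (T := Set.univ \ W i)
    le_addClique (Set.disjoint_sdiff_left.mono_right Set.sdiff_subset)
    (Set.sdiff_subset_sdiff_left (Set.subset_univ B)) (hx ▸ Set.inter_subset_left.trans hAW)
    (Set.sdiff_subset.trans hAW)
  refine fun hplanar => h.not_planar i ((hplanar.of_isMinor hminor).of_isMinor ?_)
  refine isMinor_induce_mono subset_rfl fun p _ q _ hpq => ?_
  simp only [addClique_adj, hx] at hpq ⊢
  tauto

theorem univ_subset_union_cons {H : SimpleGraph V} (h : IsWheelSum H B G' g W T)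
    (hAB : IsSep G n A B) :
    Set.univ ⊆ Set.range g ∪ ⋃ i, (Fin.cons (A \ B) W : Fin (k + 1) → Set V) i := by
  intro v _
  by_cases hvB : v ∈ B
  · exact (h.subset_union hvB).imp_right fun hvW =>
      let ⟨i, hi⟩ := Set.mem_iUnion.1 hvW
      Set.mem_iUnion.2 ⟨i.succ, hi⟩
  · exact .inr (Set.mem_iUnion.2 ⟨0, hAB.mem_left_of_notMem hvB, hvB⟩)

theorem cons (h : IsWheelSum (addClique G (A ∩ B)) B G' g W T)
    (hG : NoThreeWayCut G) (hAB : IsSep G 3 A B) (hU : 5 ≤ Nat.card U)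
    (hA : ∀ i, Disjoint (W i) A) (hB : ¬ Planar ((addClique G (A ∩ B)).induce B))
    (hwheel : IsWheel ((addClique G (A ∩ B)).induce A))
    (hx : Set.range x = A ∩ B) (htri : HasRootedTriangle G (A \ B) x) :
    IsWheelSum G Set.univ G' g (Fin.cons (A \ B) W : Fin (k + 1) → Set V)
      (Fin.cons (g ⁻¹' (A ∩ B)) T : Fin (k + 1) → Set U) := by
  have himage := h.image_preimage_inter hA
  have hsdiff : ∀ i, Disjoint (A \ B) (W i) := fun i => ((hA i).mono_right Set.sdiff_subset).symm
  exact {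
    range_subset := Set.subset_univ _
    subset := fun _ => Set.subset_univ _
    ncard_eq := Fin.cases
      (by rw [Fin.cons_zero, ← Set.ncard_image_of_injective _ g.injective, himage, hAB.ncard_inter])
      h.ncard_eq
    isClique := Fin.cases
      (fun a ha b hb hab => h.adj_of_adj (addClique_adj.2 (.inr ⟨g.injective.ne hab, ha, hb⟩)))
      h.isClique
    injective := Fin.cons_injective_iff.2
      ⟨fun ⟨_, hi⟩ => h.preimage_inter_ne hG hAB hU hA hi.symm, h.injective⟩
    disjoint_range := Fin.cases (Set.disjoint_sdiff_left.mono_right h.range_subset) h.disjoint_range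
    pairwise_disjoint := by
      refine Fin.cases (Fin.cases (absurd rfl) fun j _ => hsdiff j) fun i => Fin.cases
        (fun _ => (hsdiff i).symm) fun j hij => h.pairwise_disjoint (ne_of_apply_ne _ hij)
    subset_union := h.univ_subset_union_cons hAB
    nonempty := Fin.cases hAB.sdiff_nonempty h.nonempty
    isWheel := Fin.cases (by
      rw [Fin.cons_zero, Fin.cons_zero, himage, Set.sdiff_union_inter]
      exact hwheel) fun i => h.isWheel_of_disjoint (hA i)
    adj_of_adj := fun a b hab => h.adj_of_adj (le_addClique hab)
    adj_or_mem := fun a b hab => by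
      rcases h.adj_or_mem hab with hab | ⟨i, hi⟩
      · exact (addClique_adj.1 hab).imp_right fun ⟨_, ha, hb⟩ => ⟨0, ha, hb⟩
      · exact .inr ⟨i.succ, hi⟩
    mem_of_adj := Fin.cases (fun v w hv _ hvw => by
      rw [Fin.cons_zero, Fin.cons_zero, himage, Set.sdiff_union_inter]
      exact hAB.mem_left_of_adj hvw hv.2) fun i _ _ hv _ => h.mem_of_adj_of_disjoint hAB (hA i) hv
    not_planar := Fin.cases (fun hplanar => hB (hplanar.of_isMinor (by
      rw [Fin.cons_zero, Fin.cons_zero, himage]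
      exact isMinor_induce_mono (fun v hv => ⟨trivial, fun hvA => hvA.2 hv⟩) fun _ _ _ _ => id)))
      fun i => h.not_planar_of_disjoint (hA i) hx htri }

theorem sumWheelsOnto (h : IsWheelSum G Set.univ G' g W T) : SumWheelsOnto G G' := by
  have hmem : ∀ {i : Fin k} {v w : V}, v ∈ W i → G.Adj v w → w ∈ W i ∪ g '' T i :=
    fun hv hvw => h.mem_of_adj hv trivial hvw
  refine ⟨g, k, W, T, h.ncard_eq, fun i a ha b hb => h.isClique i ha hb, h.injective,
    h.disjoint_range, h.pairwise_disjoint, Set.univ_subset_iff.1 h.subset_union,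
    fun i => deltaGraph_eq G _ _ ▸ h.isWheel i, h.adj_of_adj, h.adj_or_mem, fun v w hvw => ?_,
    fun i v hv w => hmem hv⟩
  rcases h.subset_union (Set.mem_univ v) with hv | hv
  · rcases h.subset_union (Set.mem_univ w) with hw | hw
    · exact .inl ⟨hv, hw⟩
    · obtain ⟨i, hi⟩ := Set.mem_iUnion.1 hw
      exact .inr ⟨i, hmem hi hvw.symm, .inl hi⟩
  · obtain ⟨i, hi⟩ := Set.mem_iUnion.1 hv
    exact .inr ⟨i, .inl hi, hmem hi hvw⟩

end IsWheelSum

end Reduction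

/-! ### The induction -/

/-- A 3-separation whose first side can be cut off: completing the cut to a triangle keeps the
second side nonplanar, and the first side is not just a single vertex of degree three. -/
structure IsReducingSep {V : Type*} (G : SimpleGraph V) (A B : Set V) : Prop where
  isSep : IsSep G 3 A B
  isEmpty_iso : IsEmpty (G.induce A ≃g K13)
  not_planar : ¬ Planar ((addClique G (A ∩ B)).induce B)

section Induction

variable {V U : Type*} [Finite V] {G : SimpleGraph V} {A B : Set V} {G' : SimpleGraph U} {k : ℕ}
  {g : U ↪ V} {W : Fin k → Set V} {T : Fin k → Set U} {i : Fin k}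

theorem IsAdmissible.internallyFourConnected (hG : IsAdmissible G)
    (hred : ∀ A B, ¬ IsReducingSep G A B) : InternallyFourConnected G := by
  have hK13 : ∀ {A B}, IsSep G 3 A B → ¬ Planar ((addClique G (A ∩ B)).induce B) →
      Xor (Nonempty (G.induce A ≃g K13)) (Nonempty (G.induce B ≃g K13)) := fun {A B} h hB =>
    .inl ⟨by_contra fun hA => hred A B ⟨h, not_nonempty_iff.1 hA, hB⟩,
      not_nonempty_iff.2 (isEmpty_iso_K13_of_five_le (five_le_card_of_not_planar hB))⟩
  refine ⟨hG.kConnected, five_le_card_of_not_planar hG.not_planar, fun A B h => ?_⟩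
  rcases h.not_planar_or (h.connectedOn_sdiff hG.noThreeWayCut)
    (h.symm.connectedOn_sdiff hG.noThreeWayCut) hG.not_planar with hA | hB
  · exact (hK13 h.symm (Set.inter_comm A B ▸ hA)).symm
  · exact hK13 h hB

theorem IsWheelSum.isReducingSep (h : IsWheelSum (addClique G (A ∩ B)) B G' g W T)
    (hAB : IsSep G 3 A B) (hU : 5 ≤ Nat.card U) (hsub : A ∩ B ⊆ W i ∪ g '' T i) :
    IsReducingSep G (A ∪ (W i ∪ g '' T i)) (B \ W i) where
  isSep := h.isSep_union hAB hU hsub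
  isEmpty_iso := isEmpty_iso_K13_of_five_le (by
    have hX : (A ∩ B).ncard < A.ncard := Set.ncard_lt_ncard ⟨Set.inter_subset_left, fun hle =>
      let ⟨_, ha⟩ := hAB.sdiff_nonempty
      ha.2 (hle ha.1).2⟩
    have hA := h.ncard_lt_ncard_union (i := i) hAB.ncard_inter
    rw [hAB.ncard_inter] at hX
    rw [Nat.card_coe_set_eq]
    omega)
  not_planar := h.not_planar_union_inter_sdiff hsub

namespace IsReducingSep

theorem exists_hasRootedTriangle (h : IsReducingSep G A B) (hG : IsAdmissible G) :
    IsWheel ((addClique G (A ∩ B)).induce A) ∧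
      ∃ x : Fin 3 → V, Set.range x = A ∩ B ∧ HasRootedTriangle G (A \ B) x := by
  obtain ⟨k, p, x, y, z, hp, hxyz, hfan⟩ := hG.exists_isFan h.isSep h.not_planar
  have hA : Set.range p ∪ Set.range ![x, y, z] = A := by rw [hp, hxyz, Set.sdiff_union_inter]
  refine ⟨?_, ![x, y, z], hxyz, hp ▸ hfan.hasRootedTriangle_or_iso_K13.resolve_right ?_⟩
  · have hwheel := hfan.isWheel
    rwa [deltaGraph_eq, hA, hxyz] at hwheel
  · rw [hA, not_nonempty_iff]
    exact h.isEmpty_iso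

theorem isMinor (h : IsReducingSep G A B) (hG : IsAdmissible G) :
    IsMinor ((addClique G (A ∩ B)).induce B) G := by
  obtain ⟨-, x, hx, htri⟩ := h.exists_hasRootedTriangle hG
  have hminor := htri.isMinor le_rfl (S := B) Set.disjoint_sdiff_left (Set.subset_univ _)
    (Set.subset_univ _) (Set.subset_univ _)
  exact hx ▸ hminor.trans (isMinor_induce G Set.univ)

theorem exists_cons (h : IsReducingSep G A B) (hG : IsAdmissible G)
    (hmax : ∀ A' B', IsReducingSep G A' B' → A'.ncard ≤ A.ncard) (hU : 5 ≤ Nat.card U)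
    (hsum : IsWheelSum (addClique G (A ∩ B)) B G' g W T) :
    ∃ (W' : Fin (k + 1) → Set V) (T' : Fin (k + 1) → Set U),
      IsWheelSum G Set.univ G' g W' T' := by
  obtain ⟨hwheel, x, hx, htri⟩ := h.exists_hasRootedTriangle hG
  have hA : ∀ i, Disjoint (W i) A := fun i => Set.disjoint_left.2 fun v hvW hvA => by
    have hsub := hsum.inter_subset_of_mem ⟨hvA, hsum.subset i hvW⟩ hvW
    exact (hmax _ _ (hsum.isReducingSep h.isSep hU hsub)).not_gt
      (hsum.ncard_lt_ncard_union h.isSep.ncard_inter)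
  exact ⟨_, _, hsum.cons hG.noThreeWayCut h.isSep hU hA h.not_planar hwheel hx htri⟩

end IsReducingSep

theorem IsReducingSep.exists_maximal (h : IsReducingSep G A B) :
    ∃ A B, IsReducingSep G A B ∧ ∀ A' B', IsReducingSep G A' B' → A'.ncard ≤ A.ncard := by
  obtain ⟨⟨A, B⟩, hAB, hmax⟩ := Set.exists_max_image {p : Set V × Set V | IsReducingSep G p.1 p.2}
    (fun p => p.1.ncard) (Set.toFinite _) ⟨(A, B), h⟩
  exact ⟨A, B, hAB, fun A' B' h' => hmax (A', B') h'⟩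

end Induction

theorem IsAdmissible.exists_isWheelSum {V : Type} [Finite V] {G : SimpleGraph V}
    (hG : IsAdmissible G) :
    ∃ (U : Type) (G' : SimpleGraph U) (k : ℕ) (g : U ↪ V) (W : Fin k → Set V) (T : Fin k → Set U),
      InternallyFourConnected G' ∧ ¬ Planar G' ∧ IsMinor G' G ∧ IsWheelSum G Set.univ G' g W T := by
  induction hn : Nat.card V using Nat.strong_induction_on generalizing V with
  | _ n ih =>
    by_cases! hred : ∀ A B, ¬ IsReducingSep G A B
    · exact ⟨V, G, 0, .refl V, _, _, hG.internallyFourConnected hred, hG.not_planar, .refl G,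
        .refl G⟩
    obtain ⟨A₀, B₀, h₀⟩ := hred
    obtain ⟨A, B, hAB, hmax⟩ := h₀.exists_maximal
    have hlt : Nat.card B < n := by
      rw [← hn, Nat.card_coe_set_eq]
      exact Set.ncard_lt_card hAB.isSep.2.2.1
    obtain ⟨U, G', k, g, W, T, hconn, hnp, hminor, hsum⟩ := ih _ hlt
      (hG.induce_addClique hAB.isSep hAB.not_planar (hAB.isMinor hG)) rfl
    obtain ⟨W', T', hsum'⟩ := hAB.exists_cons hG hmax hconn.2.1 hsum.of_induce
    exact ⟨U, G', k + 1, _, W', T', hconn, hnp, hminor.trans (hAB.isMinor hG), hsum'⟩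

/-- A 3-connected nonplanar {K5+, K33+, K5h, K33h}-free graph in which no three
vertices separate the graph into more than two components is obtained from an
internally 4-connected nonplanar minor `G'` by 3-summing wheels onto distinct
triangles of `G'`. -/
theorem stmt17 {V : Type} [Fintype V] (G : SimpleGraph V)
    (h3 : KConnected G 3) (hnp : ¬ Planar G)
    (hfree : ¬ IsMinor K5plus G ∧ ¬ IsMinor K33plus G ∧ ¬ IsMinor K5h G ∧ ¬ IsMinor K33h G)
    (hstrong : ∀ x y z : V,
      Nat.card (G.induce (({x, y, z} : Set V)ᶜ)).ConnectedComponent ≤ 2) :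
    ∃ (U : Type) (G' : SimpleGraph U), InternallyFourConnected G' ∧ ¬ Planar G' ∧
      IsMinor G' G ∧ SumWheelsOnto G G' := by
  obtain ⟨hK5plus, hK33plus, hK5h, hK33h⟩ := hfree
  have hG : IsAdmissible G :=
    ⟨h3, hnp, hK5plus, hK33plus, hK5h, hK33h, noThreeWayCut_of_card_le hstrong⟩
  obtain ⟨U, G', _, _, _, _, hconn, hnp', hminor, hsum⟩ := hG.exists_isWheelSum
  exact ⟨U, G', hconn, hnp', hminor, hsum.sumWheelsOnto⟩
end

section
/- For every n ≥ 2, the graph C²_{2n+1} is a minor of the Möbius ladder M_{2n+1}, and the alternating double wheel AW_{2n} is a minor of the double wheel DW_{2n}. -/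
open SimpleGraph

/-
The alternating double wheel is a spanning subgraph of the double wheel. For the Möbius ladder on
`m` rungs with `m` odd, every residue `i` mod `m` has exactly one even lift `s(i)` mod `2m`, namely
`(m + 1) i`. Contracting the rim edges `{s(i), s(i) + 1}` gives `C²_m`: the rim edge out of
`s(i) + 1` ends at `s(i) + 2 = s(i + 2)`, and the chord out of `s(i) + 1` ends at
`s(i) + 1 + m = s(i + 1)`.
-/

theorem isMinor_of_isContained {W V : Type*} {H : SimpleGraph W} {G : SimpleGraph V}
    (h : H ⊑ G) : IsMinor H G := by
  obtain ⟨f⟩ := h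
  refine ⟨fun w => {f w}, fun w => Set.singleton_nonempty _, fun w => .of_subsingleton,
    fun w₁ w₂ hne => ?_, fun w₁ w₂ hadj => ⟨f w₁, rfl, f w₂, rfl, f.toHom.map_adj hadj⟩⟩
  exact Set.disjoint_singleton.2 (f.injective.ne hne)

theorem altDoubleWheel_le_doubleWheel (n : ℕ) : altDoubleWheel n ≤ doubleWheel (2 * n) := by
  rintro (i | k) (j | l) h <;> simp_all [altDoubleWheel, doubleWheel]

/-- The even lift to `ℤ/2m` of a residue mod `m`, for `m` odd, as a natural number below `2m`.
The factor `m + 1` is the idempotent of `ℤ/2m` that is `0` mod `2` and `1` mod `m`. -/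
def evenLift (m i : ℕ) : ℕ := (m + 1) * i % (2 * m)

theorem evenLift_add_one (m i : ℕ) : evenLift m (i + 1) = (evenLift m i + 1 + m) % (2 * m) := by
  rw [evenLift, evenLift, add_assoc, Nat.mod_add_mod]
  ring_nf

theorem evenLift_add_two (m i : ℕ) : evenLift m (i + 2) = (evenLift m i + 1 + 1) % (2 * m) :=
  calc
    evenLift m (i + 2) = ((m + 1) * i + 2 + 2 * m) % (2 * m) := by rw [evenLift]; ring_nf
    _ = ((m + 1) * i + 2) % (2 * m) := Nat.add_mod_right _ _
    _ = (evenLift m i + 1 + 1) % (2 * m) := by rw [evenLift, add_assoc, Nat.mod_add_mod]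

theorem evenLift_modEq (m i : ℕ) : evenLift m i ≡ i [MOD m] :=
  calc
    evenLift m i ≡ (m + 1) * i [MOD m] := (Nat.mod_modEq _ (2 * m)).of_mul_left 2
    _ = m * i + i := by ring
    _ ≡ i [MOD m] := Nat.ModEq.modulus_mul_add

theorem evenLift_injOn (m : ℕ) : Set.InjOn (evenLift m) (Set.Iio m) := by
  intro i hi j hj h
  have hmod : i ≡ j [MOD m] := (evenLift_modEq m i).symm.trans (h ▸ evenLift_modEq m j)
  exact hmod.eq_of_lt_of_lt hi hj

section Odd

variable {m : ℕ}

theorem even_evenLift (hm : Odd m) (i : ℕ) : Even (evenLift m i) :=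
  even_iff_two_dvd.2 <| (Nat.dvd_mod_iff (dvd_mul_right 2 m)).2 (hm.add_one.mul_right i).two_dvd

theorem evenLift_mod (hm : Odd m) (i : ℕ) : evenLift m (i % m) = evenLift m i := by
  have h : (m + 1) * (i % m) ≡ (m + 1) * i [MOD (m + 1) * m] := (Nat.mod_modEq i m).mul_left' _
  exact h.of_dvd (mul_dvd_mul_right hm.add_one.two_dvd m)

theorem evenLift_add_one_lt (hm : Odd m) (i : ℕ) : evenLift m i + 1 < 2 * m := by
  have hlt : evenLift m i < 2 * m := Nat.mod_lt _ (by have := hm.pos; omega)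
  obtain ⟨k, hk⟩ := even_evenLift hm i
  omega

/-- The even end of the rim edge of `mobiusLadder m` that is contracted to the vertex `i` of
`squareCycle m`. -/
def evenRimVertex (hm : Odd m) (i : Fin m) : Fin (2 * m) :=
  ⟨evenLift m i, (Nat.lt_succ_self _).trans (evenLift_add_one_lt hm i)⟩

/-- The odd end of the rim edge of `mobiusLadder m` that is contracted to the vertex `i` of
`squareCycle m`. -/
def oddRimVertex (hm : Odd m) (i : Fin m) : Fin (2 * m) :=
  ⟨evenLift m i + 1, evenLift_add_one_lt hm i⟩

theorem evenRimVertex_injective (hm : Odd m) : Function.Injective (evenRimVertex hm) :=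
  fun _ _ h => Fin.ext (evenLift_injOn m (Fin.isLt _) (Fin.isLt _) (congrArg Fin.val h))

theorem oddRimVertex_injective (hm : Odd m) : Function.Injective (oddRimVertex hm) := fun _ _ h =>
  evenRimVertex_injective hm (Fin.ext (Nat.succ_injective (congrArg Fin.val h)))

theorem evenRimVertex_ne_oddRimVertex (hm : Odd m) (i j : Fin m) :
    evenRimVertex hm i ≠ oddRimVertex hm j := by
  intro h
  have hval : evenLift m i = evenLift m j + 1 := congrArg Fin.val h
  exact Nat.not_even_iff_odd.2 (even_evenLift hm j).add_one (hval ▸ even_evenLift hm i)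

theorem disjoint_pair_evenRimVertex_oddRimVertex (hm : Odd m) {i j : Fin m} (hij : i ≠ j) :
    Disjoint ({evenRimVertex hm i, oddRimVertex hm i} : Set (Fin (2 * m)))
      {evenRimVertex hm j, oddRimVertex hm j} := by
  simp [(evenRimVertex_injective hm).eq_iff, (oddRimVertex_injective hm).eq_iff,
    evenRimVertex_ne_oddRimVertex, (evenRimVertex_ne_oddRimVertex hm _ _).symm, hij.symm]

theorem mobiusLadder_adj_evenRimVertex_oddRimVertex (hm : Odd m) (i : Fin m) :
    (mobiusLadder m).Adj (evenRimVertex hm i) (oddRimVertex hm i) :=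
  ⟨evenRimVertex_ne_oddRimVertex hm i i,
    .inl (.inl (Nat.mod_eq_of_lt (evenLift_add_one_lt hm i)).symm)⟩

theorem mobiusLadder_adj_of_val_eq_add_one_or_two (hm : Odd m) {i j : Fin m}
    (h : j.val = (i.val + 1) % m ∨ j.val = (i.val + 2) % m) :
    (mobiusLadder m).Adj (oddRimVertex hm i) (evenRimVertex hm j) := by
  refine ⟨(evenRimVertex_ne_oddRimVertex hm j i).symm, .inl (h.symm.imp (fun h => ?_) fun h => ?_)⟩
  · calc
      evenLift m j = evenLift m (i + 2) := by rw [h, evenLift_mod hm]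
      _ = (evenLift m i + 1 + 1) % (2 * m) := evenLift_add_two m i
  · calc
      evenLift m j = evenLift m (i + 1) := by rw [h, evenLift_mod hm]
      _ = (evenLift m i + 1 + m) % (2 * m) := evenLift_add_one m i

theorem isMinor_squareCycle_mobiusLadder (hm : Odd m) :
    IsMinor (squareCycle m) (mobiusLadder m) := by
  refine ⟨fun i => {evenRimVertex hm i, oddRimVertex hm i}, fun i => Set.insert_nonempty _ _,
    fun i => induce_pair_connected_of_adj (mobiusLadder_adj_evenRimVertex_oddRimVertex hm i),
    fun i j hij => disjoint_pair_evenRimVertex_oddRimVertex hm hij, ?_⟩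
  rintro i j ⟨-, h | h⟩
  · exact ⟨_, .inr rfl, _, .inl rfl, mobiusLadder_adj_of_val_eq_add_one_or_two hm h⟩
  · exact ⟨_, .inl rfl, _, .inr rfl, (mobiusLadder_adj_of_val_eq_add_one_or_two hm h).symm⟩

end Odd

/-- For `n ≥ 2`, `C²_{2n+1}` is a minor of the Möbius ladder `M_{2n+1}` and the
alternating double wheel `AW_{2n}` is a minor of the double wheel `DW_{2n}`. -/
theorem stmt19 (n : ℕ) (hn : 2 ≤ n) :
    IsMinor (squareCycle (2 * n + 1)) (mobiusLadder (2 * n + 1)) ∧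
    IsMinor (altDoubleWheel n) (doubleWheel (2 * n)) := by
  exact ⟨isMinor_squareCycle_mobiusLadder (odd_two_mul_add_one n),
    isMinor_of_isContained (.of_le (altDoubleWheel_le_doubleWheel n))⟩
end
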